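/- Under the null hypothesis that the latent process exists but is serially independent, the score statistic for serial dependence is asymptotically chi-squared with L degrees of freedom. Precisely: let α̃_t, t = 1,...,n, be i.i.d. standard normal variables, let τ₀ > 0 and β₀ ∈ ℝʳ, set W_t = x_tᵀβ₀ + √τ₀ α̃_t, and let the observations Y_t be conditionally independent given (α̃_t) with Y_t | W_t ~ Binomial(m_t, ḃ(W_t)). Let δ̂⁽¹⁾_n = (β̂⁽¹⁾_n, τ̂⁽¹⁾_n) be a (measurable) maximizer of the marginal log-likelihood l₁(δ) = Σ_{t=1}^n log ∫_ℝ exp(y_t(x_tᵀβ + √τ α) − m_t b(x_tᵀβ + √τ α) + log C(m_t, y_t)) φ(α) dα over the compact parameter space Θ = {β : ‖β − β₀‖ ≤ d₁} ∩ {τ ≥ 0 : |τ − τ₀| ≤ d₂}, and assume (Condition 4) that the pointwise limit Q(δ) of n⁻¹ l₁(δ) exists on Θ and has a unique maximum at δ₀ = (β₀, τ₀). For δ = (β, τ) define the marginal density f(y_t; δ) = ∫_ℝ f(y_t | x_tᵀβ + √τ α) φ(α) dα and the residual u_t(δ) = y_t − f(y_t; δ)⁻¹ ∫_ℝ m_t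 ḃ(x_tᵀβ + √τ α) f(y_t | x_tᵀβ + √τ α) φ(α) dα, the lag-a score S_{ψ_a}(δ) = τ Σ_{t=a+1}^n u_t(δ) u_{t−a}(δ), the estimated variance Ω̂_{aa} = τ̂² Σ_{t=a+1}^n Ê(U_t²) Ê(U_{t−a}²) where Ê(U_t²) = Σ_{y=0}^{m_t} f(y; δ̂⁽¹⁾_n) u_t(y; δ̂⁽¹⁾_n)², and the statistic Q̂_ψ(L) = Σ_{a=1}^L S_{ψ_a}(δ̂⁽¹⁾_n)² / Ω̂_{aa}. Then, as n → ∞, Q̂_ψ(L) converges in distribution to the chi-squared distribution with L degrees of freedom (the law of Z₁² + ... + Z_L² for independent standard normals Z_a). -/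

import Mathlib

/-!
Integrating out the latent variables, the observations at level `n` are independent with the
marginal masses `f(·; δ₀)` (`lintegral_prod_binDens`, `exists_indep`), and the residual `u_t(δ)` is
a bounded function of `Y_t`, centred when `δ = δ₀`.

*Limit at the true parameter.* A linear combination over the lags of the sums `∑ u_t u_{t-a}` at
`δ₀` is a sum of bounded martingale differences `u_t ∑ θ_a u_{t-a}`. McLeish's product argument for
characteristic functions, together with a law of large numbers for functions of sliding windows,
gives the joint central limit theorem (`NullModel.clt`, `tendsto_lagCov_gaussian`).

*Consistency.* The normalised log-likelihoods are equicontinuous on the compact parameter space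
(`log_margDens_equicont`), so convergence to a limit with a unique maximum forces the maximisers to
converge to `δ₀` (`tendsto_of_argmax`).

*Replacing `δ₀` by the estimator.* Neither a rate of convergence nor a Taylor expansion is needed.
With `b_t(δ)` the mean of `u_t(δ)` under `δ₀`, the lagged sum at `δ` is a martingale plus
`∑ b_t b_{t-a}` (`sum_lag_decomp`). The martingales, indexed by `δ`, are stochastically
equicontinuous at scale `√n` by Azuma's inequality and chaining (`chaining`, `martField_equicont`).
The remainder is at most `∑ b_t²`, hence at most a multiple of the squared distance between the
masses `f(·; δ)` and `f(·; δ₀)`. Since the estimator has at least the likelihood of `δ₀`, that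
distance is bounded by the fluctuation of the log-likelihood (`NullModel.basic_ineq`), which is
`o(√n)` by the same equicontinuity (`NullModel.equicont`).

*Conclusion.* The estimated variances divided by `n`, without their factor `τ̂²`, are Lipschitz in
`δ` and bounded away from zero (`NullModel.lagVar_lip`, `NullModel.lagVar_lower`). As `τ̂²` cancels
in the statistic, Slutsky's theorem applies (`tendsto_scoreStatistic`).
-/

open MeasureTheory ProbabilityTheory Filter Finset Matrix Topology

noncomputable section

/-- `b(w) = log(1 + e^w)`. -/
def bfun (w : ℝ) : ℝ := Real.log (1 + Real.exp w)

/-- `ḃ(w) = e^w / (1 + e^w)`. -/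
def bdot (w : ℝ) : ℝ := Real.exp w / (1 + Real.exp w)

/-- The standard normal density `φ(α) = (2π)^{-1/2} exp(-α²/2)`. -/
def stdNormalPDF (a : ℝ) : ℝ := (Real.sqrt (2 * Real.pi))⁻¹ * Real.exp (-(a ^ 2) / 2)

/-- The binomial density at state `w`: `f(y | w) = exp(y·w − m·b(w) + log C(m, y))`. -/
def binDens (m y : ℕ) (w : ℝ) : ℝ :=
  Real.exp ((y : ℝ) * w - (m : ℝ) * bfun w + Real.log (Nat.choose m y))

/-! ### Binomial densities -/

lemma bdot_pos (w : ℝ) : 0 < bdot w := by unfold bdot; positivity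

lemma bdot_lt_one (w : ℝ) : bdot w < 1 := by
  unfold bdot
  rw [div_lt_one (by positivity)]
  linarith

lemma binDens_pos (m y : ℕ) (w : ℝ) : 0 < binDens m y w := Real.exp_pos _

lemma binDens_eq {m y : ℕ} (h : y ≤ m) (w : ℝ) :
    binDens m y w = (m.choose y : ℝ) * bdot w ^ y * (1 - bdot w) ^ (m - y) := by
  have hc : (0 : ℝ) < m.choose y := by exact_mod_cast Nat.choose_pos h
  have h1 : 0 < 1 + Real.exp w := by positivity
  have e1 : Real.exp (y * w) = Real.exp w ^ y := by rw [← Real.exp_nat_mul]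
  have e2 : Real.exp (m * Real.log (1 + Real.exp w)) = (1 + Real.exp w) ^ m := by
    rw [Real.exp_nat_mul, Real.exp_log h1]
  have e3 : 1 - bdot w = 1 / (1 + Real.exp w) := by unfold bdot; field_simp; ring
  unfold binDens bfun
  rw [Real.exp_add, Real.exp_sub, Real.exp_log hc, e1, e2, e3]
  obtain ⟨k, rfl⟩ := Nat.exists_eq_add_of_le h
  unfold bdot
  rw [Nat.add_sub_cancel_left, pow_add, div_pow, div_pow, one_pow]
  field_simp

lemma sum_binDens (m : ℕ) (w : ℝ) : ∑ y ∈ range (m + 1), binDens m y w = 1 := by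
  have := congrArg (Polynomial.eval (bdot w)) (bernsteinPolynomial.sum ℝ m)
  rw [Polynomial.eval_finsetSum] at this
  simp only [bernsteinPolynomial, Polynomial.eval_one] at this
  rw [← this]
  refine Finset.sum_congr rfl fun y hy => ?_
  rw [binDens_eq (by simpa [Nat.lt_succ_iff] using hy)]
  simp

lemma sum_mul_binDens (m : ℕ) (w : ℝ) :
    ∑ y ∈ range (m + 1), (y : ℝ) * binDens m y w = m * bdot w := by
  have := congrArg (Polynomial.eval (bdot w)) (bernsteinPolynomial.sum_smul ℝ m)
  rw [Polynomial.eval_finsetSum] at this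
  simp only [bernsteinPolynomial] at this
  simp only [nsmul_eq_mul, Polynomial.eval_mul, Polynomial.eval_natCast, Polynomial.eval_X] at this
  rw [← this]
  refine Finset.sum_congr rfl fun y hy => ?_
  rw [binDens_eq (by simpa [Nat.lt_succ_iff] using hy)]
  simp

lemma binDens_le_one {m y : ℕ} (h : y ≤ m) (w : ℝ) : binDens m y w ≤ 1 := by
  rw [← sum_binDens m w]
  exact Finset.single_le_sum (f := fun y => binDens m y w) (fun i _ => (binDens_pos m i w).le)
    (by simpa [Nat.lt_succ_iff] using h)

/-- Multiplying by the success probability shifts both the number of trials and the count; this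
reduces the second integral in the residual to a marginal density. -/
lemma bdot_mul_binDens {m y : ℕ} (h : y ≤ m) (w : ℝ) :
    bdot w * binDens m y w = ((y + 1 : ℝ) / (m + 1)) * binDens (m + 1) (y + 1) w := by
  have hc := Nat.add_one_mul_choose_eq m y
  have hc' : ((m : ℝ) + 1) * m.choose y = (m + 1).choose (y + 1) * ((y : ℝ) + 1) := by
    exact_mod_cast hc
  rw [binDens_eq h, binDens_eq (by omega : y + 1 ≤ m + 1), Nat.add_sub_add_right]
  have : (m.choose y : ℝ) = (m + 1).choose (y + 1) * ((y : ℝ) + 1) / (m + 1) := by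
    field_simp; linarith
  rw [this, pow_succ]
  field_simp

lemma hasDerivAt_binDens (m y : ℕ) (w : ℝ) :
    HasDerivAt (binDens m y) ((y - m * bdot w) * binDens m y w) w := by
  have h1 : (1 + Real.exp w) ≠ 0 := by positivity
  have hb : HasDerivAt bfun (bdot w) w := by
    have := ((Real.hasDerivAt_exp w).const_add 1).log h1
    exact this
  have := ((((hasDerivAt_id w).const_mul (y : ℝ)).sub (hb.const_mul (m : ℝ))).add_const
    (Real.log (Nat.choose m y))).exp
  simp only [mul_one, id] at this
  convert! this using 1
  unfold binDens
  simp only [Pi.sub_apply]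
  ring

lemma continuous_binDens (m y : ℕ) : Continuous (binDens m y) :=
  continuous_iff_continuousAt.2 fun w => (hasDerivAt_binDens m y w).continuousAt

lemma binDens_lip {m y : ℕ} (h : y ≤ m) (v w : ℝ) :
    |binDens m y v - binDens m y w| ≤ m * |v - w| := by
  refine (convex_univ (𝕜 := ℝ)).norm_image_sub_le_of_norm_hasDerivWithin_le
    (f := binDens m y) (f' := fun w => (y - m * bdot w) * binDens m y w) (x := w) (y := v)
    (C := m) (fun z _ => (hasDerivAt_binDens m y z).hasDerivWithinAt) (fun z _ => ?_)
    (Set.mem_univ _) (Set.mem_univ _)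
  have hy : (y : ℝ) ≤ m := by exact_mod_cast h
  have hy0 : (0 : ℝ) ≤ y := by positivity
  have hm0 : (0 : ℝ) ≤ m := by positivity
  have h1 := bdot_pos z
  have h2 := bdot_lt_one z
  have h3 : |(y : ℝ) - m * bdot z| ≤ m := by
    rw [abs_le]; constructor <;> nlinarith
  rw [Real.norm_eq_abs, abs_mul, abs_of_pos (binDens_pos m y z)]
  calc _ ≤ (m : ℝ) * 1 := mul_le_mul h3 (binDens_le_one h z) (binDens_pos _ _ _).le hm0
    _ = m := mul_one _

lemma binDens_lower {m y M : ℕ} (h : y ≤ m) (hM : m ≤ M) (w : ℝ) :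
    Real.exp (-(2 * M * (1 + |w|))) ≤ binDens m y w := by
  unfold binDens
  apply Real.exp_le_exp.2
  have hc : 0 ≤ Real.log (m.choose y) := Real.log_nonneg (by exact_mod_cast Nat.choose_pos h)
  have hb : bfun w ≤ 1 + |w| := by
    unfold bfun
    rw [Real.log_le_iff_le_exp (by positivity)]
    have h1 : Real.exp w ≤ Real.exp |w| := Real.exp_le_exp.2 (le_abs_self w)
    have h2 : 1 ≤ Real.exp |w| := Real.one_le_exp (abs_nonneg w)
    have h3 : 2 ≤ Real.exp 1 := by have := Real.add_one_le_exp 1; linarith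
    rw [Real.exp_add]
    nlinarith
  have hy : (y : ℝ) ≤ M := by exact_mod_cast h.trans hM
  have hm : (m : ℝ) ≤ M := by exact_mod_cast hM
  have hy0 : (0 : ℝ) ≤ y := by positivity
  have h4 : -((M : ℝ) * |w|) ≤ y * w := by
    have := neg_abs_le w
    have := abs_nonneg w
    nlinarith
  have h5 : (m : ℝ) * bfun w ≤ M * (1 + |w|) :=
    (mul_le_mul_of_nonneg_left hb (by positivity)).trans
      (mul_le_mul_of_nonneg_right hm (by positivity))
  have : (0 : ℝ) ≤ M := by positivity
  nlinarith [abs_nonneg w]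

/-! ### Marginal densities -/

/-- The marginal density `∫ f(y | w + s α) φ(α) dα` of a binomial count with linear predictor `w`
and random-effect standard deviation `s`. -/
def margDens (m y : ℕ) (w s : ℝ) : ℝ := ∫ α, binDens m y (w + s * α) ∂(gaussianReal 0 1)

lemma integral_mul_stdNormalPDF (g : ℝ → ℝ) :
    ∫ α : ℝ, g α * stdNormalPDF α = ∫ α, g α ∂(gaussianReal 0 1) := by
  rw [integral_gaussianReal_eq_integral_smul (by norm_num)]
  refine integral_congr_ae (Eventually.of_forall fun α => ?_)
  simp [gaussianPDFReal, stdNormalPDF, mul_comm]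

lemma integrable_binDens {m y : ℕ} (h : y ≤ m) (w s : ℝ) :
    Integrable (fun α => binDens m y (w + s * α)) (gaussianReal 0 1) := by
  refine Integrable.of_bound (C := 1) ?_ (Eventually.of_forall fun α => ?_)
  · exact ((continuous_binDens m y).comp (by fun_prop)).aestronglyMeasurable
  · rw [Real.norm_eq_abs, abs_of_pos (binDens_pos _ _ _)]
    exact binDens_le_one h _

lemma margDens_le_one {m y : ℕ} (h : y ≤ m) (w s : ℝ) : margDens m y w s ≤ 1 := by
  have := integral_mono (integrable_binDens h w s) (integrable_const 1)
    (fun α => binDens_le_one h (w + s * α))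
  simpa [margDens] using this

lemma sum_margDens (m : ℕ) (w s : ℝ) : ∑ y ∈ range (m + 1), margDens m y w s = 1 := by
  unfold margDens
  rw [← integral_finsetSum]
  · simp [sum_binDens]
  · intro y hy
    exact integrable_binDens (by simpa [Nat.lt_succ_iff] using hy) w s

lemma integral_bdot_mul {m y : ℕ} (h : y ≤ m) (w s : ℝ) :
    ∫ α, (m : ℝ) * bdot (w + s * α) * binDens m y (w + s * α) ∂(gaussianReal 0 1)
      = m * ((y + 1 : ℝ) / (m + 1)) * margDens (m + 1) (y + 1) w s := by
  unfold margDens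
  rw [← integral_const_mul]
  refine integral_congr_ae (Eventually.of_forall fun α => ?_)
  simp only
  rw [mul_assoc, bdot_mul_binDens h]
  ring

lemma sum_mul_margDens (m : ℕ) (w s : ℝ) :
    ∑ y ∈ range (m + 1), ((y : ℝ) * margDens m y w s
      - m * ((y + 1 : ℝ) / (m + 1)) * margDens (m + 1) (y + 1) w s) = 0 := by
  have key : ∀ y ∈ range (m + 1), ((y : ℝ) * margDens m y w s
      - m * ((y + 1 : ℝ) / (m + 1)) * margDens (m + 1) (y + 1) w s)
      = ∫ α, ((y : ℝ) * binDens m y (w + s * α)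
        - m * (bdot (w + s * α) * binDens m y (w + s * α))) ∂(gaussianReal 0 1) := by
    intro y hy
    have hy' : y ≤ m := by simpa [Nat.lt_succ_iff] using hy
    have e : ∀ α, (m : ℝ) * (bdot (w + s * α) * binDens m y (w + s * α))
        = m * ((y + 1 : ℝ) / (m + 1)) * binDens (m + 1) (y + 1) (w + s * α) := by
      intro α; rw [bdot_mul_binDens hy']; ring
    simp only [e]
    rw [integral_sub ((integrable_binDens hy' w s).const_mul _)
      ((integrable_binDens (by omega) w s).const_mul _), integral_const_mul, integral_const_mul]
    rfl
  rw [Finset.sum_congr rfl key, ← integral_finsetSum]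
  · rw [integral_eq_zero_of_ae (Eventually.of_forall fun α => ?_)]
    simp only [Finset.sum_sub_distrib, sum_mul_binDens, ← Finset.mul_sum, sum_binDens,
      Pi.zero_apply]
    ring
  · intro y hy
    have hy' : y ≤ m := by simpa [Nat.lt_succ_iff] using hy
    have e : ∀ α, (m : ℝ) * (bdot (w + s * α) * binDens m y (w + s * α))
        = m * ((y + 1 : ℝ) / (m + 1)) * binDens (m + 1) (y + 1) (w + s * α) := by
      intro α; rw [bdot_mul_binDens hy']; ring
    simp only [e]
    exact ((integrable_binDens hy' w s).const_mul _).sub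
      ((integrable_binDens (by omega) w s).const_mul _)

lemma integrable_abs_gaussian : Integrable (fun α : ℝ => |α|) (gaussianReal 0 1) := by
  have := (memLp_id_gaussianReal (μ := 0) (v := 1) 1)
  exact ((memLp_one_iff_integrable (f := id)).1 (by simpa using this)).abs

lemma margDens_lip {m y : ℕ} (h : y ≤ m) (w s w' s' : ℝ) :
    |margDens m y w s - margDens m y w' s'|
      ≤ m * (|w - w'| + |s - s'| * ∫ α, |α| ∂(gaussianReal 0 1)) := by
  unfold margDens
  rw [← integral_sub (integrable_binDens h w s) (integrable_binDens h w' s')]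
  have hInt : Integrable (fun α : ℝ => (m : ℝ) * (|w - w'| + |s - s'| * |α|))
      (gaussianReal 0 1) :=
    ((integrable_const _).add (integrable_abs_gaussian.const_mul _)).const_mul _
  have := norm_integral_le_of_norm_le (μ := gaussianReal 0 1)
    (f := fun α => binDens m y (w + s * α) - binDens m y (w' + s' * α)) hInt
    (Eventually.of_forall fun α => by
      rw [Real.norm_eq_abs]
      refine (binDens_lip h _ _).trans ?_
      gcongr
      rw [← abs_mul]
      refine le_trans (le_of_eq ?_) (abs_add_le _ _)
      congr 1; ring)
  rw [Real.norm_eq_abs] at this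
  refine this.trans (le_of_eq ?_)
  rw [integral_const_mul, integral_add (integrable_const _) (integrable_abs_gaussian.const_mul _),
    integral_const_mul]
  simp

/-- The marginal densities are bounded below, uniformly over bounded sets of parameters. -/
lemma margDens_lower (M : ℕ) (B S : ℝ) :
    ∃ c > 0, ∀ m y : ℕ, y ≤ m → m ≤ M → ∀ w s : ℝ, |w| ≤ B → |s| ≤ S → c ≤ margDens m y w s := by
  have hInt : Integrable (fun α : ℝ => Real.exp (-(2 * M * (1 + (|B| + |S| * |α|)))))
      (gaussianReal 0 1) := by
    refine Integrable.of_bound (C := 1) (by fun_prop) (Eventually.of_forall fun α => ?_)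
    rw [Real.norm_eq_abs, abs_of_pos (Real.exp_pos _), Real.exp_le_one_iff]
    have : (0 : ℝ) ≤ 2 * M * (1 + (|B| + |S| * |α|)) := by positivity
    linarith
  refine ⟨∫ α, Real.exp (-(2 * M * (1 + (|B| + |S| * |α|)))) ∂(gaussianReal 0 1),
    integral_exp_pos hInt, fun m y h hM w s hw hs => ?_⟩
  refine integral_mono hInt (integrable_binDens h w s) fun α => ?_
  refine le_trans ?_ (binDens_lower h hM _)
  apply Real.exp_le_exp.2
  have h1 : |w + s * α| ≤ |B| + |S| * |α| := by
    refine (abs_add_le _ _).trans ?_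
    rw [abs_mul]
    exact add_le_add (hw.trans (le_abs_self B))
      (mul_le_mul_of_nonneg_right (hs.trans (le_abs_self S)) (abs_nonneg α))
  have : (0 : ℝ) ≤ 2 * M := by positivity
  nlinarith

/-! ### Bounded martingale differences and Azuma's inequality -/

/-- The `σ`-algebra generated by the observations `X i`, `i ∈ S`. -/
abbrev sigmaOf {Ω : Type*} (X : ℕ → Ω → ℕ) (S : Set ℕ) : MeasurableSpace Ω :=
  ⨆ i ∈ S, MeasurableSpace.comap (X i) ⊤

lemma sigmaOf_mono {Ω : Type*} (X : ℕ → Ω → ℕ) {S T : Set ℕ} (h : S ⊆ T) :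
    sigmaOf X S ≤ sigmaOf X T := biSup_mono h

lemma sigmaOf_le {Ω : Type*} [mΩ : MeasurableSpace Ω] {X : ℕ → Ω → ℕ}
    (hX : ∀ i, Measurable (X i)) (S : Set ℕ) : sigmaOf X S ≤ mΩ :=
  iSup₂_le fun i _ => (hX i).comap_le

lemma measurable_sigmaOf {Ω : Type*} (X : ℕ → Ω → ℕ) {S : Set ℕ} {i : ℕ} (hi : i ∈ S)
    {β : Type*} [MeasurableSpace β] (φ : ℕ → β) :
    Measurable[sigmaOf X S] (fun ω => φ (X i ω)) := by
  have h1 : Measurable[sigmaOf X S] (X i) := by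
    have : MeasurableSpace.comap (X i) ⊤ ≤ sigmaOf X S :=
      le_iSup₂ (f := fun i (_ : i ∈ S) => MeasurableSpace.comap (X i) ⊤) i hi
    exact measurable_iff_comap_le.2 this
  exact (measurable_from_top (f := φ)).comp h1

/-- Functions of observations with disjoint index sets are uncorrelated. -/
lemma integral_mul_of_disjoint {Ω : Type*} [MeasurableSpace Ω] {μ : Measure Ω}
    {X : ℕ → Ω → ℕ} (hX : ∀ i, Measurable (X i)) (hind : iIndepFun X μ)
    {S T : Set ℕ} (hST : Disjoint S T) {𝕜 : Type*} [RCLike 𝕜] {f g : Ω → 𝕜}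
    (hf : Measurable[sigmaOf X S] f) (hg : Measurable[sigmaOf X T] g) :
    ∫ ω, f ω * g ω ∂μ = (∫ ω, f ω ∂μ) * ∫ ω, g ω ∂μ := by
  have hI : Indep (sigmaOf X S) (sigmaOf X T) μ :=
    indep_iSup_of_disjoint (fun i => (hX i).comap_le) hind hST
  have hfg : IndepFun f g μ :=
    indep_of_indep_of_le_left (indep_of_indep_of_le_right hI hg.comap_le) hf.comap_le
  exact hfg.integral_fun_mul_eq_mul_integral
    (hf.mono (sigmaOf_le hX S) le_rfl).aestronglyMeasurable
    (hg.mono (sigmaOf_le hX T) le_rfl).aestronglyMeasurable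

/-- Bounded martingale differences for the filtration `t ↦ σ(X i, i < t)`, with the martingale
property expressed as orthogonality to the bounded functions of the past. -/
structure MartDiff {Ω : Type*} [MeasurableSpace Ω] (μ : Measure Ω) (X : ℕ → Ω → ℕ)
    (d : ℕ → Ω → ℝ) : Prop where
  adapted : ∀ t, Measurable[sigmaOf X (Set.Iic t)] (d t)
  bdd : ∀ t, ∃ C, ∀ ω, |d t ω| ≤ C
  orth : ∀ t (P : Ω → ℂ), Measurable[sigmaOf X (Set.Iio t)] P → (∃ C, ∀ ω, ‖P ω‖ ≤ C) →
    ∫ ω, P ω * (d t ω : ℂ) ∂μ = 0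

section MD

set_option linter.unusedSectionVars false

variable {Ω : Type*} [MeasurableSpace Ω] {μ : Measure Ω} [IsProbabilityMeasure μ]
  {X : ℕ → Ω → ℕ}

lemma integrable_of_bdd {E : Type*} [NormedAddCommGroup E] [MeasurableSpace E] [BorelSpace E]
    [SecondCountableTopology E] {f : Ω → E} (hf : Measurable f)
    (hb : ∃ C, ∀ ω, ‖f ω‖ ≤ C) : Integrable f μ := by
  obtain ⟨C, hC⟩ := hb
  exact Integrable.of_bound hf.aestronglyMeasurable C (Eventually.of_forall hC)

lemma MartDiff.meas {d : ℕ → Ω → ℝ} (hd : MartDiff μ X d) (hX : ∀ i, Measurable (X i)) (t : ℕ) :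
    Measurable (d t) := (hd.adapted t).mono (sigmaOf_le hX _) le_rfl

lemma MartDiff.sub {d e : ℕ → Ω → ℝ} (hX : ∀ i, Measurable (X i)) (hd : MartDiff μ X d)
    (he : MartDiff μ X e) : MartDiff μ X (fun t ω => d t ω - e t ω) where
  adapted t := (hd.adapted t).sub (he.adapted t)
  bdd t := by
    obtain ⟨C, hC⟩ := hd.bdd t
    obtain ⟨C', hC'⟩ := he.bdd t
    exact ⟨C + C', fun ω => (abs_sub _ _).trans (add_le_add (hC ω) (hC' ω))⟩
  orth t P hP hb := by
    have hPm : Measurable P := hP.mono (sigmaOf_le hX _) le_rfl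
    obtain ⟨D, hD⟩ := hb
    have hI : ∀ d : ℕ → Ω → ℝ, MartDiff μ X d → Integrable (fun ω => P ω * (d t ω : ℂ)) μ := by
      intro d hd
      obtain ⟨C, hC⟩ := hd.bdd t
      refine integrable_of_bdd (hPm.mul (Complex.measurable_ofReal.comp (hd.meas hX t)))
        ⟨D * C, fun ω => ?_⟩
      rw [norm_mul, Complex.norm_real]
      exact mul_le_mul (hD ω) (hC ω) (norm_nonneg _) ((norm_nonneg _).trans (hD ω))
    simp only [Complex.ofReal_sub, mul_sub]
    rw [integral_sub (hI d hd) (hI e he), hd.orth t P hP ⟨D, hD⟩, he.orth t P hP ⟨D, hD⟩, sub_zero]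

lemma MartDiff.const_mul {d : ℕ → Ω → ℝ} (hd : MartDiff μ X d) (c : ℝ) :
    MartDiff μ X (fun t ω => c * d t ω) where
  adapted t := (hd.adapted t).const_mul c
  bdd t := by
    obtain ⟨C, hC⟩ := hd.bdd t
    refine ⟨|c| * C, fun ω => ?_⟩
    rw [abs_mul]
    exact mul_le_mul_of_nonneg_left (hC ω) (abs_nonneg _)
  orth t P hP hb := by
    have : ∀ ω, P ω * ((c * d t ω : ℝ) : ℂ) = (c : ℂ) * (P ω * (d t ω : ℂ)) := by
      intro ω; push_cast; ring
    simp only [this]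
    rw [integral_const_mul, hd.orth t P hP hb, mul_zero]

/-- A centred function of the present times a function of the past is a martingale difference. -/
lemma martDiff_mul (hX : ∀ i, Measurable (X i)) (hind : iIndepFun X μ) (φ : ℕ → ℕ → ℝ)
    (G : ℕ → Ω → ℝ) (hφ : ∀ t, ∫ ω, φ t (X t ω) ∂μ = 0)
    (hφb : ∀ t, ∃ C, ∀ ω, |φ t (X t ω)| ≤ C)
    (hG : ∀ t, Measurable[sigmaOf X (Set.Iio t)] (G t)) (hGb : ∀ t, ∃ C, ∀ ω, |G t ω| ≤ C) :
    MartDiff μ X (fun t ω => φ t (X t ω) * G t ω) where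
  adapted t := (measurable_sigmaOf X (Set.mem_Iic.2 le_rfl) (φ t)).mul
    ((hG t).mono (sigmaOf_mono X Set.Iio_subset_Iic_self) le_rfl)
  bdd t := by
    obtain ⟨C, hC⟩ := hφb t
    obtain ⟨D, hD⟩ := hGb t
    refine ⟨C * D, fun ω => ?_⟩
    rw [abs_mul]
    exact mul_le_mul (hC ω) (hD ω) (abs_nonneg _) ((abs_nonneg _).trans (hC ω))
  orth t P hP _ := by
    have e : ∀ ω, P ω * ((φ t (X t ω) * G t ω : ℝ) : ℂ)
        = (P ω * (G t ω : ℂ)) * ((φ t (X t ω) : ℝ) : ℂ) := by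
      intro ω; push_cast; ring
    simp only [e]
    rw [integral_mul_of_disjoint hX hind (S := Set.Iio t) (T := {t}) (by simp)
      (f := fun ω => P ω * (G t ω : ℂ)) (g := fun ω => ((φ t (X t ω) : ℝ) : ℂ))
      (hP.mul (Complex.measurable_ofReal.comp (hG t)))
      (measurable_sigmaOf X (Set.mem_singleton t) (fun y => ((φ t y : ℝ) : ℂ)))]
    rw [integral_complex_ofReal, hφ t]
    simp

/-- Orthogonality to real-valued functions of the past. -/
lemma MartDiff.orth_real {d : ℕ → Ω → ℝ} (hd : MartDiff μ X d) (t : ℕ) (P : Ω → ℝ)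
    (hP : Measurable[sigmaOf X (Set.Iio t)] P) (hb : ∃ C, ∀ ω, |P ω| ≤ C) :
    ∫ ω, P ω * d t ω ∂μ = 0 := by
  have := hd.orth t (fun ω => (P ω : ℂ)) (Complex.measurable_ofReal.comp hP)
    (by simpa [Complex.norm_real] using hb)
  have h2 : ∫ ω, ((P ω * d t ω : ℝ) : ℂ) ∂μ = 0 := by simpa using this
  rw [integral_complex_ofReal] at h2
  exact_mod_cast h2

lemma measurable_past {d : ℕ → Ω → ℝ} (hd : MartDiff μ X d) {N t : ℕ} (ht : t < N) :
    Measurable[sigmaOf X (Set.Iio N)] (d t) :=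
  (hd.adapted t).mono (sigmaOf_mono X fun _ hi => lt_of_le_of_lt hi ht) le_rfl

lemma bdd_sum {d : ℕ → Ω → ℝ} (hd : MartDiff μ X d) (N : ℕ) :
    ∃ C, ∀ ω, |∑ t ∈ range N, d t ω| ≤ C := by
  choose C hC using hd.bdd
  exact ⟨∑ t ∈ range N, C t, fun ω => (abs_sum_le_sum_abs _ _).trans
    (Finset.sum_le_sum fun t _ => hC t ω)⟩

/-- Convexity bound for the exponential on `[-k, k]`. -/
lemma exp_le_cosh_add {k x : ℝ} (hk : 0 < k) (hx : |x| ≤ k) :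
    Real.exp x ≤ Real.cosh k + Real.sinh k / k * x := by
  obtain ⟨h1, h2⟩ := abs_le.1 hx
  have hA : 0 ≤ (k - x) / (2 * k) := div_nonneg (by linarith) (by linarith)
  have hB : 0 ≤ (k + x) / (2 * k) := div_nonneg (by linarith) (by linarith)
  have hAB : (k - x) / (2 * k) + (k + x) / (2 * k) = 1 := by field_simp; ring
  have hc := convexOn_exp.2 (Set.mem_univ (-k)) (Set.mem_univ k) hA hB hAB
  simp only [smul_eq_mul] at hc
  have e1 : (k - x) / (2 * k) * -k + (k + x) / (2 * k) * k = x := by field_simp; ring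
  rw [e1] at hc
  refine hc.trans (le_of_eq ?_)
  rw [Real.cosh_eq, Real.sinh_eq]
  field_simp
  ring

/-- Azuma's inequality, as a bound on the moment generating function. -/
lemma MartDiff.mgf_le (hX : ∀ i, Measurable (X i)) {d : ℕ → Ω → ℝ} (hd : MartDiff μ X d)
    {k : ℝ} (hk : 0 < k) (hb : ∀ t ω, |d t ω| ≤ k) (N : ℕ) :
    ∫ ω, Real.exp (∑ t ∈ range N, d t ω) ∂μ ≤ Real.exp (N * k ^ 2 / 2) := by
  induction N with
  | zero => simp
  | succ N ih =>
    set P : Ω → ℝ := fun ω => Real.exp (∑ t ∈ range N, d t ω) with hPdef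
    have hPm : Measurable[sigmaOf X (Set.Iio N)] P := by
      refine Real.measurable_exp.comp ?_
      exact Finset.measurable_fun_sum _ fun t ht => measurable_past hd (Finset.mem_range.1 ht)
    have hPm' : Measurable P := hPm.mono (sigmaOf_le hX _) le_rfl
    obtain ⟨C, hC⟩ := bdd_sum hd N
    have hPb : ∀ ω, |P ω| ≤ Real.exp C := fun ω => by
      rw [abs_of_pos (Real.exp_pos _)]
      exact Real.exp_le_exp.2 ((le_abs_self _).trans (hC ω))
    have hPi : Integrable P μ := integrable_of_bdd hPm' ⟨_, hPb⟩
    have hPd : Integrable (fun ω => P ω * d N ω) μ :=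
      integrable_of_bdd (hPm'.mul (hd.meas hX N)) ⟨Real.exp C * k, fun ω => by
        rw [norm_mul]
        exact mul_le_mul (hPb ω) (hb N ω) (norm_nonneg _) (Real.exp_pos _).le⟩
    have hle : ∫ ω, Real.exp (∑ t ∈ range (N + 1), d t ω) ∂μ
        ≤ ∫ ω, (Real.cosh k * P ω + Real.sinh k / k * (P ω * d N ω)) ∂μ := by
      refine integral_mono_of_nonneg (Eventually.of_forall fun ω => (Real.exp_pos _).le)
        ((hPi.const_mul _).add (hPd.const_mul _)) (Eventually.of_forall fun ω => ?_)
      simp only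
      rw [Finset.sum_range_succ, Real.exp_add]
      have := mul_le_mul_of_nonneg_left (exp_le_cosh_add hk (hb N ω))
        (Real.exp_pos (∑ t ∈ range N, d t ω)).le
      refine this.trans (le_of_eq ?_)
      simp only [hPdef]; ring
    rw [integral_add (hPi.const_mul _) (hPd.const_mul _), integral_const_mul, integral_const_mul,
      hd.orth_real N P hPm ⟨_, hPb⟩, mul_zero, add_zero] at hle
    refine hle.trans ?_
    calc Real.cosh k * ∫ ω, P ω ∂μ
        ≤ Real.exp (k ^ 2 / 2) * Real.exp (N * k ^ 2 / 2) :=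
          mul_le_mul (Real.cosh_le_exp_half_sq k) ih
            (integral_nonneg fun ω => (Real.exp_pos _).le) (Real.exp_pos _).le
      _ = _ := by rw [← Real.exp_add]; congr 1; push_cast; ring

/-- Azuma's inequality, two-sided tail bound. -/
lemma MartDiff.tail_le (hX : ∀ i, Measurable (X i)) {d : ℕ → Ω → ℝ} (hd : MartDiff μ X d)
    {k : ℝ} (hk : 0 < k) (hb : ∀ t ω, |d t ω| ≤ k) {N : ℕ} (hN : 0 < N) {q : ℝ} (hq : 0 < q) :
    μ.real {ω | q ≤ |∑ t ∈ range N, d t ω|} ≤ 2 * Real.exp (-(q ^ 2 / (2 * (N * k ^ 2)))) := by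
  -- the optimal exponent in Chernoff's bound
  set v : ℝ := N * k ^ 2 with hv
  have hv0 : 0 < v := by positivity
  set l : ℝ := q / v with hl
  have hl0 : 0 < l := by positivity
  have one : ∀ e : ℕ → Ω → ℝ, MartDiff μ X e → (∀ t ω, |e t ω| ≤ k) →
      μ.real {ω | q ≤ ∑ t ∈ range N, e t ω} ≤ Real.exp (-(q ^ 2 / (2 * v))) := by
    intro e he heb
    have hmg := (he.const_mul l).mgf_le hX (k := l * k) (by positivity) (fun t ω => by
      rw [abs_mul, abs_of_pos hl0]; exact mul_le_mul_of_nonneg_left (heb t ω) hl0.le) N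
    have hInt : Integrable (fun ω => Real.exp (l * ∑ t ∈ range N, e t ω)) μ := by
      obtain ⟨C, hC⟩ := bdd_sum he N
      refine integrable_of_bdd (Real.measurable_exp.comp (measurable_const.mul
        (Finset.measurable_fun_sum _ fun t _ => he.meas hX t))) ⟨Real.exp (l * C), fun ω => ?_⟩
      rw [Real.norm_eq_abs, abs_of_pos (Real.exp_pos _)]
      exact Real.exp_le_exp.2 (mul_le_mul_of_nonneg_left ((le_abs_self _).trans (hC ω)) hl0.le)
    have := measure_ge_le_exp_mul_mgf q hl0.le hInt
    refine this.trans ?_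
    have h2 : mgf (fun ω => ∑ t ∈ range N, e t ω) μ l ≤ Real.exp (N * (l * k) ^ 2 / 2) := by
      refine le_trans (le_of_eq ?_) hmg
      unfold mgf
      simp only [Finset.mul_sum]
    refine (mul_le_mul_of_nonneg_left h2 (Real.exp_pos _).le).trans (le_of_eq ?_)
    rw [← Real.exp_add]
    congr 1
    have : (N : ℝ) * (l * k) ^ 2 / 2 = l ^ 2 * v / 2 := by rw [hv]; ring
    rw [this, hl]
    field_simp
    ring
  have hneg := one (fun t ω => (-1) * d t ω) (hd.const_mul (-1)) (fun t ω => by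
    rw [abs_mul]; simpa using hb t ω)
  have hsub : {ω | q ≤ |∑ t ∈ range N, d t ω|}
      ⊆ {ω | q ≤ ∑ t ∈ range N, d t ω} ∪ {ω | q ≤ ∑ t ∈ range N, (-1) * d t ω} := by
    intro ω hω
    rcases le_abs.1 (show q ≤ |∑ t ∈ range N, d t ω| from hω) with h | h
    · exact Or.inl h
    · right; simpa [← Finset.mul_sum] using h
  calc _ ≤ μ.real ({ω | q ≤ ∑ t ∈ range N, d t ω} ∪ {ω | q ≤ ∑ t ∈ range N, (-1) * d t ω}) :=
        measureReal_mono hsub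
    _ ≤ _ := measureReal_union_le _ _
    _ ≤ _ := by have := one d hd hb; linarith

end MD

/-! ### A martingale central limit theorem and a law of large numbers for sliding windows -/

section McLeish

set_option linter.unusedSectionVars false

variable {Ω : Type*} [MeasurableSpace Ω] {μ : Measure Ω} [IsProbabilityMeasure μ]
  {X : ℕ → Ω → ℕ}

lemma norm_prod_sub_prod_le' {ι : Type*} (s : Finset ι) (a b : ι → ℂ) (ha : ∀ i, ‖a i‖ ≤ 1)
    (hb : ∀ i, ‖b i‖ ≤ 1) : ‖∏ i ∈ s, a i - ∏ i ∈ s, b i‖ ≤ ∑ i ∈ s, ‖a i - b i‖ := by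
  classical
  induction s using Finset.induction_on with
  | empty => simp
  | insert i s hi ih =>
    rw [Finset.prod_insert hi, Finset.prod_insert hi, Finset.sum_insert hi]
    have e : a i * ∏ j ∈ s, a j - b i * ∏ j ∈ s, b j
        = (a i - b i) * ∏ j ∈ s, a j + b i * (∏ j ∈ s, a j - ∏ j ∈ s, b j) := by ring
    rw [e]
    refine (norm_add_le _ _).trans (add_le_add ?_ ?_)
    · rw [norm_mul]
      refine mul_le_of_le_one_right (norm_nonneg _) ?_
      rw [norm_prod]
      exact Finset.prod_le_one (fun _ _ => norm_nonneg _) fun j _ => ha j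
    · rw [norm_mul]
      exact (mul_le_of_le_one_left (norm_nonneg _) (hb i)).trans ih

lemma norm_one_add_mul_I_sq (x : ℝ) : ‖(1 : ℂ) + x * Complex.I‖ ^ 2 = 1 + x ^ 2 := by
  rw [← Complex.normSq_eq_norm_sq, Complex.normSq_apply]
  simp
  ring

lemma norm_one_add_mul_I_le (x : ℝ) : ‖(1 : ℂ) + x * Complex.I‖ ≤ Real.exp (x ^ 2 / 2) := by
  refine le_of_sq_le_sq ?_ (Real.exp_pos _).le
  rw [norm_one_add_mul_I_sq, ← Real.exp_nat_mul]
  have := Real.add_one_le_exp (x ^ 2)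
  have e : ((2 : ℕ) : ℝ) * (x ^ 2 / 2) = x ^ 2 := by push_cast; ring
  rw [e]; linarith

/-- The expansion behind McLeish's proof of the martingale central limit theorem. -/
lemma exp_I_sub_le {x : ℝ} (hx : |x| ≤ 1) :
    ‖Complex.exp (x * Complex.I) - (1 + x * Complex.I) * Complex.exp (-(x ^ 2 / 2 : ℝ))‖
      ≤ 2 * |x| ^ 3 := by
  have hn : ‖(x : ℂ) * Complex.I‖ = |x| := by simp
  have h1 := Complex.exp_bound (x := x * Complex.I) (by rw [hn]; exact hx) (n := 3) (by norm_num)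
  rw [hn] at h1
  have hxx : |x| ^ 2 ≤ 1 := pow_le_one₀ (abs_nonneg x) hx
  have hn2 : ‖((-(x ^ 2 / 2 : ℝ) : ℝ) : ℂ)‖ = |x| ^ 2 / 2 := by
    rw [Complex.norm_real, norm_neg, Real.norm_eq_abs, abs_of_nonneg (by positivity), sq_abs]
  have h2 := Complex.exp_bound (x := ((-(x ^ 2 / 2 : ℝ) : ℝ) : ℂ))
    (by rw [hn2]; linarith) (n := 2) (by norm_num)
  rw [hn2] at h2
  simp only [Finset.sum_range_succ, Finset.sum_range_zero] at h1 h2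
  norm_num [Nat.factorial] at h1 h2
  set E1 := Complex.exp (x * Complex.I)
  have hE2 : Complex.exp (-(x ^ 2 / 2 : ℝ)) = Complex.exp (-((x : ℂ) ^ 2 / 2)) := by push_cast; rfl
  rw [hE2]
  set E2 := Complex.exp (-((x : ℂ) ^ 2 / 2))
  have hI : Complex.I ^ 2 = -1 := Complex.I_sq
  have e : E1 - (1 + x * Complex.I) * E2
      = (E1 - (1 + x * Complex.I + (x * Complex.I) ^ 2 / 2))
        - (1 + x * Complex.I) * (E2 - (1 + -((x : ℂ) ^ 2 / 2)))
        + (x : ℂ) ^ 3 * Complex.I / 2 := by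
    linear_combination ((x : ℂ) ^ 2 / 2) * hI
  rw [e]
  have hn3 : ‖(1 : ℂ) + x * Complex.I‖ ≤ 2 := by
    refine (norm_add_le _ _).trans ?_
    rw [hn]; simp; linarith
  have hn4 : ‖(x : ℂ) ^ 3 * Complex.I / 2‖ = |x| ^ 3 / 2 := by simp
  have h3 : ‖(1 + x * Complex.I) * (E2 - (1 + -((x : ℂ) ^ 2 / 2)))‖
      ≤ 2 * ((|x| ^ 2 / 2) ^ 2 * (3 / 4)) := by
    rw [norm_mul, sq_abs]
    refine mul_le_mul hn3 ?_ (norm_nonneg _) (by norm_num)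
    simpa using h2
  have h1' : ‖E1 - (1 + x * Complex.I + (x * Complex.I) ^ 2 / 2)‖ ≤ |x| ^ 3 * (2 / 9) := by
    refine le_trans (le_of_eq ?_) h1
    rfl
  have hx4 : |x| ^ 4 ≤ |x| ^ 3 := pow_le_pow_of_le_one (abs_nonneg x) hx (by norm_num)
  have hx3 : 0 ≤ |x| ^ 3 := by positivity
  refine (norm_add_le _ _).trans ?_
  rw [hn4]
  refine (add_le_add_left (norm_sub_le _ _) _).trans ?_
  nlinarith

/-- McLeish's product `∏ (1 + i d_t)` has mean one. -/
lemma MartDiff.integral_prod (hX : ∀ i, Measurable (X i)) {d : ℕ → Ω → ℝ} (hd : MartDiff μ X d)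
    (N : ℕ) : ∫ ω, ∏ t ∈ range N, (1 + (d t ω : ℂ) * Complex.I) ∂μ = 1 := by
  induction N with
  | zero => simp
  | succ N ih =>
    have hm : ∀ N, Measurable[sigmaOf X (Set.Iio N)]
        (fun ω => ∏ t ∈ range N, (1 + (d t ω : ℂ) * Complex.I)) := fun N => by
      refine Finset.measurable_fun_prod _ fun t ht => ?_
      exact ((Complex.measurable_ofReal.comp (measurable_past hd (Finset.mem_range.1 ht))).mul_const
        _).const_add _
    choose C hC using hd.bdd
    have hbd : ∀ N, ∃ D, ∀ ω, ‖∏ t ∈ range N, (1 + (d t ω : ℂ) * Complex.I)‖ ≤ D := fun N => by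
      refine ⟨∏ t ∈ range N, (1 + C t), fun ω => ?_⟩
      rw [norm_prod]
      refine Finset.prod_le_prod (fun _ _ => norm_nonneg _) fun t _ => ?_
      refine (norm_add_le _ _).trans ?_
      simpa using hC t ω
    have hI : ∀ N, Integrable (fun ω => ∏ t ∈ range N, (1 + (d t ω : ℂ) * Complex.I)) μ := fun N =>
      integrable_of_bdd ((hm N).mono (sigmaOf_le hX _) le_rfl) (hbd N)
    have e : ∀ ω, ∏ t ∈ range (N + 1), (1 + (d t ω : ℂ) * Complex.I)
        = ∏ t ∈ range N, (1 + (d t ω : ℂ) * Complex.I)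
          + Complex.I * ((∏ t ∈ range N, (1 + (d t ω : ℂ) * Complex.I)) * (d N ω : ℂ)) := by
      intro ω; rw [Finset.prod_range_succ]; ring
    obtain ⟨D, hD⟩ := hbd N
    have hI2 : Integrable (fun ω => (∏ t ∈ range N, (1 + (d t ω : ℂ) * Complex.I)) * (d N ω : ℂ))
        μ := by
      refine integrable_of_bdd (((hm N).mono (sigmaOf_le hX _) le_rfl).mul
        (Complex.measurable_ofReal.comp (hd.meas hX N))) ⟨D * C N, fun ω => ?_⟩
      rw [norm_mul, Complex.norm_real]
      exact mul_le_mul (hD ω) (hC N ω) (norm_nonneg _) ((norm_nonneg _).trans (hD ω))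
    simp only [e]
    rw [integral_add (hI N) (hI2.const_mul _), integral_const_mul, ih,
      hd.orth N _ (hm N) ⟨D, hD⟩, mul_zero, add_zero]

/-- A quantitative martingale central limit theorem for bounded differences: the characteristic
function of the sum is close to the Gaussian one as soon as the differences are small and the sum
of their squares is close to a constant. -/
lemma MartDiff.charFun_bound (hX : ∀ i, Measurable (X i)) {d : ℕ → Ω → ℝ} (hd : MartDiff μ X d)
    {k : ℝ} (hk1 : k ≤ 1) (hb : ∀ t ω, |d t ω| ≤ k) (N : ℕ) {v : ℝ} (hv : 0 ≤ v) :
    ‖∫ ω, Complex.exp ((∑ t ∈ range N, d t ω : ℝ) * Complex.I) ∂μ - Complex.exp (-(v / 2 : ℝ))‖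
      ≤ N * (2 * k ^ 3)
        + Real.exp (N * k ^ 2 / 2) * ∫ ω, |∑ t ∈ range N, d t ω ^ 2 - v| ∂μ := by
  set p : Ω → ℂ := fun ω => ∏ t ∈ range N, (1 + (d t ω : ℂ) * Complex.I) with hp
  set q : Ω → ℝ := fun ω => ∑ t ∈ range N, d t ω ^ 2 with hq
  have hsum : Measurable (fun ω => ∑ t ∈ range N, d t ω) :=
    Finset.measurable_fun_sum _ fun t _ => hd.meas hX t
  have hqm : Measurable q := Finset.measurable_fun_sum _ fun t _ => (hd.meas hX t).pow_const 2
  have hpm : Measurable p := by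
    refine Finset.measurable_fun_prod _ fun t ht => ?_
    exact ((Complex.measurable_ofReal.comp (hd.meas hX t)).mul_const _).const_add _
  have hd2 : ∀ t ω, d t ω ^ 2 ≤ k ^ 2 := fun t ω => by
    rw [← sq_abs]; exact pow_le_pow_left₀ (abs_nonneg _) (hb t ω) 2
  have hq0 : ∀ ω, 0 ≤ q ω := fun ω => Finset.sum_nonneg fun t _ => sq_nonneg _
  have hqb : ∀ ω, q ω ≤ N * k ^ 2 := fun ω => by
    calc q ω ≤ ∑ t ∈ range N, k ^ 2 := Finset.sum_le_sum fun t _ => hd2 t ω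
      _ = _ := by simp
  have hpb : ∀ ω, ‖p ω‖ ≤ Real.exp (N * k ^ 2 / 2) := fun ω => by
    rw [hp, norm_prod]
    calc ∏ t ∈ range N, ‖1 + (d t ω : ℂ) * Complex.I‖
        ≤ ∏ t ∈ range N, Real.exp (d t ω ^ 2 / 2) :=
          Finset.prod_le_prod (fun _ _ => norm_nonneg _) fun t _ => norm_one_add_mul_I_le _
      _ = Real.exp (q ω / 2) := by rw [← Real.exp_sum, hq, Finset.sum_div]
      _ ≤ _ := Real.exp_le_exp.2 (by linarith [hqb ω])
  have hp1 : ∫ ω, p ω ∂μ = 1 := hd.integral_prod hX N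
  have hpI : Integrable p μ := integrable_of_bdd hpm ⟨_, hpb⟩
  have hE : Integrable (fun ω => Complex.exp ((∑ t ∈ range N, d t ω : ℝ) * Complex.I)) μ := by
    refine integrable_of_bdd (Complex.measurable_exp.comp
      ((Complex.measurable_ofReal.comp hsum).mul_const _)) ⟨1, fun ω => ?_⟩
    rw [Complex.norm_exp_ofReal_mul_I]
  have e1 : ∫ ω, Complex.exp ((∑ t ∈ range N, d t ω : ℝ) * Complex.I) ∂μ
        - Complex.exp (-(v / 2 : ℝ))
      = ∫ ω, (Complex.exp ((∑ t ∈ range N, d t ω : ℝ) * Complex.I)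
        - p ω * Complex.exp (-(v / 2 : ℝ))) ∂μ := by
    rw [integral_sub hE (hpI.mul_const _), integral_mul_const, hp1, one_mul]
  rw [e1]
  have hdi : Integrable (fun ω => |q ω - v|) μ := by
    refine integrable_of_bdd (hqm.sub_const v).abs ⟨N * k ^ 2 + v, fun ω => ?_⟩
    rw [Real.norm_eq_abs, abs_abs]
    refine (abs_sub _ _).trans ?_
    rw [abs_of_nonneg (hq0 ω), abs_of_nonneg hv]
    linarith [hqb ω]
  have hfin : Integrable (fun ω => N * (2 * k ^ 3) + Real.exp (N * k ^ 2 / 2) * |q ω - v|) μ :=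
    (integrable_const _).add (hdi.const_mul _)
  have := norm_integral_le_of_norm_le (μ := μ) (f := fun ω =>
    (Complex.exp ((∑ t ∈ range N, d t ω : ℝ) * Complex.I) - p ω * Complex.exp (-(v / 2 : ℝ)))) hfin
    (Eventually.of_forall fun ω => ?_)
  · refine this.trans (le_of_eq ?_)
    rw [integral_add (integrable_const _) (hdi.const_mul _), integral_const, integral_const_mul]
    simp [hq]
  · have split : Complex.exp ((∑ t ∈ range N, d t ω : ℝ) * Complex.I)
          - p ω * Complex.exp (-(v / 2 : ℝ))
        = (∏ t ∈ range N, Complex.exp (d t ω * Complex.I)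
            - ∏ t ∈ range N, ((1 + (d t ω : ℂ) * Complex.I)
              * Complex.exp (-(d t ω ^ 2 / 2 : ℝ))))
          + p ω * (Complex.exp (-(q ω / 2 : ℝ)) - Complex.exp (-(v / 2 : ℝ))) := by
      rw [Finset.prod_mul_distrib, ← Complex.exp_sum, ← Complex.exp_sum, ← Finset.sum_mul]
      have e2 : ∑ t ∈ range N, (-((d t ω ^ 2 / 2 : ℝ) : ℂ)) = -((q ω / 2 : ℝ) : ℂ) := by
        rw [hq, Finset.sum_neg_distrib, Finset.sum_div]; push_cast; rfl
      rw [e2]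
      push_cast
      ring
    rw [split]
    refine (norm_add_le _ _).trans (add_le_add ?_ ?_)
    · refine (norm_prod_sub_prod_le' _ _ _ (fun t => ?_) (fun t => ?_)).trans ?_
      · rw [Complex.norm_exp_ofReal_mul_I]
      · rw [norm_mul, ← Complex.ofReal_neg, ← Complex.ofReal_exp, Complex.norm_real,
          Real.norm_eq_abs, abs_of_pos (Real.exp_pos _)]
        calc _ ≤ Real.exp (d t ω ^ 2 / 2) * Real.exp (-(d t ω ^ 2 / 2)) :=
              mul_le_mul_of_nonneg_right (norm_one_add_mul_I_le _) (Real.exp_pos _).le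
          _ = 1 := by rw [← Real.exp_add]; simp
      · calc _ ≤ ∑ t ∈ range N, 2 * k ^ 3 := by
              refine Finset.sum_le_sum fun t _ => ?_
              refine (exp_I_sub_le ((hb t ω).trans hk1)).trans ?_
              exact mul_le_mul_of_nonneg_left (pow_le_pow_left₀ (abs_nonneg _) (hb t ω) 3)
                (by norm_num)
          _ = _ := by simp
    · rw [norm_mul]
      refine mul_le_mul (hpb ω) ?_ (norm_nonneg _) (Real.exp_pos _).le
      rw [← Complex.ofReal_neg, ← Complex.ofReal_neg, ← Complex.ofReal_exp, ← Complex.ofReal_exp,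
        ← Complex.ofReal_sub, Complex.norm_real, Real.norm_eq_abs]
      -- `exp` is 1-Lipschitz on the negative half-line
      have key : ∀ a b : ℝ, 0 ≤ a → a ≤ b → |Real.exp (-a) - Real.exp (-b)| ≤ b - a := by
        intro a b ha hab
        rw [abs_of_nonneg (sub_nonneg.2 (Real.exp_le_exp.2 (by linarith)))]
        have h1 : Real.exp (-b) = Real.exp (-a) * Real.exp (-(b - a)) := by
          rw [← Real.exp_add]; congr 1; ring
        have h2 := Real.add_one_le_exp (-(b - a))
        have h3 : Real.exp (-a) ≤ 1 := Real.exp_le_one_iff.2 (by linarith)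
        have h4 := Real.exp_pos (-a)
        rw [h1]
        nlinarith
      rcases le_total (q ω) v with h | h
      · refine (key _ _ (by linarith [hq0 ω]) (by linarith)).trans ?_
        rw [abs_of_nonpos (by linarith)]; linarith
      · rw [abs_sub_comm]
        refine (key _ _ (by linarith) (by linarith)).trans ?_
        rw [abs_of_nonneg (by linarith)]; linarith

/-- A weak law of large numbers for bounded functions of sliding windows of length `w + 1`. -/
lemma window_variance (hX : ∀ i, Measurable (X i)) (hind : iIndepFun X μ) (w : ℕ)
    (ζ : ℕ → Ω → ℝ) (hζ : ∀ t, Measurable[sigmaOf X (Set.Icc (t - w) t)] (ζ t)) {K : ℝ}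
    (hb : ∀ t ω, |ζ t ω| ≤ K) (N : ℕ) :
    ∫ ω, (∑ t ∈ range N, (ζ t ω - ∫ ω', ζ t ω' ∂μ)) ^ 2 ∂μ
      ≤ N * ((2 * w + 1) * (2 * K) ^ 2) := by
  set η : ℕ → Ω → ℝ := fun t ω => ζ t ω - ∫ ω', ζ t ω' ∂μ with hη
  have hηw : ∀ t, Measurable[sigmaOf X (Set.Icc (t - w) t)] (η t) := fun t =>
    (hζ t).sub_const _
  have hηm : ∀ t, Measurable (η t) := fun t => (hηw t).mono (sigmaOf_le hX _) le_rfl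
  have hζm : ∀ t, Measurable (ζ t) := fun t => (hζ t).mono (sigmaOf_le hX _) le_rfl
  have hηb : ∀ t ω, |η t ω| ≤ 2 * K := fun t ω => by
    refine (abs_sub _ _).trans ?_
    have : |∫ ω', ζ t ω' ∂μ| ≤ K := by
      have := norm_integral_le_of_norm_le_const (μ := μ) (f := ζ t) (C := K)
        (Eventually.of_forall (hb t))
      simpa using this
    linarith [hb t ω]
  have hη0 : ∀ t, ∫ ω, η t ω ∂μ = 0 := fun t => by
    rw [hη, integral_sub (integrable_of_bdd (hζm t) ⟨K, hb t⟩) (integrable_const _)]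
    simp
  have hprod : ∀ s t ω, |η s ω * η t ω| ≤ (2 * K) ^ 2 := fun s t ω => by
    rw [abs_mul, sq]
    exact mul_le_mul (hηb s ω) (hηb t ω) (abs_nonneg _) ((abs_nonneg _).trans (hηb s ω))
  have hInt : ∀ s t, Integrable (fun ω => η s ω * η t ω) μ := fun s t =>
    integrable_of_bdd ((hηm s).mul (hηm t)) ⟨_, hprod s t⟩
  have far : ∀ s t, s + w < t → ∫ ω, η s ω * η t ω ∂μ = 0 := fun s t h => by
    rw [integral_mul_of_disjoint hX hind (S := Set.Icc (s - w) s) (T := Set.Icc (t - w) t)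
      ?_ (hηw s) (hηw t), hη0 s, zero_mul]
    refine Set.disjoint_left.2 fun i hi hi' => ?_
    have := hi.2; have := hi'.1
    omega
  have cov : ∀ s t, ∫ ω, η s ω * η t ω ∂μ
      ≤ if s ∈ Finset.Icc (t - w) (t + w) then (2 * K) ^ 2 else 0 := fun s t => by
    split_ifs with h
    · have := norm_integral_le_of_norm_le_const (μ := μ) (f := fun ω => η s ω * η t ω)
        (Eventually.of_forall (hprod s t))
      exact (le_abs_self _).trans (by simpa using this)
    · rw [Finset.mem_Icc, not_and_or] at h
      rcases h with h | h
      · exact (far s t (by omega)).le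
      · simp only [mul_comm (η s _)]
        exact (far t s (by omega)).le
  have e : ∀ ω, (∑ t ∈ range N, (ζ t ω - ∫ ω', ζ t ω' ∂μ)) ^ 2
      = ∑ t ∈ range N, ∑ s ∈ range N, η s ω * η t ω := by
    intro ω
    change (∑ t ∈ range N, η t ω) ^ 2 = _
    rw [sq, Finset.sum_mul_sum, Finset.sum_comm]
  simp only [e]
  rw [integral_finsetSum _ fun t _ => integrable_finsetSum _ fun s _ => hInt s t]
  calc _ ≤ ∑ t ∈ range N, ((2 * w + 1) * (2 * K) ^ 2) := by
        refine Finset.sum_le_sum fun t _ => ?_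
        rw [integral_finsetSum _ fun s _ => hInt s t]
        refine (Finset.sum_le_sum fun s _ => cov s t).trans ?_
        rw [← Finset.sum_filter, Finset.sum_const, nsmul_eq_mul]
        refine mul_le_mul_of_nonneg_right ?_ (sq_nonneg _)
        have h1 : ((range N).filter fun s => s ∈ Finset.Icc (t - w) (t + w)).card
            ≤ (Finset.Icc (t - w) (t + w)).card :=
          Finset.card_le_card fun s hs => (Finset.mem_filter.1 hs).2
        have h2 : (Finset.Icc (t - w) (t + w)).card ≤ 2 * w + 1 := by
          rw [Nat.card_Icc]; omega
        exact_mod_cast h1.trans h2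
    _ = _ := by simp

end McLeish

/-! ### Residuals and their uniform regularity -/

/-- The residual `u(y; δ)` written through marginal densities: the posterior mean of `m ḃ(W)` given
`y` is `m (y + 1) / (m + 1)` times a ratio of marginal densities for `m + 1` and `m` trials. -/
def margRes (m y : ℕ) (w s : ℝ) : ℝ :=
  y - m * ((y + 1 : ℝ) / (m + 1)) * (margDens (m + 1) (y + 1) w s / margDens m y w s)

/-- What the asymptotic argument uses about one observation with `m` trials: `f δ` is a probability
on `{0, …, m}`, `u δ` is centred under `f δ`, and on `B` both are bounded and Lipschitz in the
parameter, with `f` and the variance of `u` bounded away from zero. -/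
structure RegModel {P : Type*} [PseudoMetricSpace P] (B : Set P) (K c : ℝ) (m : ℕ)
    (f u : P → ℕ → ℝ) : Prop where
  sum_f : ∀ δ, ∑ y ∈ range (m + 1), f δ y = 1
  sum_fu : ∀ δ, ∑ y ∈ range (m + 1), f δ y * u δ y = 0
  f_lower : ∀ δ ∈ B, ∀ y ≤ m, c ≤ f δ y
  f_pos : ∀ δ, ∀ y ≤ m, 0 < f δ y
  f_le : ∀ δ, ∀ y ≤ m, f δ y ≤ 1
  log_bdd : ∀ δ ∈ B, ∀ y ≤ m, |Real.log (f δ y)| ≤ K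
  u_bdd : ∀ δ ∈ B, ∀ y ≤ m, |u δ y| ≤ K
  f_lip : ∀ δ ∈ B, ∀ δ' ∈ B, ∀ y ≤ m, |f δ y - f δ' y| ≤ K * dist δ δ'
  log_lip : ∀ δ ∈ B, ∀ δ' ∈ B, ∀ y ≤ m, |Real.log (f δ y) - Real.log (f δ' y)| ≤ K * dist δ δ'
  u_lip : ∀ δ ∈ B, ∀ δ' ∈ B, ∀ y ≤ m, |u δ y - u δ' y| ≤ K * dist δ δ'
  var_lower : ∀ δ ∈ B, c ≤ ∑ y ∈ range (m + 1), f δ y * u δ y ^ 2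

lemma margDens_pos {m y : ℕ} (h : y ≤ m) (w s : ℝ) : 0 < margDens m y w s := by
  obtain ⟨c, hc, H⟩ := margDens_lower m |w| |s|
  exact hc.trans_le (H m y h le_rfl w s le_rfl le_rfl)

lemma sum_margDens_mul_margRes (m : ℕ) (w s : ℝ) :
    ∑ y ∈ range (m + 1), margDens m y w s * margRes m y w s = 0 := by
  rw [← sum_mul_margDens m w s]
  refine Finset.sum_congr rfl fun y hy => ?_
  have := (margDens_pos (Nat.lt_succ_iff.1 (Finset.mem_range.1 hy)) w s).ne'
  unfold margRes
  field_simp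

lemma abs_log_sub_le {c a b : ℝ} (hc : 0 < c) (ha : c ≤ a) (hb : c ≤ b) :
    |Real.log a - Real.log b| ≤ c⁻¹ * |a - b| := by
  have key : ∀ a b : ℝ, c ≤ a → c ≤ b → Real.log a - Real.log b ≤ c⁻¹ * |a - b| := by
    intro a b ha hb
    have hb0 := hc.trans_le hb
    rw [← Real.log_div (hc.trans_le ha).ne' hb0.ne']
    have h1 := Real.log_le_sub_one_of_pos (div_pos (hc.trans_le ha) hb0)
    have h2 : a / b - 1 = b⁻¹ * (a - b) := by field_simp
    rw [h2] at h1
    refine h1.trans ((mul_le_mul_of_nonneg_left (le_abs_self _) (by positivity)).trans ?_)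
    exact mul_le_mul_of_nonneg_right (inv_anti₀ hc hb) (abs_nonneg _)
  rw [abs_le]
  constructor
  · have := key b a hb ha
    rw [abs_sub_comm] at this
    linarith
  · exact key a b ha hb

lemma abs_div_sub_div_le {c a b a' b' k : ℝ} (hc : 0 < c) (hb : c ≤ b) (hb' : c ≤ b')
    (ha' : |a'| ≤ 1) (hb1 : b' ≤ 1) (h1 : |a - a'| ≤ k) (h2 : |b - b'| ≤ k) :
    |a / b - a' / b'| ≤ 2 * k / c ^ 2 := by
  have hb0 := hc.trans_le hb
  have hb0' := hc.trans_le hb'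
  have e : a / b - a' / b' = ((a - a') * b' - a' * (b - b')) / (b * b') := by
    field_simp; ring
  have hk : 0 ≤ k := (abs_nonneg _).trans h1
  rw [e, abs_div, abs_of_pos (mul_pos hb0 hb0')]
  have h3 : |(a - a') * b' - a' * (b - b')| ≤ 2 * k := by
    refine (abs_sub _ _).trans ?_
    rw [abs_mul, abs_mul, abs_of_pos hb0']
    have i1 : |a - a'| * b' ≤ k * 1 := mul_le_mul h1 hb1 hb0'.le hk
    have i2 : |a'| * |b - b'| ≤ 1 * k := mul_le_mul ha' h2 (abs_nonneg _) zero_le_one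
    linarith
  refine div_le_div₀ (by linarith) h3 (by positivity) ?_
  rw [sq]; exact mul_le_mul hb hb' hc.le hb0.le

lemma abs_dotProduct_le {r : ℕ} (x β : Fin r → ℝ) : |x ⬝ᵥ β| ≤ r * (‖x‖ * ‖β‖) := by
  unfold dotProduct
  refine (Finset.abs_sum_le_sum_abs _ _).trans ?_
  calc _ ≤ ∑ _i : Fin r, ‖x‖ * ‖β‖ := by
        refine Finset.sum_le_sum fun i _ => ?_
        rw [abs_mul]
        exact mul_le_mul (norm_le_pi_norm x i) (norm_le_pi_norm β i) (abs_nonneg _) (norm_nonneg _)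
    _ = _ := by simp

lemma abs_sqrt_sub_le {τ a b : ℝ} (hτ : 0 < τ) (ha : τ ≤ a) (hb : τ ≤ b) :
    |√a - √b| ≤ (√τ)⁻¹ * |a - b| := by
  have h0 : 0 < √τ := Real.sqrt_pos.2 hτ
  have ha' : √τ ≤ √a := Real.sqrt_le_sqrt ha
  have hb' : √τ ≤ √b := Real.sqrt_le_sqrt hb
  have e : a - b = (√a - √b) * (√a + √b) := by
    have h1 := Real.sq_sqrt (hτ.le.trans ha)
    have h2 := Real.sq_sqrt (hτ.le.trans hb)
    linear_combination h2 - h1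
  rw [e, abs_mul, abs_of_pos (a := √a + √b) (by linarith), inv_mul_eq_div, le_div_iff₀ h0]
  exact mul_le_mul_of_nonneg_left (by linarith) (abs_nonneg _)

lemma abs_sqrt_sub_le_sqrt (a b : ℝ) (ha : 0 ≤ a) (hb : 0 ≤ b) : |√a - √b| ≤ √|a - b| := by
  have key : ∀ a b : ℝ, 0 ≤ a → 0 ≤ b → √a - √b ≤ √|a - b| := by
    intro a b ha hb
    rw [sub_le_iff_le_add]
    refine Real.sqrt_le_iff.2 ⟨by positivity, ?_⟩
    have h1 := Real.sq_sqrt (abs_nonneg (a - b))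
    have h2 := Real.sq_sqrt hb
    have h3 := le_abs_self (a - b)
    nlinarith [mul_nonneg (Real.sqrt_nonneg |a - b|) (Real.sqrt_nonneg b)]
  rw [abs_le]
  constructor
  · have := key b a hb ha
    rw [abs_sub_comm] at this
    linarith
  · exact key a b ha hb

/-- Uniform local regularity: all observations with at most `M` trials and regressors bounded by
`C` satisfy `RegModel` on one ball around the true parameter, with the same constants. -/
lemma exists_regModel (r M : ℕ) (C : ℝ) (β₀ : Fin r → ℝ) {τ₀ : ℝ} (hτ₀ : 0 < τ₀) :
    ∃ R K c : ℝ, 0 < R ∧ R ≤ 1 ∧ 0 < K ∧ 0 < c ∧ ∀ m : ℕ, 1 ≤ m → m ≤ M →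
      ∀ x : Fin r → ℝ, ‖x‖ ≤ C →
        RegModel (Metric.closedBall ((β₀, τ₀) : (Fin r → ℝ) × ℝ) R) K c m
          (fun δ y => margDens m y (x ⬝ᵥ δ.1) √δ.2) (fun δ y => margRes m y (x ⬝ᵥ δ.1) √δ.2) := by
  set R : ℝ := min 1 (τ₀ / 2) with hR
  have hR0 : 0 < R := by positivity
  have hR1 : R ≤ 1 := min_le_left _ _
  have hR2 : R ≤ τ₀ / 2 := min_le_right _ _
  set Bw : ℝ := r * (|C| * (‖β₀‖ + 1)) with hBw
  obtain ⟨c, hc, hlow⟩ := margDens_lower (M + 1) Bw √(τ₀ + 1)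
  set G : ℝ := ∫ α, |α| ∂(gaussianReal 0 1) with hG
  have hG0 : 0 ≤ G := integral_nonneg fun _ => abs_nonneg _
  set k : ℝ := (M + 1 : ℕ) * (r * |C| + (√(τ₀ / 2))⁻¹ * G) with hk
  have hk0 : 0 ≤ k := by positivity
  have hball : ∀ δ ∈ Metric.closedBall ((β₀, τ₀) : (Fin r → ℝ) × ℝ) R,
      ‖δ.1‖ ≤ ‖β₀‖ + 1 ∧ τ₀ / 2 ≤ δ.2 ∧ δ.2 ≤ τ₀ + 1 := by
    intro δ hδ
    rw [Metric.mem_closedBall, Prod.dist_eq, max_le_iff, dist_eq_norm, Real.dist_eq, abs_le] at hδ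
    obtain ⟨h1, h2, h3⟩ := hδ
    simp only at h1 h2 h3
    refine ⟨?_, by linarith, by linarith⟩
    have := norm_sub_norm_le δ.1 β₀
    linarith
  refine ⟨R, M + (c⁻¹ + M / c + 1 + k + c⁻¹ * k + M * (2 * k / c ^ 2)), min c (c * (c / 2) ^ 2),
    hR0, hR1, by positivity, by positivity, ?_⟩
  intro m hm1 hmM x hx
  have hw : ∀ δ ∈ Metric.closedBall ((β₀, τ₀) : (Fin r → ℝ) × ℝ) R, |x ⬝ᵥ δ.1| ≤ Bw := by
    intro δ hδ
    refine (abs_dotProduct_le _ _).trans ?_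
    refine mul_le_mul_of_nonneg_left ?_ (Nat.cast_nonneg _)
    exact mul_le_mul (hx.trans (le_abs_self C)) (hball δ hδ).1 (norm_nonneg _) (abs_nonneg _)
  have hs : ∀ δ ∈ Metric.closedBall ((β₀, τ₀) : (Fin r → ℝ) × ℝ) R, |√δ.2| ≤ √(τ₀ + 1) := by
    intro δ hδ
    rw [abs_of_nonneg (Real.sqrt_nonneg _)]
    exact Real.sqrt_le_sqrt (hball δ hδ).2.2
  have low : ∀ δ ∈ Metric.closedBall ((β₀, τ₀) : (Fin r → ℝ) × ℝ) R, ∀ m' y, y ≤ m' → m' ≤ M + 1 →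
      c ≤ margDens m' y (x ⬝ᵥ δ.1) √δ.2 := fun δ hδ m' y h1 h2 =>
    hlow m' y h1 h2 _ _ (hw δ hδ) (hs δ hδ)
  have lip : ∀ δ ∈ Metric.closedBall ((β₀, τ₀) : (Fin r → ℝ) × ℝ) R,
      ∀ δ' ∈ Metric.closedBall ((β₀, τ₀) : (Fin r → ℝ) × ℝ) R, ∀ m' y, y ≤ m' → m' ≤ M + 1 →
      |margDens m' y (x ⬝ᵥ δ.1) √δ.2 - margDens m' y (x ⬝ᵥ δ'.1) √δ'.2| ≤ k * dist δ δ' := by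
    intro δ hδ δ' hδ' m' y h1 h2
    refine (margDens_lip h1 _ _ _ _).trans ?_
    have e1 : |x ⬝ᵥ δ.1 - x ⬝ᵥ δ'.1| ≤ r * |C| * dist δ δ' := by
      rw [← dotProduct_sub]
      refine (abs_dotProduct_le _ _).trans ?_
      rw [mul_assoc]
      refine mul_le_mul_of_nonneg_left ?_ (Nat.cast_nonneg _)
      refine mul_le_mul (hx.trans (le_abs_self C)) ?_ (norm_nonneg _) (abs_nonneg _)
      rw [← dist_eq_norm, Prod.dist_eq]; exact le_max_left _ _
    have e2 : |√δ.2 - √δ'.2| ≤ (√(τ₀ / 2))⁻¹ * dist δ δ' := by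
      refine (abs_sqrt_sub_le (by linarith) (hball δ hδ).2.1 (hball δ' hδ').2.1).trans ?_
      refine mul_le_mul_of_nonneg_left ?_ (by positivity)
      rw [← Real.dist_eq, Prod.dist_eq]; exact le_max_right _ _
    have h2' : (m' : ℝ) ≤ (M + 1 : ℕ) := by exact_mod_cast h2
    calc (m' : ℝ) * (|x ⬝ᵥ δ.1 - x ⬝ᵥ δ'.1| + |√δ.2 - √δ'.2| * G)
        ≤ (M + 1 : ℕ) * (r * |C| * dist δ δ' + (√(τ₀ / 2))⁻¹ * dist δ δ' * G) := by
          refine mul_le_mul h2' (add_le_add e1 (mul_le_mul_of_nonneg_right e2 hG0)) ?_ ?_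
          · positivity
          · positivity
      _ = k * dist δ δ' := by rw [hk]; ring
  have hmR : (m : ℝ) ≤ M := by exact_mod_cast hmM
  have hcoef : ∀ y ≤ m, (m : ℝ) * ((y + 1 : ℝ) / (m + 1)) ≤ M ∧
      0 ≤ (m : ℝ) * ((y + 1 : ℝ) / (m + 1)) := by
    intro y hy
    have hy' : (y : ℝ) ≤ m := by exact_mod_cast hy
    have : (y + 1 : ℝ) / (m + 1) ≤ 1 := (div_le_one (by positivity)).2 (by linarith)
    exact ⟨by nlinarith [(Nat.cast_nonneg m : (0 : ℝ) ≤ m)], by positivity⟩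
  have hKu : ∀ δ ∈ Metric.closedBall ((β₀, τ₀) : (Fin r → ℝ) × ℝ) R, ∀ y ≤ m,
      margDens (m + 1) (y + 1) (x ⬝ᵥ δ.1) √δ.2 / margDens m y (x ⬝ᵥ δ.1) √δ.2 ≤ 1 / c := by
    intro δ hδ y hy
    exact div_le_div₀ zero_le_one (margDens_le_one (by omega) _ _) hc (low δ hδ m y hy (by omega))
  have nn1 : 0 ≤ c⁻¹ := by positivity
  have nn2 : 0 ≤ (M : ℝ) / c := by positivity
  have nn3 : 0 ≤ c⁻¹ * k := by positivity
  have nn4 : 0 ≤ M * (2 * k / c ^ 2) := by positivity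
  have nn5 : (0 : ℝ) ≤ M := by positivity
  refine ⟨fun δ => sum_margDens m _ _, fun δ => sum_margDens_mul_margRes m _ _, ?_,
    fun δ y hy => margDens_pos hy _ _, fun δ y hy => margDens_le_one hy _ _, ?_, ?_, ?_, ?_, ?_, ?_⟩
  · intro δ hδ y hy
    exact (min_le_left _ _).trans (low δ hδ m y hy (by omega))
  · intro δ hδ y hy
    have h1 := low δ hδ m y hy (by omega)
    have h0 := hc.trans_le h1
    have hl : Real.log (margDens m y (x ⬝ᵥ δ.1) √δ.2) ≤ 0 :=
      Real.log_nonpos h0.le (margDens_le_one hy _ _)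
    have h2 := Real.one_sub_inv_le_log_of_pos h0
    have h3 : (margDens m y (x ⬝ᵥ δ.1) √δ.2)⁻¹ ≤ c⁻¹ := inv_anti₀ hc h1
    rw [abs_of_nonpos hl]
    linarith
  · intro δ hδ y hy
    have hy' : (y : ℝ) ≤ m := by exact_mod_cast hy
    unfold margRes
    refine (abs_sub _ _).trans ?_
    have h0 : 0 ≤ margDens (m + 1) (y + 1) (x ⬝ᵥ δ.1) √δ.2 / margDens m y (x ⬝ᵥ δ.1) √δ.2 :=
      div_nonneg (margDens_pos (by omega) _ _).le (margDens_pos hy _ _).le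
    rw [abs_of_nonneg (Nat.cast_nonneg y), abs_mul, abs_of_nonneg (hcoef y hy).2,
      abs_of_nonneg h0]
    have := mul_le_mul (hcoef y hy).1 (hKu δ hδ y hy) h0 nn5
    rw [mul_one_div] at this
    linarith
  · intro δ hδ δ' hδ' y hy
    refine (lip δ hδ δ' hδ' m y hy (by omega)).trans ?_
    exact mul_le_mul_of_nonneg_right (by linarith) dist_nonneg
  · intro δ hδ δ' hδ' y hy
    refine (abs_log_sub_le hc (low δ hδ m y hy (by omega)) (low δ' hδ' m y hy (by omega))).trans ?_
    refine (mul_le_mul_of_nonneg_left (lip δ hδ δ' hδ' m y hy (by omega)) nn1).trans ?_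
    rw [← mul_assoc]
    exact mul_le_mul_of_nonneg_right (by linarith) dist_nonneg
  · intro δ hδ δ' hδ' y hy
    unfold margRes
    rw [sub_sub_sub_cancel_left, ← mul_sub, abs_mul, abs_of_nonneg (hcoef y hy).2, abs_sub_comm]
    have h1 := abs_div_sub_div_le hc (low δ hδ m y hy (by omega)) (low δ' hδ' m y hy (by omega))
      (by
        rw [abs_of_pos (margDens_pos (m := m + 1) (y := y + 1) (by omega) _ _)]
        exact margDens_le_one (by omega) _ _)
      (margDens_le_one hy _ _) (lip δ hδ δ' hδ' (m + 1) (y + 1) (by omega) (by omega))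
      (lip δ hδ δ' hδ' m y hy (by omega))
    refine (mul_le_mul (hcoef y hy).1 h1 (abs_nonneg _) nn5).trans ?_
    have : (M : ℝ) * (2 * (k * dist δ δ') / c ^ 2) = M * (2 * k / c ^ 2) * dist δ δ' := by ring
    rw [this]
    exact mul_le_mul_of_nonneg_right (by linarith) dist_nonneg
  · intro δ hδ
    refine (min_le_right _ _).trans ?_
    have h0 := low δ hδ m 0 (by omega) (by omega)
    have h1 := low δ hδ (m + 1) 1 (by omega) (by omega)
    refine le_trans ?_ (Finset.single_le_sum (f := fun y => margDens m y (x ⬝ᵥ δ.1) √δ.2 *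
      margRes m y (x ⬝ᵥ δ.1) √δ.2 ^ 2) (fun y hy => mul_nonneg (margDens_pos
        (Nat.lt_succ_iff.1 (Finset.mem_range.1 hy)) _ _).le (sq_nonneg _))
        (Finset.mem_range.2 (Nat.succ_pos m)))
    refine mul_le_mul h0 ?_ (by positivity) (hc.le.trans h0)
    -- the residual of the observation `0` is `-(m / (m + 1))` times a ratio which is at least `c`
    have hm1' : (1 : ℝ) ≤ m := by exact_mod_cast hm1
    have hco : (1 : ℝ) / 2 ≤ m * ((0 + 1 : ℝ) / (m + 1)) := by
      rw [zero_add, mul_one_div, div_le_div_iff₀ (by norm_num) (by positivity)]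
      linarith
    have hra : c ≤ margDens (m + 1) (0 + 1) (x ⬝ᵥ δ.1) √δ.2 / margDens m 0 (x ⬝ᵥ δ.1) √δ.2 := by
      rw [le_div_iff₀ (hc.trans_le h0)]
      exact (mul_le_of_le_one_right hc.le (margDens_le_one (by omega) _ _)).trans h1
    unfold margRes
    rw [Nat.cast_zero, zero_sub, neg_sq]
    refine pow_le_pow_left₀ (by positivity) ?_ 2
    calc c / 2 = 1 / 2 * c := by ring
      _ ≤ _ := mul_le_mul hco hra hc.le (by positivity)

/-- On the whole compact parameter space, where the variance may degenerate to `0`, the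
log-density is still uniformly equicontinuous. -/
lemma log_margDens_equicont (r M : ℕ) (C D : ℝ) {ε : ℝ} (hε : 0 < ε) :
    ∃ η > 0, ∀ m y : ℕ, y ≤ m → m ≤ M → ∀ x : Fin r → ℝ, ‖x‖ ≤ C →
      ∀ δ δ' : (Fin r → ℝ) × ℝ, ‖δ.1‖ ≤ D → ‖δ'.1‖ ≤ D → 0 ≤ δ.2 → δ.2 ≤ D → 0 ≤ δ'.2 → δ'.2 ≤ D →
      dist δ δ' < η →
      |Real.log (margDens m y (x ⬝ᵥ δ.1) √δ.2) - Real.log (margDens m y (x ⬝ᵥ δ'.1) √δ'.2)|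
        ≤ ε := by
  obtain ⟨c, hc, hlow⟩ := margDens_lower M (r * (|C| * |D|)) √|D|
  set G : ℝ := ∫ α, |α| ∂(gaussianReal 0 1) with hG
  have hG0 : 0 ≤ G := integral_nonneg fun _ => abs_nonneg _
  have hT : Tendsto (fun e : ℝ => c⁻¹ * (M * (r * |C| * e + √e * G))) (𝓝 0) (𝓝 0) := by
    have : Continuous (fun e : ℝ => c⁻¹ * (M * (r * |C| * e + √e * G))) := by fun_prop
    simpa using this.tendsto 0
  obtain ⟨η, hη, H⟩ := Metric.tendsto_nhds_nhds.1 hT ε hε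
  refine ⟨η, hη, fun m y hy hm x hx δ δ' h1 h1' h2 h3 h2' h3' hd => ?_⟩
  have hw : ∀ δ : (Fin r → ℝ) × ℝ, ‖δ.1‖ ≤ D → |x ⬝ᵥ δ.1| ≤ r * (|C| * |D|) := fun δ h => by
    refine (abs_dotProduct_le _ _).trans (mul_le_mul_of_nonneg_left ?_ (Nat.cast_nonneg _))
    exact mul_le_mul (hx.trans (le_abs_self C)) (h.trans (le_abs_self D)) (norm_nonneg _)
      (abs_nonneg _)
  have hs : ∀ δ : (Fin r → ℝ) × ℝ, δ.2 ≤ D → |√δ.2| ≤ √|D| := fun δ h => by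
    rw [abs_of_nonneg (Real.sqrt_nonneg _)]
    exact Real.sqrt_le_sqrt (h.trans (le_abs_self D))
  refine (abs_log_sub_le hc (hlow m y hy hm _ _ (hw δ h1) (hs δ h3))
    (hlow m y hy hm _ _ (hw δ' h1') (hs δ' h3'))).trans ?_
  have hH := H (x := dist δ δ') (by rwa [Real.dist_0_eq_abs, abs_of_nonneg dist_nonneg])
  rw [Real.dist_0_eq_abs] at hH
  refine le_trans ?_ ((le_abs_self _).trans hH.le)
  refine mul_le_mul_of_nonneg_left ((margDens_lip hy _ _ _ _).trans ?_) (by positivity)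
  have e1 : |x ⬝ᵥ δ.1 - x ⬝ᵥ δ'.1| ≤ r * |C| * dist δ δ' := by
    rw [← dotProduct_sub]
    refine (abs_dotProduct_le _ _).trans ?_
    rw [mul_assoc]
    refine mul_le_mul_of_nonneg_left ?_ (Nat.cast_nonneg _)
    refine mul_le_mul (hx.trans (le_abs_self C)) ?_ (norm_nonneg _) (abs_nonneg _)
    rw [← dist_eq_norm, Prod.dist_eq]; exact le_max_left _ _
  have e2 : |√δ.2 - √δ'.2| ≤ √(dist δ δ') := by
    refine (abs_sqrt_sub_le_sqrt _ _ h2 h2').trans (Real.sqrt_le_sqrt ?_)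
    rw [← Real.dist_eq, Prod.dist_eq]; exact le_max_right _ _
  have hm' : (m : ℝ) ≤ M := by exact_mod_cast hm
  refine mul_le_mul hm' (add_le_add e1 (mul_le_mul_of_nonneg_right e2 hG0)) (by positivity)
    (Nat.cast_nonneg _)

lemma continuous_margDens {m y : ℕ} (h : y ≤ m) :
    Continuous fun p : ℝ × ℝ => margDens m y p.1 p.2 := by
  rw [continuous_iff_continuousAt]
  intro p
  rw [ContinuousAt, tendsto_iff_dist_tendsto_zero]
  have hT : Tendsto (fun q : ℝ × ℝ => (m : ℝ) * (|q.1 - p.1| + |q.2 - p.2|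
      * ∫ α, |α| ∂(gaussianReal 0 1))) (𝓝 p) (𝓝 0) := by
    have : Continuous (fun q : ℝ × ℝ => (m : ℝ) * (|q.1 - p.1| + |q.2 - p.2|
      * ∫ α, |α| ∂(gaussianReal 0 1))) := by fun_prop
    simpa using this.tendsto p
  refine squeeze_zero (fun _ => dist_nonneg) (fun q => ?_) hT
  rw [Real.dist_eq]
  exact margDens_lip h _ _ _ _

/-! ### The observations as an independent sequence -/

/-- Constants can be added to an independent family. -/
lemma iIndepFun_of_subset {Ω : Type*} [MeasurableSpace Ω] {μ : Measure Ω} [IsProbabilityMeasure μ]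
    {X : ℕ → Ω → ℕ} (J : Set ℕ) (hJ : iIndepFun (fun j : J => X j) μ)
    (h0 : ∀ t ∉ J, ∀ ω, X t ω = 0) : iIndepFun X μ := by
  classical
  rw [iIndepFun_iff_measure_inter_preimage_eq_mul] at hJ ⊢
  intro S sets _
  by_cases hex : ∃ t ∈ S, t ∉ J ∧ 0 ∉ sets t
  · obtain ⟨t, htS, htJ, ht⟩ := hex
    have he : X t ⁻¹' sets t = ∅ := by
      ext ω; simp [h0 t htJ ω, ht]
    rw [Finset.prod_eq_zero htS (by rw [he, measure_empty])]
    refine measure_mono_null (Set.iInter₂_subset t htS) ?_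
    rw [he, measure_empty]
  · push Not at hex
    have hu : ∀ t ∈ S, t ∉ J → X t ⁻¹' sets t = Set.univ := fun t htS htJ => by
      ext ω; simp [h0 t htJ ω, hex t htS htJ]
    have h1 := hJ (S.subtype (· ∈ J)) (sets := fun j => sets j) (fun i _ => MeasurableSet.of_discrete)
    have e1 : (⋂ i ∈ S.subtype (· ∈ J), X (i : ℕ) ⁻¹' sets (i : ℕ)) = ⋂ i ∈ S, X i ⁻¹' sets i := by
      ext ω
      simp only [Set.mem_iInter, Finset.mem_subtype]
      refine ⟨fun H t ht => ?_, fun H t ht => H t ht⟩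
      by_cases htJ : t ∈ J
      · exact H ⟨t, htJ⟩ ht
      · rw [hu t ht htJ]; trivial
    rw [← e1, h1, Finset.prod_subtype_eq_prod_filter (fun t => μ (X t ⁻¹' sets t)),
      Finset.prod_filter]
    refine Finset.prod_congr rfl fun t ht => ?_
    split_ifs with htJ
    · rfl
    · rw [hu t ht htJ, measure_univ]

/-- The law on `ℕ` with masses `p y` for `y ≤ m`. -/
def finLaw (m : ℕ) (p : ℕ → ℝ) : Measure ℕ :=
  ∑ y ∈ range (m + 1), ENNReal.ofReal (p y) • Measure.dirac y

lemma finLaw_singleton (m : ℕ) (p : ℕ → ℝ) (k : ℕ) :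
    finLaw m p {k} = if k ≤ m then ENNReal.ofReal (p k) else 0 := by
  unfold finLaw
  rw [Measure.finsetSum_apply]
  simp only [Measure.smul_apply, smul_eq_mul, measurableSet_singleton, Measure.dirac_apply',
    Set.indicator_apply, Set.mem_singleton_iff, Pi.one_apply, mul_ite, mul_one, mul_zero]
  rw [Finset.sum_ite_eq']
  simp

lemma isProbabilityMeasure_finLaw {m : ℕ} {p : ℕ → ℝ} (h0 : ∀ y ≤ m, 0 ≤ p y)
    (h1 : ∑ y ∈ range (m + 1), p y = 1) : IsProbabilityMeasure (finLaw m p) := by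
  constructor
  unfold finLaw
  rw [Measure.finsetSum_apply]
  simp only [Measure.smul_apply, measure_univ, smul_eq_mul, mul_one]
  rw [← ENNReal.ofReal_sum_of_nonneg fun y hy => h0 y (Nat.lt_succ_iff.1 (Finset.mem_range.1 hy)),
    h1, ENNReal.ofReal_one]

lemma integral_finLaw {m : ℕ} {p : ℕ → ℝ} (h0 : ∀ y ≤ m, 0 ≤ p y) (φ : ℕ → ℝ) :
    ∫ y, φ y ∂(finLaw m p) = ∑ y ∈ range (m + 1), p y * φ y := by
  unfold finLaw
  rw [integral_finsetSum_measure]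
  · refine Finset.sum_congr rfl fun y hy => ?_
    rw [integral_smul_measure, integral_dirac, ENNReal.toReal_ofReal
      (h0 y (Nat.lt_succ_iff.1 (Finset.mem_range.1 hy))), smul_eq_mul]
  · intro y _
    exact (integrable_dirac (by simp)).smul_measure ENNReal.ofReal_ne_top

lemma finLaw_ae (m : ℕ) (p : ℕ → ℝ) : ∀ᵐ y ∂(finLaw m p), y ≤ m := by
  rw [ae_iff]
  have : {a : ℕ | ¬ a ≤ m} = ⋃ k ∈ {a : ℕ | ¬ a ≤ m}, {k} :=
    (Set.biUnion_of_singleton _).symm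
  rw [this, measure_biUnion_null_iff (Set.to_countable _)]
  intro k hk
  rw [finLaw_singleton, if_neg hk]

/-- The observations, truncated to their almost sure range and set to `0` outside `{1, …, n}`,
form an independent sequence with the marginal laws given by `p`. -/
lemma exists_indep {Ω : Type*} [MeasurableSpace Ω] {μ : Measure Ω} [IsProbabilityMeasure μ]
    (n : ℕ) (m : ℕ → ℕ) (Y : ℕ → Ω → ℕ) (hY : ∀ t, Measurable (Y t)) (p : ℕ → ℕ → ℝ)
    (h0 : ∀ t, ∀ y ≤ m t, 0 ≤ p t y) (h1 : ∀ t, ∑ y ∈ range (m t + 1), p t y = 1)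
    (hmod : ∀ k : ℕ → ℕ, (∀ t ∈ Finset.Icc 1 n, k t ≤ m t) →
      μ {ω | ∀ t ∈ Finset.Icc 1 n, Y t ω = k t}
        = ENNReal.ofReal (∏ i : Fin n, p (i + 1) (k (i + 1)))) :
    ∃ X : ℕ → Ω → ℕ, (∀ t, Measurable (X t)) ∧ iIndepFun X μ ∧ (∀ t ω, X t ω ≤ m t) ∧
      (∀ᵐ ω ∂μ, ∀ t ∈ Finset.Icc 1 n, X t ω = Y t ω) ∧
      ∀ t ∈ Finset.Icc 1 n, ∀ φ : ℕ → ℝ,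
        ∫ ω, φ (X t ω) ∂μ = ∑ y ∈ range (m t + 1), p t y * φ y := by
  set ν : Fin n → Measure ℕ := fun i => finLaw (m (i + 1)) (p (i + 1)) with hν
  have : ∀ i, IsProbabilityMeasure (ν i) := fun i => isProbabilityMeasure_finLaw (h0 _) (h1 _)
  set V : Ω → Fin n → ℕ := fun ω i => Y (i + 1) ω with hV
  have hVm : Measurable V := measurable_pi_iff.2 fun i => hY _
  have : IsProbabilityMeasure (μ.map V) := Measure.isProbabilityMeasure_map hVm.aemeasurable
  have hle : Measure.pi ν ≤ μ.map V := by
    have hs : ∀ k : Fin n → ℕ, Measure.pi ν {k} ≤ μ.map V {k} := by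
      intro k
      rw [Measure.pi_singleton]
      by_cases hk : ∀ i : Fin n, k i ≤ m (i + 1)
      · set k' : ℕ → ℕ := fun t => if h : t - 1 < n then k ⟨t - 1, h⟩ else 0 with hk'
        have hkk : ∀ i : Fin n, k' (i + 1) = k i := fun i => by simp [hk']
        have hm' := hmod k' (fun t ht => by
          rw [Finset.mem_Icc] at ht
          have h : t - 1 < n := by omega
          have := hk ⟨t - 1, h⟩
          simp only [Nat.sub_add_cancel ht.1] at this
          simpa [hk', h] using this)
        have hset : V ⁻¹' {k} = {ω | ∀ t ∈ Finset.Icc 1 n, Y t ω = k' t} := by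
          ext ω
          simp only [Set.mem_preimage, Set.mem_singleton_iff, Set.mem_ofPred_eq, funext_iff, hV]
          constructor
          · intro H t ht
            rw [Finset.mem_Icc] at ht
            have h : t - 1 < n := by omega
            have := H ⟨t - 1, h⟩
            simp only [Nat.sub_add_cancel ht.1] at this
            simpa [hk', h] using this
          · intro H i
            rw [H (i + 1) (by rw [Finset.mem_Icc]; omega), hkk]
        rw [Measure.map_apply hVm (measurableSet_singleton _), hset, hm',
          ENNReal.ofReal_prod_of_nonneg fun i _ => h0 _ _ (by rw [hkk]; exact hk i)]
        refine le_of_eq (Finset.prod_congr rfl fun i _ => ?_)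
        rw [hν, finLaw_singleton, if_pos (hk i), hkk]
      · push Not at hk
        obtain ⟨i, hi⟩ := hk
        rw [Finset.prod_eq_zero (Finset.mem_univ i)]
        · exact zero_le
        · rw [hν, finLaw_singleton, if_neg (by omega)]
    refine Measure.le_iff.2 fun s hs' => ?_
    rw [← Measure.tsum_indicator_apply_singleton _ s hs',
      ← Measure.tsum_indicator_apply_singleton _ s hs']
    exact ENNReal.tsum_le_tsum fun k => Set.indicator_le_indicator (hs k)
  have hmap : μ.map V = Measure.pi ν := (Measure.eq_of_le_of_isProbabilityMeasure hle).symm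
  have hlaw : ∀ i : Fin n, μ.map (Y (i + 1)) = ν i := fun i => by
    have := (measurePreserving_eval ν i).map_eq
    rw [← hmap, Measure.map_map (measurable_pi_apply i) hVm] at this
    exact this
  have hind : iIndepFun (fun (i : Fin n) => Y (i + 1)) μ := by
    rw [iIndepFun_iff_map_fun_eq_pi_map fun i => (hY _).aemeasurable]
    rw [show (fun i : Fin n => μ.map (Y (i + 1))) = ν from funext hlaw]
    exact hmap
  have hYm : ∀ t ∈ Finset.Icc 1 n, ∀ᵐ ω ∂μ, Y t ω ≤ m t := fun t ht => by
    rw [Finset.mem_Icc] at ht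
    have h : t - 1 < n := by omega
    have h2 := finLaw_ae (m t) (p t)
    have h3 := hlaw ⟨t - 1, h⟩
    simp only [hν, Nat.sub_add_cancel ht.1] at h3
    rw [← h3] at h2
    exact ae_of_ae_map (hY t).aemeasurable h2
  have hXm : ∀ t, Measurable (fun ω => if t ∈ Finset.Icc 1 n then min (Y t ω) (m t) else 0) :=
    fun t => by
      by_cases ht : t ∈ Finset.Icc 1 n
      · simp only [if_pos ht]; exact (hY t).min measurable_const
      · simp only [if_neg ht]; exact measurable_const
  have hXY : ∀ᵐ ω ∂μ, ∀ t ∈ Finset.Icc 1 n,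
      (if t ∈ Finset.Icc 1 n then min (Y t ω) (m t) else 0) = Y t ω := by
    have := (Finset.eventually_all (Finset.Icc 1 n)).2 hYm
    filter_upwards [this] with ω hω t ht
    rw [if_pos ht, min_eq_left (hω t ht)]
  refine ⟨fun t ω => if t ∈ Finset.Icc 1 n then min (Y t ω) (m t) else 0, hXm, ?_, ?_, hXY, ?_⟩
  · refine iIndepFun_of_subset (Finset.Icc 1 n : Finset ℕ) ?_ fun t ht ω =>
      if_neg (by simpa using ht)
    have hcomp := hind.comp (fun i y => min y (m (i + 1))) fun i => measurable_of_countable _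
    have hlt : ∀ j : (Finset.Icc 1 n : Finset ℕ), (j : ℕ) - 1 < n := fun j => by
      have := Finset.mem_Icc.1 j.2; omega
    have hg : Function.Injective
        (fun j : ((Finset.Icc 1 n : Finset ℕ) : Set ℕ) => (⟨(j : ℕ) - 1, hlt j⟩ : Fin n)) := by
      intro i j hij
      have h1 := Finset.mem_Icc.1 i.2
      have h2 := Finset.mem_Icc.1 j.2
      simp only [Fin.mk.injEq] at hij
      exact Subtype.ext (by omega)
    have := hcomp.precomp hg
    refine (iIndepFun_congr fun j => ?_).1 this
    refine Eventually.of_forall fun ω => ?_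
    have h2 := Finset.mem_Icc.1 j.2
    simp only [Function.comp, Nat.sub_add_cancel h2.1]
    rw [if_pos (Finset.mem_coe.1 j.2)]
  · intro t ω
    show (if t ∈ Finset.Icc 1 n then min (Y t ω) (m t) else 0) ≤ m t
    split_ifs
    · exact min_le_right _ _
    · exact Nat.zero_le _
  · intro t ht φ
    have ht' := Finset.mem_Icc.1 ht
    have h : t - 1 < n := by omega
    have h3 := hlaw ⟨t - 1, h⟩
    simp only [hν, Nat.sub_add_cancel ht'.1] at h3
    rw [← integral_finLaw (h0 t) φ, ← h3, integral_map (hY t).aemeasurable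
      (measurable_of_countable φ).aestronglyMeasurable]
    refine integral_congr_ae ?_
    filter_upwards [hXY] with ω hω
    simp only [hω t ht]

/-- Integrating the latent variables out of the joint law. -/
lemma lintegral_prod_binDens (n : ℕ) (m k : ℕ → ℕ) (hk : ∀ t ∈ Finset.Icc 1 n, k t ≤ m t)
    (w : ℕ → ℝ) (s : ℝ) :
    ∫⁻ α in Set.univ, ENNReal.ofReal (∏ i : Fin n, binDens (m ((i : ℕ) + 1)) (k ((i : ℕ) + 1))
        (w ((i : ℕ) + 1) + s * α i)) ∂(Measure.pi fun _ : Fin n => gaussianReal 0 1)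
      = ENNReal.ofReal (∏ i : Fin n, margDens (m (i + 1)) (k (i + 1)) (w (i + 1)) s) := by
  have hk' : ∀ i : Fin n, k (i + 1) ≤ m (i + 1) := fun i => hk _ (by rw [Finset.mem_Icc]; omega)
  rw [Measure.restrict_univ, ← ofReal_integral_eq_lintegral_ofReal]
  · rw [integral_fintype_prod_eq_prod (fun (i : Fin n) (a : ℝ) =>
      binDens (m (i + 1)) (k (i + 1)) (w (i + 1) + s * a))]
    rfl
  · exact Integrable.fintype_prod (f := fun (i : Fin n) (a : ℝ) =>
      binDens (m (i + 1)) (k (i + 1)) (w (i + 1) + s * a))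
      fun i => integrable_binDens (hk' i) _ _
  · exact Eventually.of_forall fun α => Finset.prod_nonneg fun i _ => (binDens_pos _ _ _).le

/-! ### Chaining -/

section Chaining

/-- The points `δ₀ + R 2⁻ᵏ z` with `z` an integer vector of sup norm at most `2ᵏ`. -/
def dyadicGrid {r : ℕ} (δ₀ : (Fin r → ℝ) × ℝ) (R : ℝ) (k : ℕ) : Finset ((Fin r → ℝ) × ℝ) :=
  ((Fintype.piFinset fun _ : Fin r => Finset.Icc (-(2 ^ k : ℤ)) (2 ^ k)) ×ˢ
    Finset.Icc (-(2 ^ k : ℤ)) (2 ^ k)).image fun z =>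
      (fun i => δ₀.1 i + R / 2 ^ k * (z.1 i : ℝ), δ₀.2 + R / 2 ^ k * (z.2 : ℝ))

lemma card_dyadicGrid_le {r : ℕ} (δ₀ : (Fin r → ℝ) × ℝ) (R : ℝ) (k : ℕ) :
    (dyadicGrid δ₀ R k).card ≤ (3 * 2 ^ k) ^ (r + 1) := by
  unfold dyadicGrid
  refine Finset.card_image_le.trans ?_
  have h : (Finset.Icc (-(2 ^ k : ℤ)) (2 ^ k)).card ≤ 3 * 2 ^ k := by
    rw [Int.card_Icc]
    have h1 : (1 : ℤ) ≤ 2 ^ k := one_le_pow₀ (by norm_num)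
    rw [Int.toNat_le]
    push_cast
    linarith
  rw [Finset.card_product, Fintype.card_piFinset_const, pow_succ]
  exact Nat.mul_le_mul (by simpa using Nat.pow_le_pow_left h r) h

lemma dyadicGrid_subset {r : ℕ} (δ₀ : (Fin r → ℝ) × ℝ) {R : ℝ} (hR : 0 < R) (k : ℕ)
    {p : (Fin r → ℝ) × ℝ} (hp : p ∈ dyadicGrid δ₀ R k) : p ∈ Metric.closedBall δ₀ R := by
  unfold dyadicGrid at hp
  obtain ⟨z, hz, rfl⟩ := Finset.mem_image.1 hp
  rw [Finset.mem_product, Fintype.mem_piFinset] at hz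
  have key : ∀ j : ℤ, j ∈ Finset.Icc (-(2 ^ k : ℤ)) (2 ^ k) → |R / 2 ^ k * (j : ℝ)| ≤ R := by
    intro j hj
    rw [Finset.mem_Icc] at hj
    have h1 : -(2 ^ k : ℝ) ≤ j := by exact_mod_cast hj.1
    have h2 : (j : ℝ) ≤ 2 ^ k := by exact_mod_cast hj.2
    have h3 : |(j : ℝ)| ≤ 2 ^ k := abs_le.2 ⟨h1, h2⟩
    rw [abs_mul, abs_of_pos (by positivity)]
    calc R / 2 ^ k * |(j : ℝ)| ≤ R / 2 ^ k * 2 ^ k := mul_le_mul_of_nonneg_left h3 (by positivity)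
      _ = R := by field_simp
  rw [Metric.mem_closedBall, Prod.dist_eq, max_le_iff]
  refine ⟨(dist_pi_le_iff hR.le).2 fun i => ?_, ?_⟩
  · rw [Real.dist_eq, add_sub_cancel_left]; exact key _ (hz.1 i)
  · rw [Real.dist_eq, add_sub_cancel_left]; exact key _ hz.2

lemma center_mem_dyadicGrid {r : ℕ} (δ₀ : (Fin r → ℝ) × ℝ) (R : ℝ) (k : ℕ) :
    δ₀ ∈ dyadicGrid δ₀ R k := by
  unfold dyadicGrid
  refine Finset.mem_image.2 ⟨(fun _ => 0, 0), ?_, by simp⟩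
  rw [Finset.mem_product, Fintype.mem_piFinset]
  simp

lemma exists_mem_dyadicGrid {r : ℕ} (δ₀ : (Fin r → ℝ) × ℝ) {R : ℝ} (hR : 0 < R) (k : ℕ)
    {δ : (Fin r → ℝ) × ℝ} (hδ : δ ∈ Metric.closedBall δ₀ R) :
    ∃ p ∈ dyadicGrid δ₀ R k, dist δ p ≤ R / 2 ^ k := by
  rw [Metric.mem_closedBall, Prod.dist_eq, max_le_iff, dist_pi_le_iff hR.le] at hδ
  have hs : 0 < R / 2 ^ k := by positivity
  have key : ∀ a b : ℝ, dist a b ≤ R →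
      ⌊(a - b) / (R / 2 ^ k)⌋ ∈ Finset.Icc (-(2 ^ k : ℤ)) (2 ^ k) ∧
      dist a (b + R / 2 ^ k * (⌊(a - b) / (R / 2 ^ k)⌋ : ℝ)) ≤ R / 2 ^ k := by
    intro a b hab
    rw [Real.dist_eq, abs_le] at hab
    have e : R = 2 ^ k * (R / 2 ^ k) := by field_simp
    have h1 : -(2 ^ k : ℝ) ≤ (a - b) / (R / 2 ^ k) := by
      rw [le_div_iff₀ hs]; linarith
    have h2 : (a - b) / (R / 2 ^ k) ≤ 2 ^ k := by
      rw [div_le_iff₀ hs]; linarith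
    refine ⟨Finset.mem_Icc.2 ⟨Int.le_floor.2 (by push_cast; exact h1), ?_⟩, ?_⟩
    · have := (Int.floor_le ((a - b) / (R / 2 ^ k))).trans h2
      exact_mod_cast this
    · have e1 : a - (b + R / 2 ^ k * (⌊(a - b) / (R / 2 ^ k)⌋ : ℝ))
          = R / 2 ^ k * Int.fract ((a - b) / (R / 2 ^ k)) := by
        rw [Int.fract, mul_sub, mul_div_cancel₀ _ hs.ne']; ring
      rw [Real.dist_eq, e1, abs_of_nonneg (mul_nonneg hs.le (Int.fract_nonneg _))]
      exact mul_le_of_le_one_right hs.le (Int.fract_lt_one _).le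
  refine ⟨_, Finset.mem_image.2 ⟨(fun i => ⌊(δ.1 i - δ₀.1 i) / (R / 2 ^ k)⌋,
    ⌊(δ.2 - δ₀.2) / (R / 2 ^ k)⌋), ?_, rfl⟩, ?_⟩
  · rw [Finset.mem_product, Fintype.mem_piFinset]
    exact ⟨fun i => (key _ _ (hδ.1 i)).1, (key _ _ hδ.2).1⟩
  · rw [Prod.dist_eq, max_le_iff]
    exact ⟨(dist_pi_le_iff hs.le).2 fun i => (key _ _ (hδ.1 i)).2, (key _ _ hδ.2).2⟩

/-- The union bounds over all dyadic links form a convergent series. -/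
lemma summable_chain (r : ℕ) {a : ℝ} (ha : 0 < a) :
    Summable fun k : ℕ => ((3 * 2 ^ k : ℝ) ^ (r + 1) * (3 * 2 ^ (k + 1)) ^ (r + 1))
      * (2 * Real.exp (-(a * 2 ^ k))) := by
  set j : ℕ := 2 * r + 3 with hj
  set C : ℝ := 3 ^ (r + 1) * (6 ^ (r + 1)) * 2 * (j.factorial / a ^ j) with hC
  refine Summable.of_nonneg_of_le (fun k => by positivity) (fun k => ?_)
    ((summable_geometric_of_lt_one (r := (1 / 2 : ℝ)) (by norm_num) (by norm_num)).mul_left C)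
  have h1 := Real.pow_div_factorial_le_exp (a * 2 ^ k) (by positivity) j
  have h2 : Real.exp (-(a * 2 ^ k)) ≤ j.factorial / (a * 2 ^ k) ^ j := by
    rw [Real.exp_neg, ← inv_div]
    exact inv_anti₀ (by positivity) h1
  have e1 : (3 * 2 ^ k : ℝ) ^ (r + 1) * (3 * 2 ^ (k + 1)) ^ (r + 1)
      = 3 ^ (r + 1) * 6 ^ (r + 1) * (2 ^ k) ^ (2 * r + 2) := by
    rw [show (3 * 2 ^ (k + 1) : ℝ) = 6 * 2 ^ k by ring, mul_pow, mul_pow]; ring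
  calc _ ≤ 3 ^ (r + 1) * 6 ^ (r + 1) * (2 ^ k : ℝ) ^ (2 * r + 2)
        * (2 * (j.factorial / (a * 2 ^ k) ^ j)) := by
        rw [e1]
        exact mul_le_mul_of_nonneg_left (mul_le_mul_of_nonneg_left h2 (by norm_num)) (by positivity)
    _ = C * (1 / 2) ^ k := by
        rw [hC, hj, mul_pow, one_div, inv_pow, show 2 * r + 3 = (2 * r + 2) + 1 by ring,
          pow_succ (2 ^ k : ℝ)]
        field_simp
        ring

/-- Chaining: a process with subgaussian increments is equicontinuous in probability at the
centre of a ball, with a modulus depending only on the subgaussian constant. -/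
lemma chaining {Ω : Type*} [MeasurableSpace Ω] (μ : Measure Ω) [IsProbabilityMeasure μ] {r : ℕ}
    (δ₀ : (Fin r → ℝ) × ℝ) {R K η : ℝ} (hR : 0 < R) (hR1 : R ≤ 1) (hK : 0 < K) (hη : 0 < η) :
    ∃ ε > 0, ε ≤ R ∧ ∀ Z : (Fin r → ℝ) × ℝ → Ω → ℝ,
      (∀ ω, ContinuousOn (fun δ => Z δ ω) (Metric.closedBall δ₀ R)) →
      (∀ δ ∈ Metric.closedBall δ₀ R, ∀ δ' ∈ Metric.closedBall δ₀ R, ∀ ρ q : ℝ, 0 < ρ →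
        dist δ δ' ≤ ρ → 0 < q →
        μ.real {ω | q ≤ |Z δ ω - Z δ' ω|} ≤ 2 * Real.exp (-(q ^ 2 / (2 * (K * ρ) ^ 2)))) →
      μ.real {ω | ∃ δ, dist δ δ₀ ≤ ε ∧ η < |Z δ ω - Z δ₀ ω|} ≤ η := by
  set q : ℕ → ℝ := fun k => (√(1 / 2)) ^ k with hq
  have hs0 : 0 < √(1 / 2 : ℝ) := by positivity
  have hs1 : √(1 / 2 : ℝ) < 1 := by
    rw [Real.sqrt_lt' one_pos]; norm_num
  have hq0 : ∀ k, 0 < q k := fun k => by positivity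
  have hqs : Summable q := summable_geometric_of_lt_one hs0.le hs1
  have hq2 : ∀ k, q k ^ 2 = 1 / 2 ^ k := fun k => by
    rw [hq, ← pow_mul, mul_comm, pow_mul, Real.sq_sqrt (by norm_num), one_div, inv_pow, one_div]
  set a : ℝ := 1 / (8 * K ^ 2) with ha
  have ha0 : 0 < a := by positivity
  set b : ℕ → ℝ := fun k => ((3 * 2 ^ k : ℝ) ^ (r + 1) * (3 * 2 ^ (k + 1)) ^ (r + 1))
      * (2 * Real.exp (-(a * 2 ^ k))) with hb
  have hbs : Summable b := summable_chain r ha0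
  have hb0 : ∀ k, 0 ≤ b k := fun k => by positivity
  have ht1 := (tendsto_sum_nat_add q).eventually (gt_mem_nhds hη)
  have ht2 := (tendsto_sum_nat_add b).eventually (gt_mem_nhds hη)
  obtain ⟨k0, h1, h2⟩ := (ht1.and ht2).exists
  refine ⟨R / 2 ^ (k0 + 1), by positivity, div_le_self hR.le (one_le_pow₀ (by norm_num)), ?_⟩
  intro Z hZ htail
  -- the links used at level `k`
  set Bad : ℕ → Set Ω := fun k => ⋃ p ∈ dyadicGrid δ₀ R k, ⋃ p' ∈ dyadicGrid δ₀ R (k + 1),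
    {ω | dist p p' ≤ 2 / 2 ^ k ∧ q k ≤ |Z p ω - Z p' ω|} with hBad
  have hBadm : ∀ k, μ (Bad k) ≤ ENNReal.ofReal (b k) := by
    intro k
    have hone : ∀ p ∈ dyadicGrid δ₀ R k, ∀ p' ∈ dyadicGrid δ₀ R (k + 1),
        μ {ω | dist p p' ≤ 2 / 2 ^ k ∧ q k ≤ |Z p ω - Z p' ω|}
          ≤ ENNReal.ofReal (2 * Real.exp (-(a * 2 ^ k))) := by
      intro p hp p' hp'
      by_cases hd : dist p p' ≤ 2 / 2 ^ k
      · have := htail p (dyadicGrid_subset δ₀ hR k hp) p' (dyadicGrid_subset δ₀ hR _ hp')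
          (2 / 2 ^ k) (q k) (by positivity) hd (hq0 k)
        have e : q k ^ 2 / (2 * (K * (2 / 2 ^ k)) ^ 2) = a * 2 ^ k := by
          rw [hq2, ha]; field_simp; norm_num
        rw [e] at this
        simp only [hd, true_and]
        rw [Measure.real] at this
        exact (ENNReal.le_ofReal_iff_toReal_le (measure_ne_top _ _) (by positivity)).2 this
      · simp [hd]
    calc μ (Bad k) ≤ ∑ p ∈ dyadicGrid δ₀ R k, ∑ p' ∈ dyadicGrid δ₀ R (k + 1),
          ENNReal.ofReal (2 * Real.exp (-(a * 2 ^ k))) := by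
          refine (measure_biUnion_finset_le _ _).trans (Finset.sum_le_sum fun p hp => ?_)
          exact (measure_biUnion_finset_le _ _).trans
            (Finset.sum_le_sum fun p' hp' => hone p hp p' hp')
      _ = ((dyadicGrid δ₀ R k).card * (dyadicGrid δ₀ R (k + 1)).card : ℕ)
          * ENNReal.ofReal (2 * Real.exp (-(a * 2 ^ k))) := by
          simp only [Finset.sum_const, nsmul_eq_mul]; push_cast; ring
      _ ≤ (((3 * 2 ^ k) ^ (r + 1) * (3 * 2 ^ (k + 1)) ^ (r + 1) : ℕ) : ENNReal)
          * ENNReal.ofReal (2 * Real.exp (-(a * 2 ^ k))) := by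
          gcongr <;> exact card_dyadicGrid_le _ _ _
      _ = ENNReal.ofReal (b k) := by
          rw [← ENNReal.ofReal_natCast, ← ENNReal.ofReal_mul (by positivity)]
          push_cast; rfl
  have hsub : {ω | ∃ δ, dist δ δ₀ ≤ R / 2 ^ (k0 + 1) ∧ η < |Z δ ω - Z δ₀ ω|}
      ⊆ ⋃ k, Bad (k + k0) := by
    intro ω hω
    obtain ⟨δ, hδ, hgt⟩ := hω
    by_contra hno
    have hgood : ∀ k, ∀ p ∈ dyadicGrid δ₀ R (k + k0), ∀ p' ∈ dyadicGrid δ₀ R (k + k0 + 1),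
        dist p p' ≤ 2 / 2 ^ (k + k0) → |Z p ω - Z p' ω| < q (k + k0) := by
      intro k p hp p' hp' hd
      by_contra hcon
      refine hno (Set.mem_iUnion.2 ⟨k, ?_⟩)
      rw [hBad]
      exact Set.mem_biUnion hp (Set.mem_biUnion hp' ⟨hd, not_lt.1 hcon⟩)
    have hδB : δ ∈ Metric.closedBall δ₀ R :=
      Metric.mem_closedBall.2 (hδ.trans (div_le_self hR.le (one_le_pow₀ (by norm_num))))
    choose π hπ hπd using fun k => exists_mem_dyadicGrid δ₀ hR k hδB
    -- the chain starts at the centre and then follows the roundings of `δ`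
    set P : ℕ → (Fin r → ℝ) × ℝ := fun k => if k = 0 then δ₀ else π (k + k0) with hP
    have hPmem : ∀ k, P k ∈ dyadicGrid δ₀ R (k + k0) := fun k => by
      rw [hP]; dsimp only; split_ifs with h
      · exact center_mem_dyadicGrid _ _ _
      · exact hπ _
    have hpow : ∀ k, R / 2 ^ (k + 1) = R / 2 ^ k / 2 := fun k => by rw [pow_succ]; field_simp
    have hRk : ∀ k, R / 2 ^ k ≤ 1 / 2 ^ k := fun k =>
      div_le_div_of_nonneg_right hR1 (by positivity)
    have hPd : ∀ k, dist (P k) (P (k + 1)) ≤ 2 / 2 ^ (k + k0) := fun k => by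
      have h3 := hπd (k + 1 + k0)
      have e : k + 1 + k0 = k + k0 + 1 := by ring
      have h5 := hRk (k + k0)
      have h6 : 0 < R / 2 ^ (k + k0) := by positivity
      have h7 : (2 : ℝ) / 2 ^ (k + k0) = 2 * (1 / 2 ^ (k + k0)) := by ring
      have h8 := hpow (k + k0)
      rw [e] at h3
      rw [hP]; dsimp only
      rw [if_neg (Nat.succ_ne_zero k), h7, e]
      split_ifs with h
      · subst h
        rw [zero_add] at h3 h5 h6 h8 ⊢
        have := dist_triangle_left δ₀ (π (k0 + 1)) δ
        linarith
      · have := dist_triangle_left (π (k + k0)) (π (k + k0 + 1)) δ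
        have h4 := hπd (k + k0)
        linarith
    have hstep : ∀ k, |Z (P k) ω - Z (P (k + 1)) ω| ≤ q (k + k0) := fun k => by
      refine (hgood k _ (hPmem k) _ ?_ (hPd k)).le
      have := hPmem (k + 1)
      rwa [show k + 1 + k0 = k + k0 + 1 by ring] at this
    have hq' : Summable fun k => q (k + k0) := (summable_nat_add_iff k0).2 hqs
    have hsum : ∀ N, |Z (P N) ω - Z δ₀ ω| ≤ ∑ k ∈ range N, q (k + k0) := by
      intro N
      induction N with
      | zero => simp [hP]
      | succ N ih =>
        rw [Finset.sum_range_succ]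
        have h3 := hstep N
        rw [abs_sub_comm] at h3
        have h4 := abs_sub_le (Z (P (N + 1)) ω) (Z (P N) ω) (Z δ₀ ω)
        linarith
    have hsum' : ∀ N, |Z (P N) ω - Z δ₀ ω| ≤ ∑' k, q (k + k0) := fun N =>
      (hsum N).trans (hq'.sum_le_tsum _ fun _ _ => (hq0 _).le)
    have hlim : Tendsto P atTop (𝓝 δ) := by
      rw [tendsto_iff_dist_tendsto_zero]
      have hg : Tendsto (fun k : ℕ => (1 / 2 : ℝ) ^ k) atTop (𝓝 0) :=
        tendsto_pow_atTop_nhds_zero_of_lt_one (by norm_num) (by norm_num)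
      refine squeeze_zero' (Eventually.of_forall fun _ => dist_nonneg) ?_ hg
      filter_upwards [eventually_gt_atTop 0] with k hk
      rw [hP]; dsimp only
      rw [if_neg hk.ne', dist_comm]
      refine (hπd _).trans ((hRk _).trans ?_)
      rw [_root_.one_div_pow]
      exact one_div_le_one_div_of_le (by positivity)
        (pow_le_pow_right₀ (by norm_num) (Nat.le_add_right k k0))
    have hlimW : Tendsto P atTop (𝓝[Metric.closedBall δ₀ R] δ) :=
      tendsto_nhdsWithin_iff.2 ⟨hlim, Eventually.of_forall fun k =>
        dyadicGrid_subset δ₀ hR _ (hPmem k)⟩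
    have hZlim : Tendsto (fun k => Z (P k) ω) atTop (𝓝 (Z δ ω)) :=
      Tendsto.comp (hZ ω δ hδB) hlimW
    have hfin := le_of_tendsto (hZlim.sub_const (Z δ₀ ω)).abs (Eventually.of_forall hsum')
    linarith
  have hmeas : μ {ω | ∃ δ, dist δ δ₀ ≤ R / 2 ^ (k0 + 1) ∧ η < |Z δ ω - Z δ₀ ω|}
      ≤ ENNReal.ofReal η := by
    refine (measure_mono hsub).trans ((measure_iUnion_le _).trans ?_)
    refine (ENNReal.tsum_le_tsum fun k => hBadm (k + k0)).trans ?_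
    rw [← ENNReal.ofReal_tsum_of_nonneg (fun k => hb0 _) ((summable_nat_add_iff k0).2 hbs)]
    exact ENNReal.ofReal_le_ofReal h2.le
  rw [Measure.real]
  exact ENNReal.toReal_le_of_le_ofReal hη.le hmeas

end Chaining

/-! ### Residual autocovariances under the null model -/

section NullModel

set_option linter.unusedSectionVars false

/-- The serially independent model with `n` observations: independent `X t`, where for
`1 ≤ t ≤ n` the law of `X t` has masses `f t δ₀`, and all observations are regular on `B`. -/
structure NullModel {Ω : Type*} [MeasurableSpace Ω] (μ : Measure Ω) {P : Type*}
    [PseudoMetricSpace P] (B : Set P) (δ₀ : P) (K c : ℝ) (M n : ℕ) (m : ℕ → ℕ)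
    (f u : ℕ → P → ℕ → ℝ) (X : ℕ → Ω → ℕ) : Prop where
  meas : ∀ t, Measurable (X t)
  indep : iIndepFun X μ
  le : ∀ t ω, X t ω ≤ m t
  m_le : ∀ t, m t ≤ M
  mem : δ₀ ∈ B
  K_pos : 0 < K
  c_pos : 0 < c
  reg : ∀ t ∈ Finset.Icc 1 n, RegModel B K c (m t) (f t) (u t)
  law : ∀ t ∈ Finset.Icc 1 n, ∀ φ : ℕ → ℝ,
    ∫ ω, φ (X t ω) ∂μ = ∑ y ∈ range (m t + 1), f t δ₀ y * φ y

/-- Extension of a time-indexed function by zero outside `{1, …, n}`. With this convention lagged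
sums run over all times, and the truncated subtraction `t - a = 0` for `t ≤ a` does no harm. -/
def zeroExt {α : Type*} [Zero α] (n : ℕ) (g : ℕ → α) (t : ℕ) : α :=
  if t ∈ Finset.Icc 1 n then g t else 0

lemma zeroExt_zero {α : Type*} [Zero α] (n : ℕ) (g : ℕ → α) : zeroExt n g 0 = 0 := by
  simp [zeroExt]

lemma zeroExt_mem {α : Type*} [Zero α] {n : ℕ} (g : ℕ → α) {t : ℕ} (ht : t ∈ Finset.Icc 1 n) :
    zeroExt n g t = g t := if_pos ht

lemma zeroExt_not_mem {α : Type*} [Zero α] {n : ℕ} (g : ℕ → α) {t : ℕ}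
    (ht : t ∉ Finset.Icc 1 n) : zeroExt n g t = 0 := if_neg ht

/-- Extending by zero outside `1, …, n` turns the lagged sum into one over `range (n + 1)`; the
value at `0` vanishes, so the truncation of `t - a` for `t < a` is harmless. -/
lemma sum_lag_eq (n a : ℕ) (F G : ℕ → ℝ) :
    ∑ t ∈ Finset.Icc (a + 1) n, F t * G (t - a)
      = ∑ t ∈ range (n + 1), zeroExt n F t * zeroExt n G (t - a) := by
  symm
  refine (Finset.sum_subset (fun t ht => ?_) fun t ht ht' => ?_).symm.trans
    (Finset.sum_congr rfl fun t ht => ?_)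
  · rw [Finset.mem_Icc] at ht; rw [Finset.mem_range]; omega
  · rw [Finset.mem_range] at ht
    rw [Finset.mem_Icc] at ht'
    rw [zeroExt_not_mem G (by rw [Finset.mem_Icc]; omega), mul_zero]
  · rw [Finset.mem_Icc] at ht
    rw [zeroExt_mem F (by rw [Finset.mem_Icc]; omega),
      zeroExt_mem G (by rw [Finset.mem_Icc]; omega)]

variable {Ω : Type*} [MeasurableSpace Ω] {μ : Measure Ω} [IsProbabilityMeasure μ] {P : Type*}
  [PseudoMetricSpace P] {B : Set P} {δ₀ : P} {K c : ℝ} {M n : ℕ} {m : ℕ → ℕ}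
  {f u : ℕ → P → ℕ → ℝ} {X : ℕ → Ω → ℕ}

/-- The residual of observation `t` at parameter `δ`, zero outside `{1, …, n}`. -/
def resid (n : ℕ) (u : ℕ → P → ℕ → ℝ) (X : ℕ → Ω → ℕ) (δ : P) (t : ℕ) (ω : Ω) : ℝ :=
  zeroExt n (fun t => u t δ (X t ω)) t

/-- The variance of the residual of observation `t` under the parameter `δ`. -/
def residVar (n : ℕ) (m : ℕ → ℕ) (f u : ℕ → P → ℕ → ℝ) (δ : P) (t : ℕ) : ℝ :=
  zeroExt n (fun t => ∑ y ∈ range (m t + 1), f t δ y * u t δ y ^ 2) t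

lemma resid_eq (δ : P) (t : ℕ) :
    resid n u X δ t = fun ω => (if t ∈ Finset.Icc 1 n then u t δ else 0) (X t ω) := by
  funext ω; unfold resid zeroExt; split_ifs <;> rfl

lemma measurable_resid (δ : P) {t : ℕ} {S : Set ℕ} (ht : t ∈ S) :
    Measurable[sigmaOf X S] (resid n u X δ t) := by
  rw [resid_eq]; exact measurable_sigmaOf X ht _

lemma measurable_resid_lag (δ : P) (t a : ℕ) (ha : 1 ≤ a) :
    Measurable[sigmaOf X (Set.Iio t)] (resid n u X δ (t - a)) := by
  rcases Nat.eq_zero_or_pos t with rfl | ht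
  · have : resid n u X δ (0 - a) = fun _ => 0 := by
      funext ω; simp [resid, zeroExt_zero]
    rw [this]; exact measurable_const
  · exact measurable_resid δ (Set.mem_Iio.2 (by omega))

lemma NullModel.resid_bdd (hN : NullModel μ B δ₀ K c M n m f u X) {δ : P} (hδ : δ ∈ B)
    (t : ℕ) (ω : Ω) : |resid n u X δ t ω| ≤ K := by
  unfold resid zeroExt
  split_ifs with ht
  · exact (hN.reg t ht).u_bdd δ hδ _ (hN.le t ω)
  · simpa using hN.K_pos.le

lemma NullModel.integral_resid (hN : NullModel μ B δ₀ K c M n m f u X) (t : ℕ) :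
    ∫ ω, resid n u X δ₀ t ω ∂μ = 0 := by
  unfold resid zeroExt
  split_ifs with ht
  · rw [hN.law t ht, (hN.reg t ht).sum_fu]
  · simp

lemma NullModel.integral_resid_sq (hN : NullModel μ B δ₀ K c M n m f u X) (t : ℕ) :
    ∫ ω, resid n u X δ₀ t ω ^ 2 ∂μ = residVar n m f u δ₀ t := by
  unfold resid residVar zeroExt
  split_ifs with ht
  · rw [hN.law t ht (fun y => u t δ₀ y ^ 2)]
  · simp

lemma NullModel.residVar_nonneg (hN : NullModel μ B δ₀ K c M n m f u X) (δ : P) (t : ℕ) :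
    0 ≤ residVar n m f u δ t := by
  unfold residVar zeroExt
  split_ifs with ht
  · exact Finset.sum_nonneg fun y hy => mul_nonneg ((hN.reg t ht).f_pos δ y
      (Nat.lt_succ_iff.1 (Finset.mem_range.1 hy))).le (sq_nonneg _)
  · exact le_rfl

lemma NullModel.residVar_le (hN : NullModel μ B δ₀ K c M n m f u X) {δ : P} (hδ : δ ∈ B) (t : ℕ) :
    residVar n m f u δ t ≤ K ^ 2 := by
  unfold residVar zeroExt
  split_ifs with ht
  · calc _ ≤ ∑ y ∈ range (m t + 1), f t δ y * K ^ 2 := by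
          refine Finset.sum_le_sum fun y hy => ?_
          have hy' := Nat.lt_succ_iff.1 (Finset.mem_range.1 hy)
          refine mul_le_mul_of_nonneg_left ?_ ((hN.reg t ht).f_pos δ y hy').le
          rw [← sq_abs]
          exact pow_le_pow_left₀ (abs_nonneg _) ((hN.reg t ht).u_bdd δ hδ y hy') 2
      _ = K ^ 2 := by rw [← Finset.sum_mul, (hN.reg t ht).sum_f, one_mul]
  · positivity

lemma NullModel.integral_four (hN : NullModel μ B δ₀ K c M n m f u X) {t a b : ℕ} (ha : 1 ≤ a)
    (hb : 1 ≤ b) :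
    ∫ ω, resid n u X δ₀ t ω ^ 2 * resid n u X δ₀ (t - a) ω * resid n u X δ₀ (t - b) ω ∂μ
      = if a = b then residVar n m f u δ₀ t * residVar n m f u δ₀ (t - a) else 0 := by
  split_ifs with hab
  · subst hab
    rcases Nat.eq_zero_or_pos t with rfl | ht
    · simp [resid, residVar, zeroExt_zero]
    · have h1 : Measurable[sigmaOf X {t}] (fun ω => resid n u X δ₀ t ω ^ 2) :=
        (measurable_resid δ₀ (Set.mem_singleton t)).pow_const 2
      have h2 : Measurable[sigmaOf X {t - a}] (fun ω => resid n u X δ₀ (t - a) ω ^ 2) :=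
        (measurable_resid δ₀ (Set.mem_singleton (t - a))).pow_const 2
      have := integral_mul_of_disjoint (μ := μ) hN.meas hN.indep
        (Set.disjoint_singleton.2 (by omega)) h1 h2
      rw [← hN.integral_resid_sq, ← hN.integral_resid_sq, ← this]
      refine integral_congr_ae (Eventually.of_forall fun ω => ?_)
      simp only; ring
  · by_cases hz : t - a = t - b
    · have h0 : t - b = 0 := by omega
      simp [h0, resid, zeroExt_zero]
    · rcases Nat.eq_zero_or_pos t with rfl | ht
      · simp [resid, zeroExt_zero]
      have h0 : Measurable[sigmaOf X {t, t - a}] (fun ω => resid n u X δ₀ t ω ^ 2) :=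
        (measurable_resid δ₀ (Set.mem_insert t _)).pow_const 2
      have h1 : Measurable[sigmaOf X {t, t - a}]
          (fun ω => resid n u X δ₀ t ω ^ 2 * resid n u X δ₀ (t - a) ω) :=
        h0.mul (measurable_resid δ₀ (Set.mem_insert_of_mem _ (Set.mem_singleton (t - a))))
      have h2 : Measurable[sigmaOf X {t - b}] (resid n u X δ₀ (t - b)) :=
        measurable_resid δ₀ (Set.mem_singleton (t - b))
      have hdis : Disjoint ({t, t - a} : Set ℕ) {t - b} := by
        rw [Set.disjoint_singleton_right]
        simp only [Set.mem_insert_iff, Set.mem_singleton_iff, not_or]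
        omega
      have := integral_mul_of_disjoint (μ := μ) hN.meas hN.indep hdis h1 h2
      rw [this, hN.integral_resid, mul_zero]

/-- The normalised lag-`a` residual autocovariance at `δ`. -/
def lagCov (n : ℕ) (u : ℕ → P → ℕ → ℝ) (X : ℕ → Ω → ℕ) (δ : P) (a : ℕ) (ω : Ω) : ℝ :=
  (√(n : ℝ))⁻¹ * ∑ t ∈ range (n + 1), resid n u X δ t ω * resid n u X δ (t - a) ω

/-- The variance of `lagCov` under the parameter `δ`. -/
def lagVar (n : ℕ) (m : ℕ → ℕ) (f u : ℕ → P → ℕ → ℝ) (δ : P) (a : ℕ) : ℝ :=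
  (n : ℝ)⁻¹ * ∑ t ∈ range (n + 1), residVar n m f u δ t * residVar n m f u δ (t - a)

lemma NullModel.lagVar_nonneg (hN : NullModel μ B δ₀ K c M n m f u X) (δ : P) (a : ℕ) :
    0 ≤ lagVar n m f u δ a :=
  mul_nonneg (by positivity) (Finset.sum_nonneg fun _ _ =>
    mul_nonneg (hN.residVar_nonneg _ _) (hN.residVar_nonneg _ _))

lemma NullModel.lagVar_lower (hN : NullModel μ B δ₀ K c M n m f u X) {a : ℕ} (ha : 2 * a ≤ n)
    (hn : 1 ≤ n) {δ : P} (hδ : δ ∈ B) : c ^ 2 / 2 ≤ lagVar n m f u δ a := by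
  unfold lagVar
  have hn' : (0 : ℝ) < n := by exact_mod_cast hn
  rw [inv_mul_eq_div, le_div_iff₀ hn']
  have h1 : ∑ _t ∈ Finset.Icc (a + 1) n, c ^ 2
      ≤ ∑ t ∈ range (n + 1), residVar n m f u δ t * residVar n m f u δ (t - a) := by
    refine (Finset.sum_le_sum fun t ht => ?_).trans (Finset.sum_le_sum_of_subset_of_nonneg
      (s := Finset.Icc (a + 1) n) (fun t ht => ?_) fun t _ _ =>
      mul_nonneg (hN.residVar_nonneg δ t) (hN.residVar_nonneg δ (t - a)))
    · rw [Finset.mem_Icc] at ht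
      have low : ∀ s ∈ Finset.Icc 1 n, c ≤ residVar n m f u δ s := fun s hs => by
        unfold residVar; rw [zeroExt_mem _ hs]; exact (hN.reg s hs).var_lower δ hδ
      rw [sq]
      exact mul_le_mul (low t (by rw [Finset.mem_Icc]; omega))
        (low (t - a) (by rw [Finset.mem_Icc]; omega)) hN.c_pos.le (hN.residVar_nonneg _ _)
    · rw [Finset.mem_Icc] at ht; rw [Finset.mem_range]; omega
  refine le_trans ?_ h1
  rw [Finset.sum_const, nsmul_eq_mul, Nat.card_Icc]
  have h2 : (n : ℝ) / 2 ≤ ((n + 1 - (a + 1) : ℕ) : ℝ) := by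
    rw [div_le_iff₀ (by norm_num)]
    have : n ≤ (n + 1 - (a + 1)) * 2 := by omega
    exact_mod_cast this
  nlinarith [sq_nonneg c]

lemma NullModel.abs_lin_le (hN : NullModel μ B δ₀ K c M n m f u X) {L : ℕ} {D : ℝ}
    {θ : Fin L → ℝ} (hθ : ∀ a, |θ a| ≤ D) (t : ℕ) (ω : Ω) :
    |∑ a : Fin L, θ a * resid n u X δ₀ (t - (a + 1)) ω| ≤ L * (D * K) := by
  refine (Finset.abs_sum_le_sum_abs _ _).trans ?_
  calc _ ≤ ∑ _a : Fin L, D * K := Finset.sum_le_sum fun a _ => by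
        rw [abs_mul]
        exact mul_le_mul (hθ a) (hN.resid_bdd hN.mem _ _) (abs_nonneg _)
          ((abs_nonneg _).trans (hθ a))
    _ = _ := by simp

/-- Central limit theorem for the vector of residual autocovariances at the true parameter, with a
rate that is uniform over all models with the same constants. -/
lemma NullModel.clt (hN : NullModel μ B δ₀ K c M n m f u X) (L : ℕ) {D : ℝ} (hD : 0 ≤ D)
    (hn : 1 ≤ n) (hnD : K * (L * (D * K)) ≤ √(n : ℝ)) {θ : Fin L → ℝ} (hθ : ∀ a, |θ a| ≤ D) :
    ‖∫ ω, Complex.exp ((∑ a : Fin L, θ a * lagCov n u X δ₀ (a + 1) ω : ℝ) * Complex.I) ∂μ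
        - Complex.exp (-((∑ a : Fin L, θ a ^ 2 * lagVar n m f u δ₀ (a + 1)) / 2 : ℝ))‖
      ≤ (4 * (K * (L * (D * K))) ^ 3 + Real.exp ((K * (L * (D * K))) ^ 2)
          * (√(2 * (2 * L + 1)) * (2 * (K * (L * (D * K))) ^ 2))) / √(n : ℝ) := by
  set k₀ : ℝ := K * (L * (D * K)) with hk₀
  have hK := hN.K_pos
  have hk₀0 : 0 ≤ k₀ := by positivity
  have hn' : (1 : ℝ) ≤ n := by exact_mod_cast hn
  set s : ℝ := √(n : ℝ) with hs
  have hs0 : 0 < s := Real.sqrt_pos.2 (by linarith)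
  have hs2 : s ^ 2 = n := Real.sq_sqrt (by linarith)
  set ξ := resid n u X δ₀ with hξ
  set G : ℕ → Ω → ℝ := fun t ω => ∑ a : Fin L, θ a * ξ (t - (a + 1)) ω with hG
  set e : ℕ → Ω → ℝ := fun t ω => ξ t ω * G t ω with he
  have hGm : ∀ t, Measurable[sigmaOf X (Set.Iio t)] (G t) := fun t =>
    Finset.measurable_fun_sum _ fun a _ => (measurable_resid_lag δ₀ t _ (by omega)).const_mul _
  have hGb : ∀ t ω, |G t ω| ≤ L * (D * K) := fun t ω => hN.abs_lin_le hθ t ω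
  have heb : ∀ t ω, |e t ω| ≤ k₀ := fun t ω => by
    simp only [he]
    rw [abs_mul]
    exact mul_le_mul (hN.resid_bdd hN.mem t ω) (hGb t ω) (abs_nonneg _) hK.le
  have hmart : MartDiff μ X e := by
    have := martDiff_mul (μ := μ) hN.meas hN.indep
      (fun t => if t ∈ Finset.Icc 1 n then u t δ₀ else 0) G
      (fun t => by
        have := hN.integral_resid t
        rwa [resid_eq] at this)
      (fun t => ⟨K, fun ω => by
        have := hN.resid_bdd hN.mem t ω
        rwa [resid_eq] at this⟩) hGm (fun t => ⟨_, hGb t⟩)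
    convert this using 4 with t ω
    rw [hξ, resid_eq]
  set d : ℕ → Ω → ℝ := fun t ω => s⁻¹ * e t ω with hd
  have hdm : MartDiff μ X d := hmart.const_mul _
  have hdb : ∀ t ω, |d t ω| ≤ k₀ / s := fun t ω => by
    simp only [hd]
    rw [abs_mul, abs_of_pos (inv_pos.2 hs0), inv_mul_eq_div]
    exact div_le_div_of_nonneg_right (heb t ω) hs0.le
  set v : ℝ := ∑ a : Fin L, θ a ^ 2 * lagVar n m f u δ₀ (a + 1) with hv
  have hv0 : 0 ≤ v := Finset.sum_nonneg fun a _ => mul_nonneg (sq_nonneg _) (hN.lagVar_nonneg _ _)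
  have hmain := hdm.charFun_bound hN.meas ((div_le_one hs0).2 hnD) hdb (n + 1) hv0
  have hsum : ∀ ω, ∑ t ∈ range (n + 1), d t ω
      = ∑ a : Fin L, θ a * lagCov n u X δ₀ (a + 1) ω := by
    intro ω
    simp only [hd, he, hG, lagCov, ← Finset.mul_sum]
    simp only [Finset.mul_sum]
    rw [Finset.sum_comm]
    refine Finset.sum_congr rfl fun a _ => Finset.sum_congr rfl fun t _ => ?_
    ring
  simp only [hsum] at hmain
  refine hmain.trans ?_
  -- the mean of the squared differences
  have hζm : ∀ t, Measurable[sigmaOf X (Set.Icc (t - L) t)] (fun ω => e t ω ^ 2) := fun t => by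
    refine Measurable.pow_const (Measurable.mul (measurable_resid δ₀ ?_)
      (Finset.measurable_fun_sum _ fun a _ => (measurable_resid δ₀ ?_).const_mul _)) 2
    · exact ⟨by omega, le_rfl⟩
    · have := a.2
      exact ⟨by omega, by omega⟩
  have hζb : ∀ t ω, |e t ω ^ 2| ≤ k₀ ^ 2 := fun t ω => by
    rw [abs_pow]; exact pow_le_pow_left₀ (abs_nonneg _) (heb t ω) 2
  have hζE : ∀ t, ∫ ω, e t ω ^ 2 ∂μ
      = ∑ a : Fin L, θ a ^ 2 * (residVar n m f u δ₀ t * residVar n m f u δ₀ (t - (a + 1))) := by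
    intro t
    have e1 : ∀ ω, e t ω ^ 2 = ∑ a : Fin L, ∑ b : Fin L,
        (θ a * θ b) * (ξ t ω ^ 2 * ξ (t - (a + 1)) ω * ξ (t - (b + 1)) ω) := by
      intro ω
      simp only [he]
      rw [mul_pow, sq (G t ω)]
      simp only [hG]
      rw [Finset.sum_mul_sum, Finset.mul_sum]
      refine Finset.sum_congr rfl fun a _ => ?_
      rw [Finset.mul_sum]
      refine Finset.sum_congr rfl fun b _ => ?_
      ring
    have hm' : ∀ i, Measurable (ξ i) := fun i =>
      (measurable_resid (S := Set.univ) δ₀ (Set.mem_univ i)).mono (sigmaOf_le hN.meas _) le_rfl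
    have hInt : ∀ a b : Fin L, Integrable (fun ω =>
        (θ a * θ b) * (ξ t ω ^ 2 * ξ (t - (a + 1)) ω * ξ (t - (b + 1)) ω)) μ := by
      intro a b
      refine Integrable.const_mul (integrable_of_bdd ((((hm' _).pow_const 2).mul (hm' _)).mul
        (hm' _)) ⟨K ^ 2 * K * K, fun ω => ?_⟩) _
      show ‖ξ t ω ^ 2 * ξ (t - (a + 1)) ω * ξ (t - (b + 1)) ω‖ ≤ _
      rw [norm_mul, norm_mul, norm_pow]
      have hb := fun i => hN.resid_bdd hN.mem i ω
      gcongr <;> exact hb _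
    simp only [e1]
    rw [integral_finsetSum _ fun a _ => integrable_finsetSum _ fun b _ => hInt a b]
    refine Finset.sum_congr rfl fun a _ => ?_
    rw [integral_finsetSum _ fun b _ => hInt a b]
    rw [Finset.sum_eq_single a]
    · rw [integral_const_mul, hξ, hN.integral_four (by omega) (by omega), if_pos rfl, sq]
    · intro b _ hba
      rw [integral_const_mul, hξ, hN.integral_four (by omega) (by omega), if_neg, mul_zero]
      intro h
      exact hba (Fin.ext (by omega))
    · simp
  have hvE : (n : ℝ) * v = ∑ t ∈ range (n + 1), ∫ ω, e t ω ^ 2 ∂μ := by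
    simp only [hζE]
    rw [Finset.sum_comm, hv, Finset.mul_sum]
    refine Finset.sum_congr rfl fun a _ => ?_
    rw [← Finset.mul_sum, lagVar]
    have : (n : ℝ) ≠ 0 := by positivity
    field_simp
  have hwin := window_variance (μ := μ) hN.meas hN.indep L (fun t ω => e t ω ^ 2) hζm hζb (n + 1)
  have hem : ∀ t, Measurable (e t) := hmart.meas hN.meas
  set W : Ω → ℝ := fun ω => ∑ t ∈ range (n + 1), (e t ω ^ 2 - ∫ ω', e t ω' ^ 2 ∂μ) with hW
  have hWm : Measurable W := Finset.measurable_fun_sum _ fun t _ => ((hem t).pow_const 2).sub_const _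
  have hWb : ∃ C, ∀ ω, ‖W ω‖ ≤ C := by
    refine ⟨∑ t ∈ range (n + 1), (k₀ ^ 2 + |∫ ω', e t ω' ^ 2 ∂μ|), fun ω => ?_⟩
    refine (Finset.abs_sum_le_sum_abs _ _).trans (Finset.sum_le_sum fun t _ => ?_)
    exact (abs_sub _ _).trans (by linarith [hζb t ω])
  have hdW : ∀ ω, ∑ t ∈ range (n + 1), d t ω ^ 2 - v = (n : ℝ)⁻¹ * W ω := by
    intro ω
    have hn0 : (n : ℝ) ≠ 0 := by positivity
    simp only [hW]
    rw [Finset.sum_sub_distrib, ← hvE, mul_sub, inv_mul_cancel_left₀ hn0, Finset.mul_sum]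
    congr 1
    refine Finset.sum_congr rfl fun t _ => ?_
    simp only [hd]
    rw [mul_pow, inv_pow, hs2]
  have hL1 : ∫ ω, |∑ t ∈ range (n + 1), d t ω ^ 2 - v| ∂μ
      ≤ √(2 * (2 * L + 1)) * (2 * k₀ ^ 2) / s := by
    have h1 : ∫ ω, |∑ t ∈ range (n + 1), d t ω ^ 2 - v| ∂μ = (n : ℝ)⁻¹ * ∫ ω, |W ω| ∂μ := by
      simp only [hdW, abs_mul]
      rw [integral_const_mul, abs_of_nonneg (by positivity)]
    have hWi : Integrable W μ := integrable_of_bdd hWm hWb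
    -- the first absolute moment is at most the square root of the second moment
    have h2 : (∫ ω, |W ω| ∂μ) ^ 2 ≤ ∫ ω, W ω ^ 2 ∂μ := by
      have hL2 : MemLp (fun ω => |W ω|) 2 μ := by
        obtain ⟨C, hC⟩ := hWb
        exact MemLp.of_bound hWm.abs.aestronglyMeasurable C
          (Eventually.of_forall fun ω => by simpa using hC ω)
      have := variance_nonneg (fun ω => |W ω|) μ
      rw [variance_eq_sub hL2] at this
      simp only [Pi.pow_apply, sq_abs] at this
      linarith
    have h3 : (∫ ω, |W ω| ∂μ) ^ 2 ≤ (s * (√(2 * (2 * L + 1)) * (2 * k₀ ^ 2))) ^ 2 := by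
      refine h2.trans (hwin.trans ?_)
      have e3 : (s * (√(2 * (2 * L + 1)) * (2 * k₀ ^ 2))) ^ 2
          = s ^ 2 * (√(2 * (2 * L + 1)) ^ 2 * (2 * k₀ ^ 2) ^ 2) := by ring
      rw [e3, hs2, Real.sq_sqrt (by positivity)]
      push_cast
      have : (0 : ℝ) ≤ (2 * L + 1) * (2 * k₀ ^ 2) ^ 2 := by positivity
      nlinarith
    have h4 := le_of_sq_le_sq h3 (by positivity)
    rw [h1, ← hs2]
    calc (s ^ 2)⁻¹ * ∫ ω, |W ω| ∂μ ≤ (s ^ 2)⁻¹ * (s * (√(2 * (2 * L + 1)) * (2 * k₀ ^ 2))) :=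
          mul_le_mul_of_nonneg_left h4 (by positivity)
      _ = _ := by field_simp
  have hcast : ((n + 1 : ℕ) : ℝ) ≤ 2 * s ^ 2 := by push_cast; linarith
  have hA : ((n + 1 : ℕ) : ℝ) * (2 * (k₀ / s) ^ 3) ≤ 4 * k₀ ^ 3 / s := by
    calc _ ≤ 2 * s ^ 2 * (2 * (k₀ / s) ^ 3) := mul_le_mul_of_nonneg_right hcast (by positivity)
      _ = _ := by field_simp; ring
  have hB : Real.exp (((n + 1 : ℕ) : ℝ) * (k₀ / s) ^ 2 / 2) ≤ Real.exp (k₀ ^ 2) := by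
    refine Real.exp_le_exp.2 ?_
    calc ((n + 1 : ℕ) : ℝ) * (k₀ / s) ^ 2 / 2 ≤ 2 * s ^ 2 * (k₀ / s) ^ 2 / 2 := by gcongr
      _ = _ := by field_simp
  rw [add_div]
  refine add_le_add hA ?_
  rw [mul_div_assoc (Real.exp (k₀ ^ 2))]
  exact mul_le_mul hB hL1 (integral_nonneg fun _ => abs_nonneg _) (Real.exp_pos _).le

end NullModel

/-! ### Stochastic equicontinuity -/

section Equicontinuity

set_option linter.unusedSectionVars false

variable {Ω : Type*} [MeasurableSpace Ω] {μ : Measure Ω} [IsProbabilityMeasure μ]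

/-- Stochastic equicontinuity at `δ₀` of normalised martingale sums whose differences are Lipschitz
in the parameter, uniformly in the sample size. -/
lemma martField_equicont (μ : Measure Ω) [IsProbabilityMeasure μ] {r : ℕ} (δ₀ : (Fin r → ℝ) × ℝ)
    {R k η : ℝ} (hR : 0 < R) (hR1 : R ≤ 1) (hk : 0 < k) (hη : 0 < η) :
    ∃ ε > 0, ε ≤ R ∧ ∀ (n : ℕ) (X : ℕ → Ω → ℕ) (d : (Fin r → ℝ) × ℝ → ℕ → Ω → ℝ), 1 ≤ n →
      (∀ t, Measurable (X t)) → (∀ δ ∈ Metric.closedBall δ₀ R, MartDiff μ X (d δ)) →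
      (∀ δ ∈ Metric.closedBall δ₀ R, ∀ δ' ∈ Metric.closedBall δ₀ R, ∀ t ω,
        |d δ t ω - d δ' t ω| ≤ k * dist δ δ') →
      μ.real {ω | ∃ δ, dist δ δ₀ ≤ ε ∧ η < |(√(n : ℝ))⁻¹ * ∑ t ∈ range (n + 1), d δ t ω
        - (√(n : ℝ))⁻¹ * ∑ t ∈ range (n + 1), d δ₀ t ω|} ≤ η := by
  obtain ⟨ε, hε, hεR, H⟩ := chaining μ δ₀ hR hR1 (K := 2 * k) (by positivity) hη
  refine ⟨ε, hε, hεR, fun n X d hn hX hd hlip => ?_⟩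
  have hn' : (1 : ℝ) ≤ n := by exact_mod_cast hn
  have hs0 : 0 < √(n : ℝ) := Real.sqrt_pos.2 (by linarith)
  have hs2 : √(n : ℝ) ^ 2 = n := Real.sq_sqrt (by linarith)
  refine H (fun δ ω => (√(n : ℝ))⁻¹ * ∑ t ∈ range (n + 1), d δ t ω) (fun ω => ?_) ?_
  · refine ContinuousOn.mul continuousOn_const (continuousOn_finsetSum _ fun t _ => ?_)
    have : LipschitzOnWith ⟨k, hk.le⟩ (fun δ => d δ t ω) (Metric.closedBall δ₀ R) :=
      LipschitzOnWith.of_dist_le_mul fun δ hδ δ' hδ' => hlip δ hδ δ' hδ' t ω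
    exact this.continuousOn
  · intro δ hδ δ' hδ' ρ q hρ hdist hq
    have hm := (hd δ hδ).sub hX (hd δ' hδ')
    have htail := hm.tail_le hX (k := k * ρ) (by positivity)
      (fun t ω => (hlip δ hδ δ' hδ' t ω).trans (mul_le_mul_of_nonneg_left hdist hk.le))
      (N := n + 1) (by omega) (q := √(n : ℝ) * q) (by positivity)
    have hset : {ω | q ≤ |(√(n : ℝ))⁻¹ * ∑ t ∈ range (n + 1), d δ t ω
        - (√(n : ℝ))⁻¹ * ∑ t ∈ range (n + 1), d δ' t ω|}
        = {ω | √(n : ℝ) * q ≤ |∑ t ∈ range (n + 1), (d δ t ω - d δ' t ω)|} := by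
      ext ω
      simp only [Set.mem_ofPred_eq]
      rw [← mul_sub, ← Finset.sum_sub_distrib, abs_mul, abs_of_pos (inv_pos.2 hs0),
        inv_mul_eq_div, le_div_iff₀ hs0, mul_comm q]
    rw [hset]
    refine htail.trans (mul_le_mul_of_nonneg_left (Real.exp_le_exp.2 (neg_le_neg ?_)) two_pos.le)
    rw [div_le_div_iff₀ (by positivity) (by positivity), mul_pow (√(n : ℝ)), hs2]
    push_cast
    have h1 : 0 ≤ q ^ 2 * (k * ρ) ^ 2 := by positivity
    nlinarith

lemma sum_shift_le (n a : ℕ) (v : ℕ → ℝ) (hv : ∀ t, 0 ≤ v t) (hv0 : v 0 = 0) :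
    ∑ t ∈ range (n + 1), v (t - a) ≤ ∑ t ∈ range (n + 1), v t := by
  calc ∑ t ∈ range (n + 1), v (t - a) ≤ ∑ t ∈ range (a + (n + 1)), v (t - a) :=
        Finset.sum_le_sum_of_subset_of_nonneg (Finset.range_mono (by omega)) fun _ _ _ => hv _
    _ = _ := by
      rw [Finset.sum_range_add, Finset.sum_eq_zero, zero_add]
      · simp
      · intro t ht
        rw [Nat.sub_eq_zero_of_le (Finset.mem_range.1 ht).le, hv0]

lemma sum_shift_eq (n a : ℕ) (g v : ℕ → ℝ) (hg : ∀ t, n < t → g t = 0) (hv0 : v 0 = 0) :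
    ∑ t ∈ range (n + 1), g t * v (t - a) = ∑ t ∈ range (n + 1), v t * g (t + a) := by
  have h1 : ∑ t ∈ range (n + 1 + a), g t * v (t - a)
      = ∑ t ∈ range (n + 1), g t * v (t - a) := by
    rw [Finset.sum_range_add, Finset.sum_eq_zero (s := range a), add_zero]
    intro t _
    rw [hg _ (by omega), zero_mul]
  rw [← h1, add_comm (n + 1) a, Finset.sum_range_add, Finset.sum_eq_zero (s := range a), zero_add]
  · refine Finset.sum_congr rfl fun t _ => ?_
    rw [add_comm a t, Nat.add_sub_cancel, mul_comm]
  · intro t ht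
    rw [Nat.sub_eq_zero_of_le (Finset.mem_range.1 ht).le, hv0, mul_zero]

/-- Pointwise form of the inequality between the Kullback–Leibler divergence and the squared
distance, for masses at most one. -/
lemma mul_log_sub_le {p q : ℝ} (hp : 0 < p) (hq : 0 < q) (hp1 : p ≤ 1) (hq1 : q ≤ 1) :
    q * (Real.log p - Real.log q) ≤ p - q - (p - q) ^ 2 / 4 := by
  obtain ⟨a, ha, rfl⟩ : ∃ a, 0 < a ∧ p = a ^ 2 :=
    ⟨√p, Real.sqrt_pos.2 hp, (Real.sq_sqrt hp.le).symm⟩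
  obtain ⟨b, hb, rfl⟩ : ∃ b, 0 < b ∧ q = b ^ 2 :=
    ⟨√q, Real.sqrt_pos.2 hq, (Real.sq_sqrt hq.le).symm⟩
  have ha1 : a ≤ 1 := by nlinarith
  have hb1 : b ≤ 1 := by nlinarith
  have h1 := Real.log_le_sub_one_of_pos (div_pos ha hb)
  rw [Real.log_div ha.ne' hb.ne'] at h1
  rw [Real.log_pow, Real.log_pow]
  push_cast
  have h2 : b ^ 2 * (2 * Real.log a - 2 * Real.log b) ≤ 2 * a * b - 2 * b ^ 2 := by
    have : b ^ 2 * (2 * (a / b - 1)) = 2 * a * b - 2 * b ^ 2 := by field_simp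
    rw [← this]
    exact mul_le_mul_of_nonneg_left (by linarith) (by positivity)
  have h3 : (a ^ 2 - b ^ 2) ^ 2 / 4 ≤ (a - b) ^ 2 := by
    have e : (a ^ 2 - b ^ 2) ^ 2 / 4 = (a - b) ^ 2 * ((a + b) ^ 2 / 4) := by ring
    rw [e]
    exact mul_le_of_le_one_right (sq_nonneg _) (by nlinarith)
  nlinarith

section General

variable {P : Type*} [PseudoMetricSpace P] {B : Set P} {δ₀ : P} {K c : ℝ} {M n : ℕ} {m : ℕ → ℕ}
  {f u : ℕ → P → ℕ → ℝ} {X : ℕ → Ω → ℕ}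

/-- The mean under `δ₀` of a statistic `v t δ` of observation `t`, zero outside `{1, …, n}`. -/
def meanAt (n : ℕ) (m : ℕ → ℕ) (f : ℕ → P → ℕ → ℝ) (δ₀ : P) (v : ℕ → P → ℕ → ℝ) (δ : P)
    (t : ℕ) : ℝ :=
  zeroExt n (fun t => ∑ y ∈ range (m t + 1), f t δ₀ y * v t δ y) t

lemma NullModel.abs_avg_le (hN : NullModel μ B δ₀ K c M n m f u X) {t : ℕ}
    (ht : t ∈ Finset.Icc 1 n) {v : ℕ → ℝ} {C : ℝ} (hv : ∀ y ≤ m t, |v y| ≤ C) :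
    |∑ y ∈ range (m t + 1), f t δ₀ y * v y| ≤ C := by
  calc _ ≤ ∑ y ∈ range (m t + 1), f t δ₀ y * C := by
        refine (Finset.abs_sum_le_sum_abs _ _).trans (Finset.sum_le_sum fun y hy => ?_)
        have hy' := Nat.lt_succ_iff.1 (Finset.mem_range.1 hy)
        rw [abs_mul, abs_of_pos ((hN.reg t ht).f_pos δ₀ y hy')]
        exact mul_le_mul_of_nonneg_left (hv y hy') ((hN.reg t ht).f_pos δ₀ y hy').le
    _ = C := by rw [← Finset.sum_mul, (hN.reg t ht).sum_f, one_mul]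

lemma NullModel.meanAt_bdd (hN : NullModel μ B δ₀ K c M n m f u X) {v : ℕ → P → ℕ → ℝ} {δ : P}
    {C : ℝ} (hC : 0 ≤ C) (hv : ∀ t ∈ Finset.Icc 1 n, ∀ y ≤ m t, |v t δ y| ≤ C) (t : ℕ) :
    |meanAt n m f δ₀ v δ t| ≤ C := by
  unfold meanAt zeroExt
  split_ifs with ht
  · exact hN.abs_avg_le ht (hv t ht)
  · simpa using hC

lemma NullModel.meanAt_lip (hN : NullModel μ B δ₀ K c M n m f u X) {v : ℕ → P → ℕ → ℝ} {δ δ' : P}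
    {C : ℝ} (hC : 0 ≤ C) (hv : ∀ t ∈ Finset.Icc 1 n, ∀ y ≤ m t, |v t δ y - v t δ' y| ≤ C)
    (t : ℕ) : |meanAt n m f δ₀ v δ t - meanAt n m f δ₀ v δ' t| ≤ C := by
  unfold meanAt zeroExt
  split_ifs with ht
  · rw [← Finset.sum_sub_distrib]
    simp only [← mul_sub]
    exact hN.abs_avg_le ht (hv t ht)
  · simpa using hC

/-- A statistic centred at its mean under `δ₀`, multiplied by a bounded function of the past, is a
martingale difference. -/
lemma NullModel.martDiff_centred (hN : NullModel μ B δ₀ K c M n m f u X) {v : ℕ → P → ℕ → ℝ}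
    {δ : P} {C : ℝ} (hC : 0 ≤ C) (hv : ∀ t ∈ Finset.Icc 1 n, ∀ y ≤ m t, |v t δ y| ≤ C)
    (G : ℕ → Ω → ℝ) (hG : ∀ t, Measurable[sigmaOf X (Set.Iio t)] (G t))
    (hGb : ∀ t, ∃ C, ∀ ω, |G t ω| ≤ C) :
    MartDiff μ X (fun t ω => (resid n v X δ t ω - meanAt n m f δ₀ v δ t) * G t ω) := by
  have hrb : ∀ t ω, |resid n v X δ t ω| ≤ C := fun t ω => by
    unfold resid zeroExt
    split_ifs with ht
    · exact hv t ht _ (hN.le t ω)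
    · simpa using hC
  have key := martDiff_mul (μ := μ) hN.meas hN.indep
    (fun t y => (if t ∈ Finset.Icc 1 n then v t δ else 0) y - meanAt n m f δ₀ v δ t) G
    (fun t => ?_) (fun t => ⟨C + C, fun ω => ?_⟩) hG hGb
  · convert key using 4 with t ω
    rw [resid_eq]
  · have hm : Measurable (resid n v X δ t) :=
      (measurable_resid (S := Set.univ) δ (Set.mem_univ t)).mono (sigmaOf_le hN.meas _) le_rfl
    have hi : Integrable (resid n v X δ t) μ := integrable_of_bdd hm ⟨C, hrb t⟩
    have h1 : ∫ ω, (resid n v X δ t ω - meanAt n m f δ₀ v δ t) ∂μ = 0 := by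
      rw [integral_sub hi (integrable_const _), integral_const, probReal_univ, one_smul]
      unfold resid meanAt zeroExt
      split_ifs with ht
      · rw [hN.law t ht, sub_self]
      · simp
    rw [resid_eq] at h1
    exact h1
  · have h1 := hrb t ω
    rw [resid_eq] at h1
    exact (abs_sub _ _).trans (add_le_add h1 (hN.meanAt_bdd hC hv t))

/-- The martingale difference carrying the fluctuation of the lag-`a` autocovariance. The mean at
`t + a` comes from shifting in time the cross term in which the mean at `t` multiplies the centred
residual at `t - a`, so that each centred residual is multiplied by a function of the past. -/
def covDiff (n : ℕ) (m : ℕ → ℕ) (f u : ℕ → P → ℕ → ℝ) (X : ℕ → Ω → ℕ) (δ₀ : P) (a : ℕ) (δ : P)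
    (t : ℕ) (ω : Ω) : ℝ :=
  (resid n u X δ t ω - meanAt n m f δ₀ u δ t)
    * (resid n u X δ (t - a) ω + meanAt n m f δ₀ u δ (t + a))

/-- The martingale difference carrying the fluctuation of the log-likelihood. -/
def logDiff (n : ℕ) (m : ℕ → ℕ) (f : ℕ → P → ℕ → ℝ) (X : ℕ → Ω → ℕ) (δ₀ : P) (δ : P)
    (t : ℕ) (ω : Ω) : ℝ :=
  (resid n (fun t δ y => Real.log (f t δ y)) X δ t ω
    - meanAt n m f δ₀ (fun t δ y => Real.log (f t δ y)) δ t) * 1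

/-- Sums of lagged products of residuals are a martingale plus a sum of lagged products of means. -/
lemma sum_lag_decomp (n : ℕ) (m : ℕ → ℕ) (f u : ℕ → P → ℕ → ℝ) (X : ℕ → Ω → ℕ) (δ₀ : P) (a : ℕ)
    (δ : P) (ω : Ω) :
    ∑ t ∈ range (n + 1), resid n u X δ t ω * resid n u X δ (t - a) ω
      = ∑ t ∈ range (n + 1), covDiff n m f u X δ₀ a δ t ω
        + ∑ t ∈ range (n + 1), meanAt n m f δ₀ u δ t * meanAt n m f δ₀ u δ (t - a) := by
  have h := sum_shift_eq n a (fun t => meanAt n m f δ₀ u δ t)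
    (fun t => resid n u X δ t ω - meanAt n m f δ₀ u δ t)
    (fun t ht => zeroExt_not_mem _ (by rw [Finset.mem_Icc]; omega))
    (by simp [resid, meanAt, zeroExt_zero])
  have e1 : ∑ t ∈ range (n + 1), covDiff n m f u X δ₀ a δ t ω
      = ∑ t ∈ range (n + 1), (resid n u X δ t ω - meanAt n m f δ₀ u δ t) * resid n u X δ (t - a) ω
        + ∑ t ∈ range (n + 1), (resid n u X δ t ω - meanAt n m f δ₀ u δ t)
            * meanAt n m f δ₀ u δ (t + a) := by
    rw [← Finset.sum_add_distrib]
    exact Finset.sum_congr rfl fun t _ => by unfold covDiff; ring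
  rw [e1, ← h, ← Finset.sum_add_distrib, ← Finset.sum_add_distrib]
  exact Finset.sum_congr rfl fun t _ => by ring

lemma abs_mul_sub_mul_le {a b a' b' A B : ℝ} {e : ℝ} (ha : |a - a'| ≤ e) (hb : |b - b'| ≤ e)
    (hB : |b| ≤ B) (hA : |a'| ≤ A) : |a * b - a' * b'| ≤ (A + B) * e := by
  have e1 : a * b - a' * b' = (a - a') * b + a' * (b - b') := by ring
  have he : 0 ≤ e := (abs_nonneg _).trans ha
  rw [e1]
  refine (abs_add_le _ _).trans ?_
  rw [abs_mul, abs_mul]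
  have h1 := mul_le_mul ha hB (abs_nonneg _) he
  have h2 := mul_le_mul hA hb (abs_nonneg _) ((abs_nonneg _).trans hA)
  linarith

lemma NullModel.resid_lip (hN : NullModel μ B δ₀ K c M n m f u X) {v : ℕ → P → ℕ → ℝ} {δ δ' : P}
    {C : ℝ} (hC : 0 ≤ C) (hv : ∀ t ∈ Finset.Icc 1 n, ∀ y ≤ m t, |v t δ y - v t δ' y| ≤ C)
    (t : ℕ) (ω : Ω) : |resid n v X δ t ω - resid n v X δ' t ω| ≤ C := by
  unfold resid zeroExt
  split_ifs with ht
  · exact hv t ht _ (hN.le t ω)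
  · simpa using hC

lemma NullModel.covDiff_martDiff (hN : NullModel μ B δ₀ K c M n m f u X) {a : ℕ} (ha : 1 ≤ a)
    {δ : P} (hδ : δ ∈ B) : MartDiff μ X (covDiff n m f u X δ₀ a δ) := by
  have hv : ∀ t ∈ Finset.Icc 1 n, ∀ y ≤ m t, |u t δ y| ≤ K := fun t ht => (hN.reg t ht).u_bdd δ hδ
  refine hN.martDiff_centred hN.K_pos.le hv _ (fun t => ?_) fun t => ⟨K + K, fun ω => ?_⟩
  · exact (measurable_resid_lag δ t a ha).add_const _
  · exact (abs_add_le _ _).trans (add_le_add (hN.resid_bdd hδ _ _)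
      (hN.meanAt_bdd hN.K_pos.le hv _))

lemma NullModel.covDiff_lip (hN : NullModel μ B δ₀ K c M n m f u X) (a : ℕ) {δ δ' : P}
    (hδ : δ ∈ B) (hδ' : δ' ∈ B) (t : ℕ) (ω : Ω) :
    |covDiff n m f u X δ₀ a δ t ω - covDiff n m f u X δ₀ a δ' t ω| ≤ 8 * K ^ 2 * dist δ δ' := by
  have hK := hN.K_pos
  have hv : ∀ δ ∈ B, ∀ t ∈ Finset.Icc 1 n, ∀ y ≤ m t, |u t δ y| ≤ K :=
    fun δ hδ t ht => (hN.reg t ht).u_bdd δ hδ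
  have hl : ∀ t ∈ Finset.Icc 1 n, ∀ y ≤ m t, |u t δ y - u t δ' y| ≤ K * dist δ δ' :=
    fun t ht => (hN.reg t ht).u_lip δ hδ δ' hδ'
  have hC : 0 ≤ K * dist δ δ' := by positivity
  have r1 := fun t => hN.resid_lip hC hl t ω
  have g1 := fun t => hN.meanAt_lip hC hl t
  have r2 := fun t => hN.resid_bdd hδ t ω
  have r2' := fun t => hN.resid_bdd hδ' t ω
  have g2 := fun t => hN.meanAt_bdd hK.le (hv δ hδ) t
  have g2' := fun t => hN.meanAt_bdd hK.le (hv δ' hδ') t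
  unfold covDiff
  have := abs_mul_sub_mul_le (e := 2 * (K * dist δ δ')) (A := 2 * K) (B := 2 * K)
    (a := resid n u X δ t ω - meanAt n m f δ₀ u δ t)
    (a' := resid n u X δ' t ω - meanAt n m f δ₀ u δ' t)
    (b := resid n u X δ (t - a) ω + meanAt n m f δ₀ u δ (t + a))
    (b' := resid n u X δ' (t - a) ω + meanAt n m f δ₀ u δ' (t + a)) ?_ ?_ ?_ ?_
  · refine this.trans (le_of_eq ?_); ring
  · have := abs_le.1 (r1 t); have := abs_le.1 (g1 t)
    rw [abs_le]; constructor <;> linarith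
  · have := abs_le.1 (r1 (t - a)); have := abs_le.1 (g1 (t + a))
    rw [abs_le]; constructor <;> linarith
  · have := abs_le.1 (r2 (t - a)); have := abs_le.1 (g2 (t + a))
    rw [abs_le]; constructor <;> linarith
  · have := abs_le.1 (r2' t); have := abs_le.1 (g2' t)
    rw [abs_le]; constructor <;> linarith

lemma NullModel.logDiff_martDiff (hN : NullModel μ B δ₀ K c M n m f u X)
    {δ : P} (hδ : δ ∈ B) : MartDiff μ X (logDiff n m f X δ₀ δ) :=
  hN.martDiff_centred hN.K_pos.le (fun t ht => (hN.reg t ht).log_bdd δ hδ) (fun _ _ => 1)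
    (fun _ => measurable_const) fun _ => ⟨1, fun _ => by simp⟩

lemma NullModel.logDiff_lip (hN : NullModel μ B δ₀ K c M n m f u X) {δ δ' : P}
    (hδ : δ ∈ B) (hδ' : δ' ∈ B) (t : ℕ) (ω : Ω) :
    |logDiff n m f X δ₀ δ t ω - logDiff n m f X δ₀ δ' t ω| ≤ 2 * K * dist δ δ' := by
  have hK := hN.K_pos
  have hC : 0 ≤ K * dist δ δ' := by positivity
  have hl : ∀ t ∈ Finset.Icc 1 n, ∀ y ≤ m t,
      |Real.log (f t δ y) - Real.log (f t δ' y)| ≤ K * dist δ δ' :=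
    fun t ht => (hN.reg t ht).log_lip δ hδ δ' hδ'
  have r1 := abs_le.1 (hN.resid_lip (v := fun t δ y => Real.log (f t δ y)) hC hl t ω)
  have g1 := abs_le.1 (hN.meanAt_lip (v := fun t δ y => Real.log (f t δ y)) hC hl t)
  unfold logDiff
  rw [abs_le]; constructor <;> linarith

/-- The squared bias `meanAt u δ` of the residuals is controlled by the squared distance between
the laws at `δ` and `δ₀`. -/
lemma NullModel.meanAt_sq_le (hN : NullModel μ B δ₀ K c M n m f u X) {δ : P} (hδ : δ ∈ B)
    {t : ℕ} (ht : t ∈ Finset.Icc 1 n) :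
    meanAt n m f δ₀ u δ t ^ 2
      ≤ K ^ 2 * (M + 1) * ∑ y ∈ range (m t + 1), (f t δ y - f t δ₀ y) ^ 2 := by
  have e1 : meanAt n m f δ₀ u δ t = ∑ y ∈ range (m t + 1), (f t δ₀ y - f t δ y) * u t δ y := by
    unfold meanAt
    rw [zeroExt_mem _ ht]
    simp only [sub_mul, Finset.sum_sub_distrib, (hN.reg t ht).sum_fu, sub_zero]
  rw [e1]
  refine (Finset.sum_mul_sq_le_sq_mul_sq _ _ _).trans ?_
  have h1 : ∑ y ∈ range (m t + 1), u t δ y ^ 2 ≤ K ^ 2 * (M + 1) := by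
    calc _ ≤ ∑ _y ∈ range (m t + 1), K ^ 2 := Finset.sum_le_sum fun y hy => by
          rw [← sq_abs]
          exact pow_le_pow_left₀ (abs_nonneg _) ((hN.reg t ht).u_bdd δ hδ y
            (Nat.lt_succ_iff.1 (Finset.mem_range.1 hy))) 2
      _ = K ^ 2 * ((m t : ℝ) + 1) := by
        rw [Finset.sum_const, Finset.card_range, nsmul_eq_mul]; push_cast; ring
      _ ≤ _ := by
        have : (m t : ℝ) ≤ M := by exact_mod_cast hN.m_le t
        gcongr
  rw [mul_comm]
  have h2 : ∑ y ∈ range (m t + 1), (f t δ₀ y - f t δ y) ^ 2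
      = ∑ y ∈ range (m t + 1), (f t δ y - f t δ₀ y) ^ 2 :=
    Finset.sum_congr rfl fun y _ => by ring
  rw [h2]
  exact mul_le_mul_of_nonneg_right h1 (Finset.sum_nonneg fun _ _ => sq_nonneg _)

/-- The basic inequality of maximum likelihood: if `δ` has at least the likelihood of `δ₀`, the
total squared distance between the laws is controlled by the log-likelihood fluctuation. -/
lemma NullModel.basic_ineq (hN : NullModel μ B δ₀ K c M n m f u X) {δ : P} {ω : Ω}
    (hml : ∑ t ∈ Finset.Icc 1 n, Real.log (f t δ₀ (X t ω))
      ≤ ∑ t ∈ Finset.Icc 1 n, Real.log (f t δ (X t ω))) :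
    ∑ t ∈ Finset.Icc 1 n, ∑ y ∈ range (m t + 1), (f t δ y - f t δ₀ y) ^ 2
      ≤ 4 * (∑ t ∈ range (n + 1), logDiff n m f X δ₀ δ t ω
        - ∑ t ∈ range (n + 1), logDiff n m f X δ₀ δ₀ t ω) := by
  have hsub : ∀ δ, ∑ t ∈ range (n + 1), logDiff n m f X δ₀ δ t ω
      = ∑ t ∈ Finset.Icc 1 n, (Real.log (f t δ (X t ω))
        - ∑ y ∈ range (m t + 1), f t δ₀ y * Real.log (f t δ y)) := by
    intro δ
    refine (Finset.sum_subset (fun t ht => ?_) fun t _ ht' => ?_).symm.trans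
      (Finset.sum_congr rfl fun t ht => ?_)
    · rw [Finset.mem_Icc] at ht; rw [Finset.mem_range]; omega
    · unfold logDiff resid meanAt
      rw [zeroExt_not_mem _ ht', zeroExt_not_mem _ ht']; simp
    · unfold logDiff resid meanAt
      rw [zeroExt_mem _ ht, zeroExt_mem _ ht, mul_one]
  have hkl : ∀ t ∈ Finset.Icc 1 n, ∑ y ∈ range (m t + 1), (f t δ y - f t δ₀ y) ^ 2
      ≤ 4 * (∑ y ∈ range (m t + 1), f t δ₀ y * Real.log (f t δ₀ y)
        - ∑ y ∈ range (m t + 1), f t δ₀ y * Real.log (f t δ y)) := by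
    intro t ht
    have hr := hN.reg t ht
    have h1 : ∑ y ∈ range (m t + 1), f t δ₀ y * (Real.log (f t δ y) - Real.log (f t δ₀ y))
        ≤ ∑ y ∈ range (m t + 1), (f t δ y - f t δ₀ y - (f t δ y - f t δ₀ y) ^ 2 / 4) :=
      Finset.sum_le_sum fun y hy => by
        have hy' := Nat.lt_succ_iff.1 (Finset.mem_range.1 hy)
        exact mul_log_sub_le (hr.f_pos _ _ hy') (hr.f_pos _ _ hy') (hr.f_le _ _ hy')
          (hr.f_le _ _ hy')
    rw [Finset.sum_sub_distrib, Finset.sum_sub_distrib, hr.sum_f, hr.sum_f, ← Finset.sum_div] at h1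
    simp only [mul_sub, Finset.sum_sub_distrib] at h1
    linarith
  refine (Finset.sum_le_sum hkl).trans ?_
  rw [← Finset.mul_sum, hsub δ, hsub δ₀]
  simp only [Finset.sum_sub_distrib]
  linarith

/-- The change of the autocovariance between `δ₀` and a parameter of higher likelihood, in terms of
the two martingale fields. -/
lemma NullModel.lagCov_sub_le (hN : NullModel μ B δ₀ K c M n m f u X) (a : ℕ) {δ : P} (hδ : δ ∈ B)
    {ω : Ω} (hml : ∑ t ∈ Finset.Icc 1 n, Real.log (f t δ₀ (X t ω))
      ≤ ∑ t ∈ Finset.Icc 1 n, Real.log (f t δ (X t ω))) :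
    |lagCov n u X δ a ω - lagCov n u X δ₀ a ω|
      ≤ |(√(n : ℝ))⁻¹ * ∑ t ∈ range (n + 1), covDiff n m f u X δ₀ a δ t ω
          - (√(n : ℝ))⁻¹ * ∑ t ∈ range (n + 1), covDiff n m f u X δ₀ a δ₀ t ω|
        + 4 * K ^ 2 * (M + 1) * |(√(n : ℝ))⁻¹ * ∑ t ∈ range (n + 1), logDiff n m f X δ₀ δ t ω
          - (√(n : ℝ))⁻¹ * ∑ t ∈ range (n + 1), logDiff n m f X δ₀ δ₀ t ω| := by
  have hs : 0 ≤ (√(n : ℝ))⁻¹ := by positivity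
  have h0 : ∀ t, meanAt n m f δ₀ u δ₀ t = 0 := fun t => by
    unfold meanAt zeroExt
    split_ifs with ht
    · exact (hN.reg t ht).sum_fu δ₀
    · rfl
  set b : ℕ → ℝ := meanAt n m f δ₀ u δ with hb
  have hb2 : ∑ t ∈ range (n + 1), b t ^ 2
      ≤ K ^ 2 * (M + 1) * (4 * (∑ t ∈ range (n + 1), logDiff n m f X δ₀ δ t ω
        - ∑ t ∈ range (n + 1), logDiff n m f X δ₀ δ₀ t ω)) := by
    have e1 : ∑ t ∈ range (n + 1), b t ^ 2 = ∑ t ∈ Finset.Icc 1 n, b t ^ 2 := by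
      refine (Finset.sum_subset (fun t ht => ?_) fun t _ ht' => ?_).symm
      · rw [Finset.mem_Icc] at ht; rw [Finset.mem_range]; omega
      · rw [hb, meanAt, zeroExt_not_mem _ ht']; simp
    rw [e1]
    refine (Finset.sum_le_sum fun t ht => hN.meanAt_sq_le hδ ht).trans ?_
    rw [← Finset.mul_sum]
    exact mul_le_mul_of_nonneg_left (hN.basic_ineq hml) (by positivity)
  have hbb : |∑ t ∈ range (n + 1), b t * b (t - a)| ≤ ∑ t ∈ range (n + 1), b t ^ 2 := by
    have h1 := sum_shift_le n a (fun t => b t ^ 2) (fun t => sq_nonneg _)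
      (by simp [hb, meanAt, zeroExt_zero])
    calc _ ≤ ∑ t ∈ range (n + 1), (b t ^ 2 + b (t - a) ^ 2) / 2 := by
          refine (Finset.abs_sum_le_sum_abs _ _).trans (Finset.sum_le_sum fun t _ => ?_)
          rw [abs_mul, ← sq_abs (b t), ← sq_abs (b (t - a))]
          nlinarith [sq_nonneg (|b t| - |b (t - a)|)]
      _ ≤ _ := by
        rw [← Finset.sum_div, Finset.sum_add_distrib]
        linarith
  unfold lagCov
  rw [sum_lag_decomp n m f u X δ₀ a δ ω, sum_lag_decomp n m f u X δ₀ a δ₀ ω]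
  simp only [h0, mul_zero, Finset.sum_const_zero, add_zero]
  rw [mul_add, add_sub_right_comm]
  refine (abs_add_le _ _).trans (add_le_add le_rfl ?_)
  rw [← mul_sub, abs_mul, abs_mul, abs_of_nonneg hs]
  calc _ ≤ (√(n : ℝ))⁻¹ * (K ^ 2 * (M + 1) * (4 * (∑ t ∈ range (n + 1), logDiff n m f X δ₀ δ t ω
        - ∑ t ∈ range (n + 1), logDiff n m f X δ₀ δ₀ t ω))) :=
        mul_le_mul_of_nonneg_left (hbb.trans hb2) hs
    _ ≤ (√(n : ℝ))⁻¹ * (K ^ 2 * (M + 1) * (4 * |∑ t ∈ range (n + 1), logDiff n m f X δ₀ δ t ω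
        - ∑ t ∈ range (n + 1), logDiff n m f X δ₀ δ₀ t ω|)) := by
        gcongr; exact le_abs_self _
    _ = _ := by ring

end General

/-- Replacing `δ₀` by a nearby parameter of higher likelihood changes the autocovariances by little,
with high probability and uniformly in the sample size. -/
lemma NullModel.equicont (μ : Measure Ω) [IsProbabilityMeasure μ] {r : ℕ} (δ₀ : (Fin r → ℝ) × ℝ)
    {R K c η : ℝ} (M : ℕ) (hR : 0 < R) (hR1 : R ≤ 1) (hK : 0 < K) (hη : 0 < η) :
    ∃ ε > 0, ε ≤ R ∧ ∀ (n a : ℕ) (m : ℕ → ℕ) (f u : ℕ → (Fin r → ℝ) × ℝ → ℕ → ℝ)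
      (X : ℕ → Ω → ℕ), 1 ≤ n → 1 ≤ a →
      NullModel μ (Metric.closedBall δ₀ R) δ₀ K c M n m f u X →
      μ.real {ω | ∃ δ, dist δ δ₀ ≤ ε ∧
        ∑ t ∈ Finset.Icc 1 n, Real.log (f t δ₀ (X t ω))
          ≤ ∑ t ∈ Finset.Icc 1 n, Real.log (f t δ (X t ω)) ∧
        η < |lagCov n u X δ a ω - lagCov n u X δ₀ a ω|} ≤ η := by
  set Q : ℝ := 4 * K ^ 2 * (M + 1) with hQ
  have hQ0 : 0 < Q := by positivity
  set η' : ℝ := min (η / 2) (η / 2 / Q) with hη'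
  have hη'0 : 0 < η' := lt_min (by positivity) (by positivity)
  obtain ⟨ε₁, hε₁, hε₁R, H₁⟩ := martField_equicont μ δ₀ hR hR1 (k := 8 * K ^ 2) (by positivity)
    (half_pos hη)
  obtain ⟨ε₂, hε₂, hε₂R, H₂⟩ := martField_equicont μ δ₀ hR hR1 (k := 2 * K) (by positivity) hη'0
  refine ⟨min ε₁ ε₂, lt_min hε₁ hε₂, (min_le_left _ _).trans hε₁R,
    fun n a m f u X hn ha hN => ?_⟩
  have h1 := H₁ n X (covDiff n m f u X δ₀ a) hn hN.meas (fun δ hδ => hN.covDiff_martDiff ha hδ)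
    fun δ hδ δ' hδ' t ω => hN.covDiff_lip a hδ hδ' t ω
  have h2 := H₂ n X (logDiff n m f X δ₀) hn hN.meas (fun δ hδ => hN.logDiff_martDiff hδ)
    fun δ hδ δ' hδ' t ω => hN.logDiff_lip hδ hδ' t ω
  have h2' : η' ≤ η / 2 := min_le_left _ _
  have h3 : Q * η' ≤ η / 2 := by
    have := min_le_right (η / 2) (η / 2 / Q)
    rw [le_div_iff₀ hQ0] at this
    rw [mul_comm]; exact this
  refine (measureReal_mono ?_).trans ((measureReal_union_le _ _).trans
    ((add_le_add h1 (h2.trans h2')).trans (by linarith)))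
  rintro ω ⟨δ, hδ, hml, hgt⟩
  by_contra hcon
  simp only [Set.mem_union, Set.mem_ofPred_eq, not_or, not_exists, not_and, not_lt] at hcon
  have c1 := hcon.1 δ (hδ.trans (min_le_left _ _))
  have c2 := hcon.2 δ (hδ.trans (min_le_right _ _))
  have hδB : δ ∈ Metric.closedBall δ₀ R :=
    Metric.mem_closedBall.2 (hδ.trans ((min_le_left _ _).trans hε₁R))
  have := hN.lagCov_sub_le a hδB hml
  have := mul_le_mul_of_nonneg_left c2 hQ0.le
  linarith

end Equicontinuity

/-! ### Convergence in measure and lag variances -/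

section Limit

set_option linter.unusedSectionVars false

lemma tendstoInMeasure_pi {Ω ι : Type*} [MeasurableSpace Ω] {μ : Measure Ω} [IsProbabilityMeasure μ]
    [Fintype ι] {F : ℕ → Ω → ι → ℝ} {g : ι → ℝ}
    (hF : ∀ a, TendstoInMeasure μ (fun n ω => F n ω a) atTop fun _ => g a) :
    TendstoInMeasure μ F atTop fun _ => g := by
  rw [tendstoInMeasure_iff_measureReal_dist]
  intro ε hε
  have h := tendsto_finsetSum (univ : Finset ι) fun a _ =>
    tendstoInMeasure_iff_measureReal_dist.1 (hF a) ε hε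
  rw [Finset.sum_const_zero] at h
  refine squeeze_zero (fun n => measureReal_nonneg) (fun n => ?_) h
  refine (measureReal_mono (fun ω hω => ?_) (measure_ne_top _ _)).trans
    (measureReal_biUnion_finset_le univ fun a => {ω | ε ≤ dist (F n ω a) (g a)})
  rw [Set.mem_ofPred_eq] at hω
  by_contra hcon
  refine absurd hω (not_le.2 ((dist_pi_lt_iff hε).2 fun a => ?_))
  by_contra ha
  exact hcon (Set.mem_biUnion (Finset.mem_coe.2 (Finset.mem_univ a)) (not_lt.1 ha))

lemma tendstoInMeasure_prod {Ω E E' : Type*} [MeasurableSpace Ω] {μ : Measure Ω}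
    [IsProbabilityMeasure μ] [PseudoMetricSpace E] [PseudoMetricSpace E']
    {F : ℕ → Ω → E} {G : ℕ → Ω → E'} {g : E} {g' : E'}
    (hF : TendstoInMeasure μ F atTop fun _ => g) (hG : TendstoInMeasure μ G atTop fun _ => g') :
    TendstoInMeasure μ (fun n ω => (F n ω, G n ω)) atTop fun _ => (g, g') := by
  rw [tendstoInMeasure_iff_measureReal_dist] at *
  intro ε hε
  have h := (hF ε hε).add (hG ε hε)
  rw [add_zero] at h
  refine squeeze_zero (fun n => measureReal_nonneg) (fun n => ?_) h
  refine (measureReal_mono (fun ω hω => ?_)).trans (measureReal_union_le _ _)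
  rw [Set.mem_ofPred_eq, Prod.dist_eq, le_max_iff] at hω
  exact hω

variable {Ω : Type*} [MeasurableSpace Ω] {μ : Measure Ω} [IsProbabilityMeasure μ] {P : Type*}
  [PseudoMetricSpace P] {B : Set P} {δ₀ : P} {K c : ℝ} {M n : ℕ} {m : ℕ → ℕ}
  {f u : ℕ → P → ℕ → ℝ} {X : ℕ → Ω → ℕ}

lemma NullModel.residVar_lip (hN : NullModel μ B δ₀ K c M n m f u X) {δ δ' : P} (hδ : δ ∈ B)
    (hδ' : δ' ∈ B) (t : ℕ) :
    |residVar n m f u δ t - residVar n m f u δ' t|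
      ≤ (M + 1) * ((1 + K ^ 2) * ((K + 2 * K ^ 2) * dist δ δ')) := by
  have hK := hN.K_pos
  unfold residVar zeroExt
  split_ifs with ht
  · have hR := hN.reg t ht
    rw [← Finset.sum_sub_distrib]
    refine (Finset.abs_sum_le_sum_abs _ _).trans ?_
    have hterm : ∀ y ∈ range (m t + 1), |f t δ y * u t δ y ^ 2 - f t δ' y * u t δ' y ^ 2|
        ≤ (1 + K ^ 2) * ((K + 2 * K ^ 2) * dist δ δ') := by
      intro y hy
      have hy' : y ≤ m t := Nat.lt_succ_iff.1 (Finset.mem_range.1 hy)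
      have hd : 0 ≤ dist δ δ' := dist_nonneg
      have hu := hR.u_bdd δ hδ y hy'
      have hu' := hR.u_bdd δ' hδ' y hy'
      have hl := hR.u_lip δ hδ δ' hδ' y hy'
      refine abs_mul_sub_mul_le ((hR.f_lip δ hδ δ' hδ' y hy').trans ?_) ?_ ?_ ?_
      · nlinarith [mul_nonneg (sq_nonneg K) hd]
      · have := abs_mul_sub_mul_le hl hl hu hu'
        rw [sq, sq]
        refine this.trans ?_
        nlinarith [mul_nonneg hK.le hd]
      · rw [abs_pow]; exact pow_le_pow_left₀ (abs_nonneg _) hu 2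
      · rw [abs_of_pos (hR.f_pos δ' y hy')]; exact hR.f_le δ' y hy'
    refine (Finset.sum_le_sum hterm).trans ?_
    rw [Finset.sum_const, nsmul_eq_mul, Finset.card_range]
    have : ((m t + 1 : ℕ) : ℝ) ≤ M + 1 := by exact_mod_cast Nat.succ_le_succ (hN.m_le t)
    have h0 : 0 ≤ dist δ δ' := dist_nonneg
    gcongr
  · rw [sub_self, abs_zero]
    have h0 : 0 ≤ dist δ δ' := dist_nonneg
    positivity

lemma NullModel.lagVar_lip (hN : NullModel μ B δ₀ K c M n m f u X) (hn : 1 ≤ n) {δ δ' : P}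
    (hδ : δ ∈ B) (hδ' : δ' ∈ B) (a : ℕ) :
    |lagVar n m f u δ a - lagVar n m f u δ' a|
      ≤ 2 * ((K ^ 2 + K ^ 2) * ((M + 1) * ((1 + K ^ 2) * ((K + 2 * K ^ 2) * dist δ δ')))) := by
  have hK := hN.K_pos
  have hd : 0 ≤ dist δ δ' := dist_nonneg
  set e := (M + 1) * ((1 + K ^ 2) * ((K + 2 * K ^ 2) * dist δ δ')) with he
  have he0 : 0 ≤ e := by positivity
  have hn' : (1 : ℝ) ≤ n := by exact_mod_cast hn
  have habs : ∀ {δ : P}, δ ∈ B → ∀ t, |residVar n m f u δ t| ≤ K ^ 2 := fun h t => by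
    rw [abs_of_nonneg (hN.residVar_nonneg _ t)]; exact hN.residVar_le h t
  unfold lagVar
  rw [← mul_sub, ← Finset.sum_sub_distrib, abs_mul, abs_of_pos (by positivity)]
  have hs : |∑ t ∈ range (n + 1), (residVar n m f u δ t * residVar n m f u δ (t - a)
      - residVar n m f u δ' t * residVar n m f u δ' (t - a))| ≤ (n + 1) * ((K ^ 2 + K ^ 2) * e) := by
    refine (Finset.abs_sum_le_sum_abs _ _).trans ?_
    refine (Finset.sum_le_sum fun t _ => abs_mul_sub_mul_le (hN.residVar_lip hδ hδ' t)
      (hN.residVar_lip hδ hδ' (t - a)) (habs hδ _) (habs hδ' _)).trans ?_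
    rw [Finset.sum_const, nsmul_eq_mul, Finset.card_range]
    push_cast
    exact le_rfl
  rw [inv_mul_le_iff₀ (by linarith)]
  refine hs.trans ?_
  rw [show (n : ℝ) * (2 * ((K ^ 2 + K ^ 2) * e)) = (2 * n) * ((K ^ 2 + K ^ 2) * e) by ring]
  gcongr
  linarith

variable [MeasurableSpace P]

lemma measurable_lagCov_comp (hX : ∀ t, Measurable (X t)) (hle : ∀ t ω, X t ω ≤ m t)
    (hu : ∀ t y, y ≤ m t → Measurable fun δ => u t δ y) {d : Ω → P} (hd : Measurable d) (a : ℕ) :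
    Measurable fun ω => lagCov n u X (d ω) a ω := by
  have h1 : ∀ t, Measurable fun ω => resid n u X (d ω) t ω := by
    intro t
    unfold resid zeroExt
    split_ifs with ht
    · have h2 : Measurable fun p : P × ℕ => u t p.1 (min p.2 (m t)) :=
        measurable_from_prod_countable_left fun y => hu t _ (min_le_right _ _)
      have h3 := h2.comp (hd.prodMk (hX t))
      convert h3 using 2 with ω
      simp [min_eq_left (hle t ω)]
    · exact measurable_const
  unfold lagCov
  exact (Finset.measurable_sum _ fun t _ => (h1 t).mul (h1 _)).const_mul _

lemma measurable_lagVar (hf : ∀ t y, y ≤ m t → Measurable fun δ => f t δ y)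
    (hu : ∀ t y, y ≤ m t → Measurable fun δ => u t δ y) (a : ℕ) :
    Measurable fun δ => lagVar n m f u δ a := by
  have h1 : ∀ t, Measurable fun δ => residVar n m f u δ t := by
    intro t
    unfold residVar zeroExt
    split_ifs with ht
    · refine Finset.measurable_sum _ fun y hy => ?_
      have hy' : y ≤ m t := Nat.lt_succ_iff.1 (Finset.mem_range.1 hy)
      exact (hf t y hy').mul ((hu t y hy').pow_const 2)
    · exact measurable_const
  unfold lagVar
  exact (Finset.measurable_sum _ fun t _ => (h1 t).mul (h1 _)).const_mul _

end Limit

/-! ### Joint asymptotic normality -/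

section LimitTheorem

variable {Ω : Type*} [MeasurableSpace Ω] {μ : Measure Ω} [IsProbabilityMeasure μ] {P : Type*}
  [PseudoMetricSpace P] {B : Set P} {δ₀ : P} {K c : ℝ} {M : ℕ} {m : ℕ → ℕ}
  {f u : ℕ → ℕ → P → ℕ → ℝ} {X : ℕ → ℕ → Ω → ℕ}

lemma measurable_lagCov (hX : ∀ n t, Measurable (X n t)) (n a : ℕ) (δ : P) :
    Measurable fun ω => lagCov n (u n) (X n) δ a ω := by
  have h1 : ∀ t, Measurable fun ω => resid n (u n) (X n) δ t ω := fun t => by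
    have := resid_eq (n := n) (u := u n) (X := X n) δ t
    rw [this]
    exact (Measurable.of_discrete).comp (hX n t)
  unfold lagCov
  exact (Finset.measurable_sum _ fun t _ => (h1 t).mul (h1 _)).const_mul _

/-- Joint asymptotic normality of the standardised residual autocovariances at the true
parameter. -/
lemma tendsto_lagCov_gaussian
    (hN : ∀ n, NullModel μ B δ₀ K c M n m (f n) (u n) (X n)) (L : ℕ) :
    TendstoInDistribution
      (fun n ω => WithLp.toLp 2 fun a : Fin L =>
        lagCov n (u n) (X n) δ₀ (a + 1) ω / √(lagVar n m (f n) (u n) δ₀ (a + 1)))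
      atTop (WithLp.toLp 2) (fun _ => μ)
      (Measure.pi fun _ : Fin L => gaussianReal 0 1) := by
  have hmeas : ∀ n, Measurable fun ω => WithLp.toLp 2 fun a : Fin L =>
      lagCov n (u n) (X n) δ₀ (a + 1) ω / √(lagVar n m (f n) (u n) δ₀ (a + 1)) := fun n =>
    (WithLp.measurable_toLp 2 _).comp (measurable_pi_lambda _ fun a =>
      (measurable_lagCov (fun n => (hN n).meas) n (a + 1) δ₀).div_const _)
  refine ⟨fun n => (hmeas n).aemeasurable, (WithLp.measurable_toLp 2 _).aemeasurable, ?_⟩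
  refine ProbabilityMeasure.tendsto_of_tendsto_charFun fun lam => ?_
  simp only [ProbabilityMeasure.coe_mk]
  rw [map_pi_eq_stdGaussian, charFun_stdGaussian]
  have hK := (hN 0).K_pos
  have hc := (hN 0).c_pos
  set D : ℝ := ‖lam‖ / √(c ^ 2 / 2) with hD
  have hs0 : 0 < √(c ^ 2 / 2) := Real.sqrt_pos.2 (by positivity)
  have hD0 : 0 ≤ D := by positivity
  set E : ℝ := (4 * (K * (L * (D * K))) ^ 3 + Real.exp ((K * (L * (D * K))) ^ 2)
          * (√(2 * (2 * L + 1)) * (2 * (K * (L * (D * K))) ^ 2))) with hE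
  have hsq : Tendsto (fun n : ℕ => √(n : ℝ)) atTop atTop :=
    Real.tendsto_sqrt_atTop.comp tendsto_natCast_atTop_atTop
  rw [tendsto_iff_norm_sub_tendsto_zero]
  refine squeeze_zero' (Eventually.of_forall fun _ => norm_nonneg _) ?_
    (hsq.const_div_atTop E)
  filter_upwards [hsq.eventually_ge_atTop (K * (L * (D * K))), eventually_ge_atTop 1,
    eventually_ge_atTop (2 * L)] with n hnD hn hnL
  have hV : ∀ a : Fin L, c ^ 2 / 2 ≤ lagVar n m (f n) (u n) δ₀ (a + 1) := fun a =>
    (hN n).lagVar_lower (by omega) hn (hN n).mem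
  have hV0 : ∀ a : Fin L, 0 < lagVar n m (f n) (u n) δ₀ (a + 1) := fun a =>
    lt_of_lt_of_le (by positivity) (hV a)
  have hmain := (hN n).clt L hD0 hn hnD
    (θ := fun a => lam a / √(lagVar n m (f n) (u n) δ₀ (a + 1))) (fun a => by
      rw [abs_div, abs_of_nonneg (Real.sqrt_nonneg _)]
      refine div_le_div₀ (norm_nonneg _) ?_ hs0 (Real.sqrt_le_sqrt (hV a))
      exact PiLp.norm_apply_le lam a)
  refine le_of_eq_of_le (congrArg norm (congrArg₂ (· - ·) ?_ ?_)) hmain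
  · rw [charFun_apply, integral_map (hmeas n).aemeasurable (by fun_prop)]
    refine integral_congr_ae (Eventually.of_forall fun ω => ?_)
    simp only [PiLp.inner_apply]
    congr 2
    norm_cast
    refine Finset.sum_congr rfl fun a _ => ?_
    simp only [RCLike.inner_apply, conj_trivial]
    ring
  · have : ∀ a : Fin L, (lam a / √(lagVar n m (f n) (u n) δ₀ (a + 1))) ^ 2
        * lagVar n m (f n) (u n) δ₀ (a + 1) = ‖lam a‖ ^ 2 := fun a => by
      rw [div_pow, Real.sq_sqrt (hV0 a).le, div_mul_cancel₀ _ (hV0 a).ne', Real.norm_eq_abs, sq_abs]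
    simp only [this]
    rw [← EuclideanSpace.norm_sq_eq]
    push_cast
    ring_nf

end LimitTheorem

/-! ### The score statistic -/

section ScoreStatistic

variable {Ω : Type*} [MeasurableSpace Ω] {μ : Measure Ω} [IsProbabilityMeasure μ] {r : ℕ}
  {δ₀ : (Fin r → ℝ) × ℝ} {R K c : ℝ} {M : ℕ} {m : ℕ → ℕ}
  {f u : ℕ → ℕ → (Fin r → ℝ) × ℝ → ℕ → ℝ} {X : ℕ → ℕ → Ω → ℕ}
  {δhat : ℕ → Ω → (Fin r → ℝ) × ℝ}

/-- Plugging in a consistent estimator of at least the true likelihood does not change the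
autocovariances asymptotically. -/
lemma tendstoInMeasure_lagCov_sub (hR : 0 < R) (hR1 : R ≤ 1)
    (hN : ∀ n, NullModel μ (Metric.closedBall δ₀ R) δ₀ K c M n m (f n) (u n) (X n))
    (hmax : ∀ n, ∀ᵐ ω ∂μ, ∑ t ∈ Finset.Icc 1 n, Real.log (f n t δ₀ (X n t ω))
      ≤ ∑ t ∈ Finset.Icc 1 n, Real.log (f n t (δhat n ω) (X n t ω)))
    (hcons : TendstoInMeasure μ δhat atTop fun _ => δ₀) {a : ℕ} (ha : 1 ≤ a) :
    TendstoInMeasure μ (fun n ω => lagCov n (u n) (X n) (δhat n ω) a ω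
      - lagCov n (u n) (X n) δ₀ a ω) atTop fun _ => 0 := by
  rw [tendstoInMeasure_iff_measureReal_norm]
  intro ε hε
  rw [Metric.tendsto_nhds]
  intro η hη
  obtain ⟨ε₁, hε₁, -, H⟩ := NullModel.equicont (c := c) μ δ₀ M hR hR1 (hN 0).K_pos
    (lt_min (half_pos hε) (by positivity : 0 < η / 3))
  have h2 := tendstoInMeasure_iff_measureReal_dist.1 hcons ε₁ hε₁
  filter_upwards [h2.eventually_lt_const (by positivity : 0 < η / 3), eventually_ge_atTop 1]
    with n hn2 hn1
  have hA := H n a m (f n) (u n) (X n) hn1 ha (hN n)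
  rw [Real.dist_eq, sub_zero, abs_of_nonneg measureReal_nonneg]
  have h0 : μ.real {ω | ¬ ∑ t ∈ Finset.Icc 1 n, Real.log (f n t δ₀ (X n t ω))
      ≤ ∑ t ∈ Finset.Icc 1 n, Real.log (f n t (δhat n ω) (X n t ω))} = 0 := by
    rw [measureReal_def, (ae_iff.1 (hmax n)), ENNReal.toReal_zero]
  refine lt_of_le_of_lt ((measureReal_mono (s₂ := ({ω | ∃ δ, dist δ δ₀ ≤ ε₁ ∧
        ∑ t ∈ Finset.Icc 1 n, Real.log (f n t δ₀ (X n t ω))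
          ≤ ∑ t ∈ Finset.Icc 1 n, Real.log (f n t δ (X n t ω)) ∧
        min (ε / 2) (η / 3) < |lagCov n (u n) (X n) δ a ω - lagCov n (u n) (X n) δ₀ a ω|} ∪
      {ω | ε₁ ≤ dist (δhat n ω) δ₀}) ∪
      {ω | ¬ ∑ t ∈ Finset.Icc 1 n, Real.log (f n t δ₀ (X n t ω))
      ≤ ∑ t ∈ Finset.Icc 1 n, Real.log (f n t (δhat n ω) (X n t ω))}) (fun ω hω => ?_) (measure_ne_top _ _)).trans
    ((measureReal_union_le _ _).trans (add_le_add_left (measureReal_union_le _ _) _))) ?_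
  · rw [Set.mem_ofPred_eq, sub_zero, Real.norm_eq_abs] at hω
    by_cases hd : ε₁ ≤ dist (δhat n ω) δ₀
    · exact Or.inl (Or.inr hd)
    by_cases hl : ∑ t ∈ Finset.Icc 1 n, Real.log (f n t δ₀ (X n t ω))
      ≤ ∑ t ∈ Finset.Icc 1 n, Real.log (f n t (δhat n ω) (X n t ω))
    · refine Or.inl (Or.inl ⟨δhat n ω, (not_le.1 hd).le, hl, ?_⟩)
      exact lt_of_lt_of_le (lt_of_le_of_lt (min_le_left _ _) (half_lt_self hε)) hω
    · exact Or.inr hl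
  · have := min_le_right (ε / 2) (η / 3)
    linarith

/-- The studentised sum of squared residual autocovariances at a consistent estimator of at least
the true likelihood is asymptotically chi-squared. The factors `τ²` cancel as soon as the estimate
of `τ` is positive. -/
theorem tendsto_scoreStatistic (hR : 0 < R) (hR1 : R ≤ 1) (hτ : 0 < δ₀.2)
    (hN : ∀ n, NullModel μ (Metric.closedBall δ₀ R) δ₀ K c M n m (f n) (u n) (X n))
    (hfmeas : ∀ n t y, y ≤ m t → Measurable fun δ => f n t δ y)
    (humeas : ∀ n t y, y ≤ m t → Measurable fun δ => u n t δ y)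
    (hδ : ∀ n, Measurable (δhat n))
    (hmax : ∀ n, ∀ᵐ ω ∂μ, ∑ t ∈ Finset.Icc 1 n, Real.log (f n t δ₀ (X n t ω))
      ≤ ∑ t ∈ Finset.Icc 1 n, Real.log (f n t (δhat n ω) (X n t ω)))
    (hcons : ∀ᵐ ω ∂μ, Tendsto (fun n => δhat n ω) atTop (𝓝 δ₀)) (L : ℕ)
    (φ : BoundedContinuousFunction ℝ ℝ) :
    Tendsto (fun n => ∫ ω, φ (∑ a : Fin L,
        ((δhat n ω).2 ^ 2 * lagCov n (u n) (X n) (δhat n ω) (a + 1) ω ^ 2)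
          / ((δhat n ω).2 ^ 2 * lagVar n m (f n) (u n) (δhat n ω) (a + 1))) ∂μ) atTop
      (𝓝 (∫ z : Fin L → ℝ, φ (∑ a, z a ^ 2) ∂(Measure.pi fun _ : Fin L => gaussianReal 0 1))) := by
  have hK := (hN 0).K_pos
  have hc := (hN 0).c_pos
  set V : ℕ → Fin L → ℝ := fun n a => lagVar n m (f n) (u n) δ₀ (a + 1) with hV
  set D : ℕ → Ω → Fin L → ℝ := fun n ω a => (lagCov n (u n) (X n) (δhat n ω) (a + 1) ω
      - lagCov n (u n) (X n) δ₀ (a + 1) ω) / √(V n a) with hD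
  set W : ℕ → Ω → Fin L → ℝ := fun n ω a => ((δhat n ω).2 ^ 2 * V n a)
    / ((δhat n ω).2 ^ 2 * lagVar n m (f n) (u n) (δhat n ω) (a + 1)) with hW
  have hVlow : ∀ n, 1 ≤ n → 2 * L ≤ n → ∀ a, c ^ 2 / 2 ≤ V n a := fun n hn hnL a =>
    (hN n).lagVar_lower (by omega) hn (hN n).mem
  have hDmeas : ∀ n a, Measurable fun ω => D n ω a := fun n a =>
    ((measurable_lagCov_comp (hN n).meas (hN n).le (humeas n) (hδ n) (a + 1)).sub
      (measurable_lagCov (fun n => (hN n).meas) n (a + 1) δ₀)).div_const _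
  have hWmeas : ∀ n a, Measurable fun ω => W n ω a := fun n a => by
    have h1 : Measurable fun ω => (δhat n ω).2 ^ 2 := (measurable_snd.comp (hδ n)).pow_const 2
    exact (h1.mul_const _).div
      (h1.mul ((measurable_lagVar (hfmeas n) (humeas n) (a + 1)).comp (hδ n)))
  have hconsM : TendstoInMeasure μ δhat atTop fun _ => δ₀ :=
    tendstoInMeasure_of_tendsto_ae (fun n => (hδ n).aestronglyMeasurable) hcons
  have hDlim : TendstoInMeasure μ D atTop fun _ => (0 : Fin L → ℝ) := by
    refine tendstoInMeasure_pi fun a => ?_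
    have h1 := tendstoInMeasure_iff_measureReal_norm.1
      (tendstoInMeasure_lagCov_sub hR hR1 hN hmax hconsM (Nat.le_add_left 1 (a : ℕ)))
    rw [tendstoInMeasure_iff_measureReal_norm]
    intro ε hε
    have hs0 : 0 < √(c ^ 2 / 2) := Real.sqrt_pos.2 (by positivity)
    refine squeeze_zero' (Eventually.of_forall fun _ => measureReal_nonneg) ?_
      (h1 (ε * √(c ^ 2 / 2)) (by positivity))
    filter_upwards [eventually_ge_atTop 1, eventually_ge_atTop (2 * L)] with n hn hnL
    refine measureReal_mono fun ω hω => ?_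
    rw [Set.mem_ofPred_eq, Pi.zero_apply, sub_zero] at hω
    rw [Set.mem_ofPred_eq, sub_zero]
    have hle := Real.sqrt_le_sqrt (hVlow n hn hnL a)
    simp only [hD] at hω
    rw [norm_div, Real.norm_of_nonneg (Real.sqrt_nonneg _), le_div_iff₀ (hs0.trans_le hle)] at hω
    exact (mul_le_mul_of_nonneg_left hle hε.le).trans hω
  have hWlim : TendstoInMeasure μ W atTop fun _ => (1 : Fin L → ℝ) := by
    refine tendstoInMeasure_of_tendsto_ae
      (fun n => (measurable_pi_lambda _ (hWmeas n)).aestronglyMeasurable) ?_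
    filter_upwards [hcons] with ω hω
    refine tendsto_pi_nhds.2 fun a => ?_
    rw [Pi.one_apply, tendsto_iff_norm_sub_tendsto_zero]
    have hdist : Tendsto (fun n => dist δ₀ (δhat n ω)) atTop (𝓝 0) := by
      simpa using (tendsto_const_nhds (x := δ₀)).dist hω
    have hbound : Tendsto (fun n => 2 * ((K ^ 2 + K ^ 2) * ((M + 1) * ((1 + K ^ 2)
        * ((K + 2 * K ^ 2) * dist δ₀ (δhat n ω))))) / (c ^ 2 / 2)) atTop (𝓝 0) := by
      have := (((((hdist.const_mul (K + 2 * K ^ 2)).const_mul (1 + K ^ 2)).const_mul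
        ((M : ℝ) + 1)).const_mul (K ^ 2 + K ^ 2)).const_mul 2).div_const (c ^ 2 / 2)
      simpa using this
    refine squeeze_zero' (Eventually.of_forall fun _ => norm_nonneg _) ?_ hbound
    have hpos : ∀ᶠ n in atTop, 0 < (δhat n ω).2 :=
      ((continuous_snd.tendsto δ₀).comp hω).eventually_const_lt hτ
    filter_upwards [eventually_ge_atTop 1, eventually_ge_atTop (2 * L), hpos,
      hω.eventually (Metric.closedBall_mem_nhds δ₀ hR)] with n hn hnL hτn hball
    have hVh : c ^ 2 / 2 ≤ lagVar n m (f n) (u n) (δhat n ω) (a + 1) :=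
      (hN n).lagVar_lower (by omega) hn hball
    have hc2 : 0 < c ^ 2 / 2 := by positivity
    have hVh0 := hc2.trans_le hVh
    simp only [hW]
    rw [mul_div_mul_left _ _ (by positivity), div_sub_one hVh0.ne', norm_div, Real.norm_eq_abs,
      Real.norm_of_nonneg hVh0.le]
    exact div_le_div₀ (by positivity) ((hN n).lagVar_lip hn (hN n).mem hball (a + 1)) hc2 hVh
  -- Slutsky's theorem for `g (z, D, W) = ∑ (z + D)² W`
  have hg : Continuous fun p : EuclideanSpace ℝ (Fin L) × ((Fin L → ℝ) × (Fin L → ℝ)) =>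
      ∑ a, (p.1 a + p.2.1 a) ^ 2 * p.2.2 a := by fun_prop
  have hS := (tendsto_lagCov_gaussian hN L).continuous_comp_prodMk_of_tendstoInMeasure_const hg
    (tendstoInMeasure_prod hDlim hWlim) (fun n =>
      ((measurable_pi_lambda _ (hDmeas n)).prodMk (measurable_pi_lambda _ (hWmeas n))).aemeasurable)
  have hT := ProbabilityMeasure.tendsto_iff_forall_integral_tendsto.1 hS.tendsto φ
  simp only [ProbabilityMeasure.coe_mk] at hT
  rw [integral_map hS.aemeasurable_limit φ.continuous.aestronglyMeasurable] at hT
  simp only [Pi.zero_apply, Pi.one_apply, add_zero, mul_one] at hT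
  refine hT.congr' ?_
  filter_upwards [eventually_ge_atTop 1, eventually_ge_atTop (2 * L)] with n hn hnL
  rw [integral_map (hS.forall_aemeasurable n) φ.continuous.aestronglyMeasurable]
  refine integral_congr_ae (Eventually.of_forall fun ω => ?_)
  refine congrArg φ (Finset.sum_congr rfl fun a _ => ?_)
  have hV0 : 0 < V n a := lt_of_lt_of_le (by positivity) (hVlow n hn hnL a)
  simp only [hD, hW]
  rw [← add_div, add_sub_cancel, div_pow, Real.sq_sqrt hV0.le, div_mul_div_comm,
    show lagCov n (u n) (X n) (δhat n ω) (a + 1) ω ^ 2 * ((δhat n ω).2 ^ 2 * V n a)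
      = V n a * ((δhat n ω).2 ^ 2 * lagCov n (u n) (X n) (δhat n ω) (a + 1) ω ^ 2) by ring,
    mul_div_mul_left _ _ hV0.ne']

end ScoreStatistic

/-! ### Consistency of the estimator and the limit of the score statistic -/

section Consistency

/-- The argmax theorem: if equicontinuous functions `F n` converge pointwise on a compact set to a
function with a unique maximiser `δ₀`, then points whose values under `F n` are at least `F n δ₀`
converge to `δ₀`. -/
lemma tendsto_of_argmax {P : Type*} [MetricSpace P] {Θ : Set P} (hΘ : IsCompact Θ)
    {F : ℕ → P → ℝ} {G : P → ℝ} {δ₀ : P} (hδ₀ : δ₀ ∈ Θ)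
    (hlim : ∀ δ ∈ Θ, Tendsto (fun n => F n δ) atTop (𝓝 (G δ)))
    (heq : ∀ ε > 0, ∃ η > 0, ∀ n, ∀ δ ∈ Θ, ∀ δ' ∈ Θ, dist δ δ' < η → |F n δ - F n δ'| ≤ ε)
    (huniq : ∀ δ ∈ Θ, δ ≠ δ₀ → G δ < G δ₀) {d : ℕ → P} (hd : ∀ n, d n ∈ Θ)
    (hmax : ∀ n, F n δ₀ ≤ F n (d n)) : Tendsto d atTop (𝓝 δ₀) := by
  refine hΘ.tendsto_nhds_of_unique_mapClusterPt (Eventually.of_forall hd) fun y hy hcl => ?_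
  by_contra hne
  have hlt := huniq y hy hne
  set ε : ℝ := (G δ₀ - G y) / 4 with hε
  have hε0 : 0 < ε := by rw [hε]; linarith
  obtain ⟨η, hη, H⟩ := heq ε hε0
  have hfreq := hcl.frequently (Metric.ball_mem_nhds y hη)
  obtain ⟨n, h1, h2, h3⟩ := (hfreq.and_eventually
    (((hlim δ₀ hδ₀).eventually_const_lt (sub_lt_self _ hε0)).and
      ((hlim y hy).eventually_lt_const (lt_add_of_pos_right _ hε0)))).exists
  have h4 := (abs_le.1 (H n (d n) (hd n) y hy h1)).2
  have h5 := hmax n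
  linarith

lemma isCompact_paramSpace {r : ℕ} (β₀ : Fin r → ℝ) (τ₀ d₁ d₂ : ℝ) :
    IsCompact {δ : (Fin r → ℝ) × ℝ | ‖δ.1 - β₀‖ ≤ d₁ ∧ 0 ≤ δ.2 ∧ |δ.2 - τ₀| ≤ d₂} := by
  refine (isCompact_closedBall ((β₀, τ₀) : (Fin r → ℝ) × ℝ) (max d₁ d₂)).of_isClosed_subset
    ?_ fun δ hδ => ?_
  · have h1 : Continuous fun δ : (Fin r → ℝ) × ℝ => ‖δ.1 - β₀‖ := by fun_prop
    have h2 : Continuous fun δ : (Fin r → ℝ) × ℝ => |δ.2 - τ₀| := by fun_prop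
    exact (isClosed_le h1 continuous_const).inter
      ((isClosed_le continuous_const continuous_snd).inter (isClosed_le h2 continuous_const))
  · rw [Metric.mem_closedBall, Prod.dist_eq, dist_eq_norm, Real.dist_eq]
    exact max_le_max hδ.1 hδ.2.2

lemma measurable_margDens_param {r m y : ℕ} (h : y ≤ m) (x : Fin r → ℝ) :
    Measurable fun δ : (Fin r → ℝ) × ℝ => margDens m y (x ⬝ᵥ δ.1) √δ.2 := by
  have h1 : Continuous fun δ : (Fin r → ℝ) × ℝ => (x ⬝ᵥ δ.1, √δ.2) := by
    unfold dotProduct; fun_prop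
  exact ((continuous_margDens h).comp h1).measurable

end Consistency

/-- Under the null hypothesis that the latent process exists (`τ₀ > 0`) but is
serially independent, the score statistic for serial dependence
`Q̂_ψ(L) = Σ_{a=1}^L S_{ψ_a}(δ̂⁽¹⁾)² / Ω̂_{aa}` is asymptotically `χ²(L)`: it converges in
distribution to the law of `Z₁² + ⋯ + Z_L²` for independent standard normals.  Here the latent
variables `α̃_{n1}, ..., α̃_{nn}` are i.i.d. standard normal, and given them the observations are
conditionally independent with `Y_{nt} | W_{nt} ~ Binomial(m_t, ḃ(W_{nt}))`,
`W_{nt} = x_{nt}ᵀβ₀ + √τ₀ α̃_{nt}`; this joint structure is encoded by the displayed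
product-density formula for the joint law of `(Y_{n1}, ..., Y_{nn}, α̃_{n1}, ..., α̃_{nn})`.
Regressors satisfy Conditions 2(a) and 3, trials satisfy Condition 1, `δ̂⁽¹⁾_n` is a measurable
maximizer over the compact set `Θ` of the marginal log-likelihood `l₁`, and Condition 4 holds. -/
theorem statement1 {Ω : Type*} [MeasurableSpace Ω] (μ : Measure Ω) [IsProbabilityMeasure μ]
    (r : ℕ) (hr : 0 < r)
    -- Condition 2(a): x_{nt} = h(t/n), h piecewise continuous on [0,1]
    (h : ℝ → Fin r → ℝ) (E : Finset ℝ)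
    (hcont : ContinuousOn h (Set.Icc (0 : ℝ) 1 \ (E : Set ℝ)))
    (hbdd : ∃ C : ℝ, ∀ u ∈ Set.Icc (0 : ℝ) 1, ‖h u‖ ≤ C)
    (x : ℕ → ℕ → Fin r → ℝ)
    (hx : ∀ n t, x n t = h ((t : ℝ) / (n : ℝ)))
    -- Condition 3: full rank of the regressor span for large n
    (hrank : ∀ᶠ n in atTop,
      Submodule.span ℝ {v : Fin r → ℝ | ∃ t ∈ Finset.Icc 1 n, v = x n t} = ⊤)
    -- Condition 1: numbers of binomial trials
    (M : ℕ) (hM : 1 ≤ M) (m : ℕ → ℕ) (hm : ∀ t, 1 ≤ m t ∧ m t ≤ M)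
    (κ : ℕ → ℝ) (hκM : 0 < κ M)
    (hfreq : ∀ j ∈ Finset.Icc 1 M, Tendsto
      (fun n => (((Finset.Icc 1 n).filter fun t => m t = j).card : ℝ) / (n : ℝ))
      atTop (𝓝 (κ j)))
    -- true parameters, with a latent process present: τ₀ > 0
    (β₀ : Fin r → ℝ) (τ₀ : ℝ) (hτ₀ : 0 < τ₀)
    -- latent variables and observations
    (A : ℕ → ℕ → Ω → ℝ) (hAmeas : ∀ n t, Measurable (A n t))
    (Y : ℕ → ℕ → Ω → ℕ) (hYmeas : ∀ n t, Measurable (Y n t))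
    -- the model: α̃ i.i.d. N(0,1) and, given α̃, the Y's independent Binomial(m_t, ḃ(W_t))
    (hmodel : ∀ n : ℕ, ∀ k : ℕ → ℕ, (∀ t ∈ Finset.Icc 1 n, k t ≤ m t) →
      ∀ Sset : Set (Fin n → ℝ), MeasurableSet Sset →
        μ {ω | (∀ t ∈ Finset.Icc 1 n, Y n t ω = k t)
            ∧ (fun i : Fin n => A n ((i : ℕ) + 1) ω) ∈ Sset}
          = ∫⁻ α in Sset, ENNReal.ofReal
              (∏ i : Fin n, binDens (m ((i : ℕ) + 1)) (k ((i : ℕ) + 1))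
                (x n ((i : ℕ) + 1) ⬝ᵥ β₀ + Real.sqrt τ₀ * α i))
              ∂(Measure.pi fun _ : Fin n => gaussianReal 0 1))
    -- the marginal density f(y_t; δ) and the residual u_t(δ), δ = (β, τ)
    (fm : ℕ → ℕ → (Fin r → ℝ) × ℝ → ℕ → ℝ)
    (hfm : ∀ n t δ y, fm n t δ y =
      ∫ α : ℝ, binDens (m t) y (x n t ⬝ᵥ δ.1 + Real.sqrt δ.2 * α) * stdNormalPDF α)
    (u : ℕ → ℕ → (Fin r → ℝ) × ℝ → ℕ → ℝ)
    (hu : ∀ n t δ y, u n t δ y = (y : ℝ) - (fm n t δ y)⁻¹ *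
      ∫ α : ℝ, (m t : ℝ) * bdot (x n t ⬝ᵥ δ.1 + Real.sqrt δ.2 * α)
        * binDens (m t) y (x n t ⬝ᵥ δ.1 + Real.sqrt δ.2 * α) * stdNormalPDF α)
    -- the marginal log-likelihood l₁(δ)
    (l1 : ℕ → (Fin r → ℝ) × ℝ → Ω → ℝ)
    (hl1 : ∀ n δ ω, l1 n δ ω = ∑ t ∈ Finset.Icc 1 n, Real.log (fm n t δ (Y n t ω)))
    -- the compact parameter space Θ
    (d₁ d₂ : ℝ) (hd₁ : 0 ≤ d₁) (hd₂ : 0 ≤ d₂)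
    (Θ : Set ((Fin r → ℝ) × ℝ))
    (hΘ : Θ = {δ : (Fin r → ℝ) × ℝ | ‖δ.1 - β₀‖ ≤ d₁ ∧ 0 ≤ δ.2 ∧ |δ.2 - τ₀| ≤ d₂})
    -- the marginal (GLMM) estimator δ̂⁽¹⁾: a measurable maximizer of l₁ over Θ
    (δhat : ℕ → Ω → (Fin r → ℝ) × ℝ)
    (hδhatMeas : ∀ n, Measurable (δhat n))
    (hδhatMem : ∀ n ω, δhat n ω ∈ Θ)
    (hδhatMax : ∀ n ω, ∀ δ ∈ Θ, l1 n δ ω ≤ l1 n (δhat n ω) ω)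
    -- Condition 4: n⁻¹ l₁(δ) → Q(δ) on Θ, with a unique maximum at δ₀ = (β₀, τ₀)
    (Qlim : (Fin r → ℝ) × ℝ → ℝ)
    (hQlim : ∀ᵐ ω ∂μ, ∀ δ ∈ Θ, Tendsto (fun n => l1 n δ ω / (n : ℝ)) atTop (𝓝 (Qlim δ)))
    (hQuniq : ∀ δ ∈ Θ, δ ≠ (β₀, τ₀) → Qlim δ < Qlim (β₀, τ₀))
    -- the lag-a scores S_{ψ_a}(δ), their estimated variances Ω̂_{aa}, and the statistic Q̂_ψ(L)
    (L : ℕ) (hL : 1 ≤ L)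
    (Sψ : ℕ → ℕ → (Fin r → ℝ) × ℝ → Ω → ℝ)
    (hSψ : ∀ n a δ ω, Sψ n a δ ω = δ.2 * ∑ t ∈ Finset.Icc (a + 1) n,
      u n t δ (Y n t ω) * u n (t - a) δ (Y n (t - a) ω))
    (EU2 : ℕ → ℕ → Ω → ℝ)
    (hEU2 : ∀ n t ω, EU2 n t ω = ∑ y ∈ Finset.range (m t + 1),
      fm n t (δhat n ω) y * (u n t (δhat n ω) y) ^ 2)
    (Ωhat : ℕ → ℕ → Ω → ℝ)
    (hΩhat : ∀ n a ω, Ωhat n a ω = ((δhat n ω).2) ^ 2 *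
      ∑ t ∈ Finset.Icc (a + 1) n, EU2 n t ω * EU2 n (t - a) ω)
    (Qψ : ℕ → Ω → ℝ)
    (hQψ : ∀ n ω, Qψ n ω =
      ∑ a ∈ Finset.Icc 1 L, (Sψ n a (δhat n ω) ω) ^ 2 / Ωhat n a ω) :
    -- conclusion: Q̂_ψ(L) converges in distribution to χ²(L),
    -- the law of Z₁² + ⋯ + Z_L² for independent standard normals
    ∀ f : BoundedContinuousFunction ℝ ℝ,
      Tendsto (fun n => ∫ ω, f (Qψ n ω) ∂μ) atTop
        (𝓝 (∫ z : Fin L → ℝ, f (∑ a, (z a) ^ 2)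
          ∂(Measure.pi fun _ : Fin L => gaussianReal 0 1))) := by
  obtain ⟨C, hC⟩ := hbdd
  have hxC : ∀ n, ∀ t ∈ Finset.Icc 1 n, ‖x n t‖ ≤ C := by
    intro n t ht
    rw [Finset.mem_Icc] at ht
    have hn : (0 : ℝ) < n := by exact_mod_cast ht.1.trans ht.2
    rw [hx]
    refine hC _ ⟨by positivity, (div_le_one hn).2 ?_⟩
    exact_mod_cast ht.2
  set δ₀ : (Fin r → ℝ) × ℝ := (β₀, τ₀) with hδ₀
  set F : ℕ → ℕ → (Fin r → ℝ) × ℝ → ℕ → ℝ :=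
    fun n t δ y => margDens (m t) y (x n t ⬝ᵥ δ.1) √δ.2 with hF
  set U : ℕ → ℕ → (Fin r → ℝ) × ℝ → ℕ → ℝ :=
    fun n t δ y => margRes (m t) y (x n t ⬝ᵥ δ.1) √δ.2 with hU
  have hfF : ∀ n t δ y, fm n t δ y = F n t δ y := fun n t δ y => by
    rw [hfm, integral_mul_stdNormalPDF fun α => binDens (m t) y (x n t ⬝ᵥ δ.1 + √δ.2 * α)]
    rfl
  have huU : ∀ n t δ y, y ≤ m t → u n t δ y = U n t δ y := fun n t δ y hy => by
    rw [hu, hfF, integral_mul_stdNormalPDF fun α => (m t : ℝ) * bdot (x n t ⬝ᵥ δ.1 + √δ.2 * α)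
      * binDens (m t) y (x n t ⬝ᵥ δ.1 + √δ.2 * α), integral_bdot_mul hy]
    simp only [hF, hU, margRes]
    ring
  obtain ⟨R, K, c, hR, hR1, hK, hc, hreg⟩ := exists_regModel r M C β₀ hτ₀
  -- an almost surely equal version of the observations, independent and bounded everywhere
  have hX : ∀ n, ∃ X : ℕ → Ω → ℕ, (∀ t, Measurable (X t)) ∧ iIndepFun X μ ∧
      (∀ t ω, X t ω ≤ m t) ∧ (∀ᵐ ω ∂μ, ∀ t ∈ Finset.Icc 1 n, X t ω = Y n t ω) ∧
      ∀ t ∈ Finset.Icc 1 n, ∀ φ : ℕ → ℝ,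
        ∫ ω, φ (X t ω) ∂μ = ∑ y ∈ range (m t + 1), F n t δ₀ y * φ y := fun n =>
    exists_indep n m (Y n) (hYmeas n) (fun t y => F n t δ₀ y)
      (fun t y hy => (margDens_pos hy _ _).le) (fun t => sum_margDens _ _ _) fun k hk => by
        have h1 := hmodel n k hk Set.univ MeasurableSet.univ
        rw [lintegral_prod_binDens n m k hk (fun t => x n t ⬝ᵥ β₀) √τ₀] at h1
        simpa using h1
  choose X hXm hXi hXle hXY hXlaw using hX
  have hN : ∀ n, NullModel μ (Metric.closedBall δ₀ R) δ₀ K c M n m (F n) (U n) (X n) := fun n =>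
    { meas := hXm n
      indep := hXi n
      le := hXle n
      m_le := fun t => (hm t).2
      mem := Metric.mem_closedBall_self hR.le
      K_pos := hK
      c_pos := hc
      reg := fun t ht => hreg (m t) (hm t).1 (hm t).2 (x n t) (hxC n t ht)
      law := hXlaw n }
  have hδ₀Θ : δ₀ ∈ Θ := by
    rw [hΘ]; exact ⟨by simpa [hδ₀] using hd₁, hτ₀.le, by simpa [hδ₀] using hd₂⟩
  have hXYall : ∀ᵐ ω ∂μ, ∀ n, ∀ t ∈ Finset.Icc 1 n, X n t ω = Y n t ω := ae_all_iff.2 hXY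
  have hl1X : ∀ ω, (∀ n, ∀ t ∈ Finset.Icc 1 n, X n t ω = Y n t ω) → ∀ n δ,
      l1 n δ ω = ∑ t ∈ Finset.Icc 1 n, Real.log (F n t δ (X n t ω)) := fun ω hω n δ => by
    rw [hl1]
    exact Finset.sum_congr rfl fun t ht => by rw [hfF, hω n t ht]
  have hmax : ∀ n, ∀ᵐ ω ∂μ, ∑ t ∈ Finset.Icc 1 n, Real.log (F n t δ₀ (X n t ω))
      ≤ ∑ t ∈ Finset.Icc 1 n, Real.log (F n t (δhat n ω) (X n t ω)) := fun n => by
    filter_upwards [hXYall] with ω hω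
    rw [← hl1X ω hω, ← hl1X ω hω]
    exact hδhatMax n ω δ₀ hδ₀Θ
  have hcons : ∀ᵐ ω ∂μ, Tendsto (fun n => δhat n ω) atTop (𝓝 δ₀) := by
    filter_upwards [hXYall, hQlim] with ω hω hQ
    refine tendsto_of_argmax (Θ := Θ) (hΘ ▸ isCompact_paramSpace β₀ τ₀ d₁ d₂) hδ₀Θ hQ ?_ hQuniq
      (fun n => hδhatMem n ω) fun n =>
        div_le_div_of_nonneg_right (hδhatMax n ω δ₀ hδ₀Θ) (Nat.cast_nonneg n)
    intro ε hε
    obtain ⟨η, hη, H⟩ := log_margDens_equicont r M C (‖β₀‖ + d₁ + (τ₀ + d₂)) hε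
    refine ⟨η, hη, fun n δ hδ δ' hδ' hdist => ?_⟩
    have hbd : ∀ δ ∈ Θ, ‖δ.1‖ ≤ ‖β₀‖ + d₁ + (τ₀ + d₂) ∧ 0 ≤ δ.2 ∧
        δ.2 ≤ ‖β₀‖ + d₁ + (τ₀ + d₂) := by
      intro δ hδ
      rw [hΘ] at hδ
      obtain ⟨e1, e2, e3⟩ := hδ
      have e4 := norm_le_norm_add_norm_sub β₀ δ.1
      have e5 := (abs_le.1 e3).2
      rw [norm_sub_rev] at e4
      have e6 := norm_nonneg β₀
      refine ⟨by linarith, e2, by linarith⟩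
    rw [hl1X ω hω, hl1X ω hω, ← sub_div, ← Finset.sum_sub_distrib, abs_div, Nat.abs_cast]
    refine div_le_of_le_mul₀ (Nat.cast_nonneg n) hε.le ?_
    refine (Finset.abs_sum_le_sum_abs _ _).trans ((Finset.sum_le_sum fun t ht =>
      H (m t) (X n t ω) (hXle n t ω) (hm t).2 (x n t) (hxC n t ht) δ δ' (hbd δ hδ).1 (hbd δ' hδ').1
        (hbd δ hδ).2.1 (hbd δ hδ).2.2 (hbd δ' hδ').2.1 (hbd δ' hδ').2.2 hdist).trans ?_)
    rw [Finset.sum_const, Nat.card_Icc, nsmul_eq_mul, Nat.add_sub_cancel, mul_comm]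
  have hFmeas : ∀ n t y, y ≤ m t → Measurable fun δ => F n t δ y := fun n t y hy =>
    measurable_margDens_param hy _
  have hUmeas : ∀ n t y, y ≤ m t → Measurable fun δ => U n t δ y := fun n t y hy => by
    simp only [hU, margRes]
    exact (((measurable_margDens_param (Nat.succ_le_succ hy) _).div
      (measurable_margDens_param hy _)).const_mul _).const_sub _
  intro φ
  refine (tendsto_scoreStatistic hR hR1 hτ₀ hN hFmeas hUmeas hδhatMeas hmax hcons L φ).congr' ?_
  filter_upwards [eventually_ge_atTop 1] with n hn
  refine integral_congr_ae ?_
  filter_upwards [hXYall] with ω hω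
  refine congrArg φ ?_
  have hn' : (0 : ℝ) < n := by exact_mod_cast hn
  rw [hQψ, ← Finset.Ico_add_one_right_eq_Icc, Finset.sum_Ico_eq_sum_range, Nat.add_sub_cancel,
    ← Fin.sum_univ_eq_sum_range
      (fun a => (Sψ n (1 + a) (δhat n ω) ω) ^ 2 / Ωhat n (1 + a) ω)]
  refine Finset.sum_congr rfl fun a _ => ?_
  rw [add_comm 1 (a : ℕ)]
  set b : ℕ := a + 1 with hb
  have hS : Sψ n b (δhat n ω) ω
      = (δhat n ω).2 * (√(n : ℝ) * lagCov n (U n) (X n) (δhat n ω) b ω) := by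
    rw [hSψ, lagCov, mul_inv_cancel_left₀ (Real.sqrt_pos.2 hn').ne']
    refine congrArg _ (Eq.trans (Finset.sum_congr rfl fun t ht => ?_)
      (sum_lag_eq n b (fun t => U n t (δhat n ω) (X n t ω)) fun t => U n t (δhat n ω) (X n t ω)))
    rw [Finset.mem_Icc] at ht
    rw [← hω n t (by rw [Finset.mem_Icc]; omega), ← hω n (t - b) (by rw [Finset.mem_Icc]; omega),
      huU _ _ _ _ (hXle n _ ω), huU _ _ _ _ (hXle n _ ω)]
  have hE : ∀ t, EU2 n t ω
      = ∑ y ∈ range (m t + 1), F n t (δhat n ω) y * U n t (δhat n ω) y ^ 2 := fun t => by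
    rw [hEU2]
    refine Finset.sum_congr rfl fun y hy => ?_
    rw [hfF, huU _ _ _ _ (Nat.lt_succ_iff.1 (Finset.mem_range.1 hy))]
  have hO : Ωhat n b ω
      = (δhat n ω).2 ^ 2 * (n * lagVar n m (F n) (U n) (δhat n ω) b) := by
    rw [hΩhat, lagVar, mul_inv_cancel_left₀ hn'.ne',
      sum_lag_eq n b (fun t => EU2 n t ω) fun t => EU2 n t ω]
    simp only [hE]
    rfl
  rw [hS, hO, mul_pow, mul_pow, Real.sq_sqrt hn'.le, mul_left_comm, mul_left_comm _ (n : ℝ),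
    mul_div_mul_left _ _ hn'.ne']

end
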